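/- Let A ⊂ ℝ³ be a fixed bounded open set and let Ω_n ⊂ ℝ³ be Borel sets of finite perimeter with Ω_n ⊂ ℓ_n A, |Ω_n| → m > 0, and I[Ω_n] ≤ μ*|Ω_n| + C/ℓ_n for some sequence ℓ_n → ∞ and constant C. Then, along a subsequence, the decomposition theorem for minimizing sequences applies with K droplets of masses m_*^{(j)} and centers a_n^{(j)}, the rescaled centers converge, ℓ_n⁻¹ a_n^{(j)} → y^{(j)}, to K pairwise distinct points y^{(1)},…,y^{(K)} in the closure of A; and if K ≥ 2, then I[Ω_n] ≥ μ*|Ω_n| + ℓ_n⁻¹ Σ_{1≤j<k≤K} m_*^{(j)} m_*^{(k)}/|y^{(j)} − y^{(k)}| + o(1/ℓ_n). -/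

import Mathlib

open MeasureTheory Metric Set Filter Bornology
open scoped Topology ENNReal NNReal Pointwise

noncomputable section

/-- Three-dimensional Euclidean space. -/
abbrev E3 : Type := EuclideanSpace ℝ (Fin 3)

/-- The divergence of a vector field on `E3`, defined as the trace of its derivative. -/
def divg (φ : E3 → E3) (x : E3) : ℝ :=
  LinearMap.trace ℝ E3 (fderiv ℝ φ x : E3 →ₗ[ℝ] E3)

/-- The candidate values `∫_Ω div φ` over `C¹` compactly supported vector fields bounded by one. -/
def perCand (Ω : Set E3) : Set ℝ :=
  {a : ℝ | ∃ φ : E3 → E3, ContDiff ℝ 1 φ ∧ HasCompactSupport φ ∧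
      (∀ x, ‖φ x‖ ≤ 1) ∧ a = ∫ x in Ω, divg φ x}

/-- The perimeter of a set, in the sense of geometric measure theory. -/
def per (Ω : Set E3) : ℝ := sSup (perCand Ω)

/-- A set has finite perimeter if the family of integrals defining the perimeter is
bounded above. -/
def HasFinPer (Ω : Set E3) : Prop := BddAbove (perCand Ω)

/-- The Lebesgue volume of a set as a real number. -/
def vol (Ω : Set E3) : ℝ := (volume Ω).toReal

/-- The liquid drop energy `𝓔_Λ[ρ,Ω]`. -/
def ldEnergy (Λ : Set E3) (ρ : ℝ) (Ω : Set E3) : ℝ :=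
  per Ω + (1/2) * ∫ x, ∫ y,
    (Set.indicator Ω (fun _ => (1:ℝ)) x - ρ * Set.indicator Λ (fun _ => (1:ℝ)) x) *
      (Set.indicator Ω (fun _ => (1:ℝ)) y - ρ * Set.indicator Λ (fun _ => (1:ℝ)) y) / ‖x - y‖

/-- The neutral ground state energy `E_Λ(ρ)`. -/
def EE (Λ : Set E3) (ρ : ℝ) : ℝ :=
  sInf {t : ℝ | ∃ Ω : Set E3, MeasurableSet Ω ∧ Ω ⊆ Λ ∧ HasFinPer Ω ∧
    vol Ω = ρ * vol Λ ∧ t = ldEnergy Λ ρ Ω}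

/-- The liquid drop energy `I[Ω]` of an isolated droplet (no background). -/
def II (Ω : Set E3) : ℝ :=
  per Ω + (1/2) * ∫ x in Ω, ∫ y in Ω, 1 / ‖x - y‖

/-- `μ* = inf I[Ω]/|Ω|`. -/
def muStar : ℝ :=
  sInf {t : ℝ | ∃ Ω : Set E3, MeasurableSet Ω ∧ HasFinPer Ω ∧
    0 < volume Ω ∧ volume Ω < ⊤ ∧ t = II Ω / vol Ω}

/-- A minimizer for the isolated liquid drop problem. -/
def IsMinimizer (Ω : Set E3) : Prop :=
  MeasurableSet Ω ∧ HasFinPer Ω ∧ 0 < volume Ω ∧ volume Ω < ⊤ ∧ II Ω = muStar * vol Ω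

/-- The set of masses of minimizers. -/
def minimizerMasses : Set ℝ := {m : ℝ | ∃ Ω : Set E3, IsMinimizer Ω ∧ m = vol Ω}

/-- The largest mass of a minimizer. -/
def mStar : ℝ := sSup minimizerMasses

/-- The smallest mass of a minimizer. -/
def mStarStar : ℝ := sInf minimizerMasses

/-- `Λ` is an `(r,L)`-Lipschitz open set: near each boundary point it is, in a suitable
orthonormal coordinate system, the epigraph of an `L`-Lipschitz function. -/
def IsLipschitzDomain (r L : ℝ) (Λ : Set E3) : Prop :=
  ∀ x ∈ frontier Λ, ∃ (g : E3 ≃ᵢ E3) (f : ℝ × ℝ → ℝ),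
    LipschitzWith L.toNNReal f ∧
    Λ ∩ ball x r = {y ∈ ball x r | f (g y 0, g y 1) < g y 2}

/-- Fisher regularity of the boundary. -/
def FisherCond (C ℓ : ℝ) (Λ : Set E3) : Prop :=
  ∀ h : ℝ, 0 < h → h ≤ ℓ → (volume (frontier Λ + ball (0:E3) h)).toReal ≤ C * ℓ^2 * h

/-- An admissible sequence of domains for the thermodynamic limit. -/
def IsAdmissibleSeq (r L C : ℝ) (Λs : ℕ → Set E3) (ℓ : ℕ → ℝ) : Prop :=
  Tendsto ℓ atTop atTop ∧
  ∀ n : ℕ, IsOpen (Λs n) ∧ IsBounded (Λs n) ∧ IsLipschitzDomain r L (Λs n) ∧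
    ball 0 (ℓ n / C) ⊆ Λs n ∧ Λs n ⊆ ball 0 (ℓ n) ∧ FisherCond C (ℓ n) (Λs n)

/-- `e` is the thermodynamic limit function of the liquid drop model. -/
def IsThermoLimit (e : ℝ → ℝ) : Prop :=
  ∀ ρ : ℝ, 0 ≤ ρ → ρ ≤ 1 →
    ∀ (r L C : ℝ) (Λs : ℕ → Set E3) (ℓ : ℕ → ℝ), 0 < r → 0 < L → 0 < C →
      IsAdmissibleSeq r L C Λs ℓ →
      Tendsto (fun n => EE (Λs n) ρ / vol (Λs n)) atTop (𝓝 (e ρ))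

/-- The domain for the `N`-particle Jellium problem: `N^{1/3} Λ₁` with `Λ₁` the ball of
unit volume centered at the origin. -/
def jelDomain (N : ℕ) : Set E3 :=
  ball (0:E3) ((N : ℝ) ^ ((1:ℝ)/3) * (3 / (4 * Real.pi)) ^ ((1:ℝ)/3))

/-- The `N`-particle Jellium ground state energy. -/
def jelN (N : ℕ) : ℝ :=
  sInf {t : ℝ | ∃ x : Fin N → E3, (∀ j, x j ∈ jelDomain N) ∧
    t = (∑ j : Fin N, ∑ k : Fin N, if j < k then 1 / ‖x j - x k‖ else 0)
      - (∑ j : Fin N, ∫ y in jelDomain N, 1 / ‖x j - y‖)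
      + (1/2) * ∫ x' in jelDomain N, ∫ y in jelDomain N, 1 / ‖x' - y‖}

/-- `eJ` is the Jellium energy per particle in the thermodynamic limit. -/
def IsJelliumLimit (eJ : ℝ) : Prop :=
  Tendsto (fun N : ℕ => jelN N / (N : ℝ)) atTop (𝓝 eJ)

/-- The grand-canonical liquid drop energy `F_Λ(ρ)`. -/
def FF (Λ : Set E3) (ρ : ℝ) : ℝ :=
  sInf {t : ℝ | ∃ Ω : Set E3, MeasurableSet Ω ∧ Ω ⊆ Λ ∧ HasFinPer Ω ∧
    t = ldEnergy Λ ρ Ω - muStar * vol Ω}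

/-- A tetrahedron: the interior of the convex hull of four affinely independent points. -/
def IsTetra (Δ : Set E3) : Prop :=
  ∃ v : Fin 4 → E3, AffineIndependent ℝ v ∧ Δ = interior (convexHull ℝ (Set.range v))

/-- The open cube `(-L/2, L/2)³`. -/
def cubeL (Lside : ℝ) : Set E3 := {x : E3 | ∀ i, |x i| < Lside / 2}

/-- The grand-canonical Jellium energy of point particles of charge `m` in the domain `S`
with a uniform background of density one. -/
def pointJellium (m : ℝ) (S : Set E3) : ℝ :=
  sInf {t : ℝ | ∃ (n : ℕ) (x : Fin n → E3), (∀ j, x j ∈ S) ∧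
    t = (∑ j : Fin n, ∑ k : Fin n, if j < k then m^2 / ‖x j - x k‖ else 0)
      - m * (∑ j : Fin n, ∫ y in S, 1 / ‖x j - y‖)
      + (1/2) * ∫ x' in S, ∫ y in S, 1 / ‖x' - y‖}

/-- The conclusions of the decomposition theorem for minimizing sequences. -/
def IsDecomp (Ω : ℕ → Set E3) (m : ℝ) (K : ℕ) (Ωs : Fin K → Set E3)
    (a : ℕ → Fin K → E3) (R : ℝ) (φ : ℕ → ℕ) : Prop :=
  StrictMono φ ∧ 0 < R ∧
  (∀ j k : Fin K, j ≠ k → Tendsto (fun n => ‖a n j - a n k‖) atTop atTop) ∧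
  (∀ j, IsMinimizer (Ωs j)) ∧
  (∀ j, mStarStar ≤ vol (Ωs j) ∧ vol (Ωs j) ≤ mStar) ∧
  (∀ j, Tendsto
    (fun n => volume (symmDiff ({x : E3 | x + a n j ∈ Ω (φ n)} ∩ ball (0:E3) R) (Ωs j)))
    atTop (𝓝 0)) ∧
  Tendsto (fun n => volume (Ω (φ n) \ ⋃ j, ball (a n j) R)) atTop (𝓝 0) ∧
  Tendsto (fun n => per (Ω (φ n) \ ⋃ j, ball (a n j) R)) atTop (𝓝 0) ∧
  m = ∑ j, vol (Ωs j) ∧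
  (2 ≤ K → ∃ ε : ℕ → ℝ, Tendsto ε atTop (𝓝 0) ∧ ∀ n : ℕ,
    muStar * vol (Ω (φ n)) +
      (∑ j : Fin K, ∑ k : Fin K,
        if j < k then (vol (Ωs j) * vol (Ωs k) + ε n) / ‖a n j - a n k‖ else 0)
      ≤ II (Ω (φ n)))

instance : MeasurableSpace (Matrix (Fin 3) (Fin 3) ℝ) :=
  (inferInstance : MeasurableSpace (Fin 3 → Fin 3 → ℝ))

/-- The rotation group SO(3), as a set of matrices. -/
def SO3 : Set (Matrix (Fin 3) (Fin 3) ℝ) := {R | R * R.transpose = 1 ∧ R.det = 1}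

/-- The action of a matrix on Euclidean space. -/
def rot (R : Matrix (Fin 3) (Fin 3) ℝ) (x : E3) : E3 :=
  (EuclideanSpace.equiv (Fin 3) ℝ).symm (R.mulVec (EuclideanSpace.equiv (Fin 3) ℝ x))

/-- The image of a set under the rigid motion `x ↦ Rx + τ`. -/
def rigidImage (R : Matrix (Fin 3) (Fin 3) ℝ) (τ : E3) (S : Set E3) : Set E3 :=
  (fun x => rot R x + τ) '' S

/-- `μ` is the normalized Haar measure of SO(3): a probability measure concentrated on SO(3)
which is invariant under left multiplication by rotations. -/
def IsHaarSO3 (μ : Measure (Matrix (Fin 3) (Fin 3) ℝ)) : Prop :=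
  IsProbabilityMeasure μ ∧ μ SO3ᶜ = 0 ∧ ∀ S ∈ SO3, Measure.map (fun R => S * R) μ = μ

/-- The cube of the tiling of side length `ε` indexed by `z ∈ ℤ³`. -/
def cubeZ (ε : ℝ) (z : Fin 3 → ℤ) : Set E3 := {x : E3 | ∀ i, |x i - ε * (z i : ℝ)| < ε / 2}

/-- The distance between two sets. -/
def setDist (s t : Set E3) : ℝ := sInf {d : ℝ | ∃ p ∈ s, ∃ q ∈ t, d = dist p q}

/-- The outer cubic boundary layer of `Λ` at scale `ε`. -/
def outerLayer (Λ : Set E3) (ε : ℝ) : Set E3 :=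
  ⋃ z ∈ {z : Fin 3 → ℤ | setDist (cubeZ ε z) (frontier Λ) ≤ ε}, closure (cubeZ ε z \ Λ)

/-- Admissible test fields. -/
def IsTest (φ : E3 → E3) : Prop :=
  ContDiff ℝ 1 φ ∧ HasCompactSupport φ ∧ ∀ x, ‖φ x‖ ≤ 1

/-- Measurable sets of finite perimeter and volume. -/
def Good (Ω : Set E3) : Prop := MeasurableSet Ω ∧ HasFinPer Ω ∧ volume Ω < ⊤

lemma le_per {Ω : Set E3} (h : HasFinPer Ω) {φ : E3 → E3} (hφ : IsTest φ) :
    ∫ x in Ω, divg φ x ≤ per Ω :=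
  le_csSup h ⟨φ, hφ.1, hφ.2.1, hφ.2.2, rfl⟩

lemma isTest_zero : IsTest (fun _ => 0) :=
  ⟨contDiff_const, HasCompactSupport.zero, by simp⟩

lemma divg_zero (x : E3) : divg (fun _ => 0) x = 0 := by
  simp [divg]

lemma per_nonneg {Ω : Set E3} : 0 ≤ per Ω := by
  by_cases h : HasFinPer Ω
  · have := le_per h isTest_zero
    simpa [divg_zero] using this
  · unfold per
    rw [Real.sSup_of_not_bddAbove h]

lemma per_le {Ω : Set E3} {b : ℝ} (h : ∀ φ, IsTest φ → ∫ x in Ω, divg φ x ≤ b) :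
    HasFinPer Ω ∧ per Ω ≤ b := by
  have hb : b ∈ upperBounds (perCand Ω) := by
    rintro a ⟨φ, h1, h2, h3, rfl⟩
    exact h φ ⟨h1, h2, h3⟩
  refine ⟨⟨b, hb⟩, csSup_le ⟨0, ?_⟩ hb⟩
  exact ⟨_, isTest_zero.1, isTest_zero.2.1, isTest_zero.2.2, by simp [divg_zero]⟩

lemma divg_smul {η : E3 → ℝ} {φ : E3 → E3} {x : E3} (hη : DifferentiableAt ℝ η x)
    (hφ : DifferentiableAt ℝ φ x) :
    divg (fun x => η x • φ x) x = η x * divg φ x + fderiv ℝ η x (φ x) := by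
  unfold divg
  rw [fderiv_fun_smul hη hφ]
  have : (((η x • fderiv ℝ φ x + (fderiv ℝ η x).smulRight (φ x) : E3 →L[ℝ] E3)) : E3 →ₗ[ℝ] E3)
      = η x • (fderiv ℝ φ x : E3 →ₗ[ℝ] E3) +
        ((fderiv ℝ η x : E3 →ₗ[ℝ] ℝ).smulRight (φ x)) := rfl
  rw [this, map_add, map_smul, LinearMap.trace_smulRight]
  rfl

lemma divg_add {φ ψ : E3 → E3} {x : E3} (hφ : DifferentiableAt ℝ φ x)
    (hψ : DifferentiableAt ℝ ψ x) :
    divg (fun x => φ x + ψ x) x = divg φ x + divg ψ x := by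
  unfold divg
  rw [fderiv_fun_add hφ hψ, ← map_add]
  rfl

lemma divg_continuous {φ : E3 → E3} (h : ContDiff ℝ 1 φ) : Continuous (divg φ) := by
  have h1 : Continuous (fun x => fderiv ℝ φ x) := h.continuous_fderiv (by norm_num)
  let T : (E3 →L[ℝ] E3) →ₗ[ℝ] ℝ :=
    (LinearMap.trace ℝ E3).comp (ContinuousLinearMap.coeLM ℝ)
  have hT : Continuous T := LinearMap.continuous_of_finiteDimensional T
  exact hT.comp h1

lemma divg_compact {φ : E3 → E3} (h : HasCompactSupport φ) : HasCompactSupport (divg φ) := by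
  have h1 : HasCompactSupport (fderiv ℝ φ) := h.fderiv ℝ
  refine h1.comp_left (g := fun A : E3 →L[ℝ] E3 => LinearMap.trace ℝ E3 (A : E3 →ₗ[ℝ] E3)) ?_
  simp

lemma divg_bdd {φ : E3 → E3} (h : IsTest φ) : ∃ C, 0 ≤ C ∧ ∀ x, |divg φ x| ≤ C := by
  obtain ⟨C, hC⟩ := (divg_continuous h.1).bounded_above_of_compact_support (divg_compact h.2.1)
  exact ⟨C, (norm_nonneg _).trans (hC 0), hC⟩

lemma divg_integrable {φ : E3 → E3} (h : IsTest φ) : Integrable (divg φ) :=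
  (divg_continuous h.1).integrable_of_hasCompactSupport (divg_compact h.2.1)

/-- Smooth cut of a set. -/
lemma cut_core {Ω : Set E3} (hΩ : Good Ω) {η : E3 → ℝ} (hη : ContDiff ℝ 1 η)
    (h0 : ∀ x, 0 ≤ η x) (h1 : ∀ x, η x ≤ 1) {S : Set E3} (hS : MeasurableSet S) {L : ℝ}
    (hL : 0 ≤ L) (hD : ∀ x, ‖fderiv ℝ η x‖ ≤ S.indicator (fun _ => L) x)
    {φ ψ : E3 → E3} (hφ : IsTest φ) (hψ : IsTest ψ) :
    ∫ x in Ω, (η x * divg φ x + (1 - η x) * divg ψ x) ≤ per Ω + 2 * (L * vol (Ω ∩ S)) := by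
  set F : E3 → E3 := fun x => η x • φ x + (1 - η x) • ψ x with hF
  have hη' : ContDiff ℝ 1 (fun x => 1 - η x) := contDiff_const.sub hη
  have hFt : IsTest F := by
    refine ⟨(hη.smul hφ.1).add (hη'.smul hψ.1), ?_, ?_⟩
    · exact (hφ.2.1.smul_left (f := η)).add (hψ.2.1.smul_left (f := fun x => 1 - η x))
    · intro x
      calc ‖F x‖ ≤ ‖η x • φ x‖ + ‖(1 - η x) • ψ x‖ := norm_add_le _ _
        _ = η x * ‖φ x‖ + (1 - η x) * ‖ψ x‖ := by
          rw [norm_smul, norm_smul, Real.norm_of_nonneg (h0 x),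
            Real.norm_of_nonneg (sub_nonneg.2 (h1 x))]
        _ ≤ η x * 1 + (1 - η x) * 1 := by
          have := hφ.2.2 x
          have := hψ.2.2 x
          have := h0 x
          have := h1 x
          gcongr
        _ = 1 := by ring
  have hdφ : Differentiable ℝ φ := hφ.1.differentiable (by norm_num)
  have hdψ : Differentiable ℝ ψ := hψ.1.differentiable (by norm_num)
  have hdη : Differentiable ℝ η := hη.differentiable (by norm_num)
  have hdη' : Differentiable ℝ (fun x => 1 - η x) := hη'.differentiable (by norm_num)
  have hdiv : ∀ x, η x * divg φ x + (1 - η x) * divg ψ x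
      = divg F x - fderiv ℝ η x (φ x - ψ x) := by
    intro x
    have e1 := divg_add ((hdη x).smul (hdφ x)) ((hdη' x).smul (hdψ x))
    have e2 : fderiv ℝ (fun x => 1 - η x) x = - fderiv ℝ η x := by
      rw [fderiv_const_sub]
    have e3 := divg_smul (hdη x) (hdφ x)
    have e4 := divg_smul (hdη' x) (hdψ x)
    rw [e2] at e4
    have : divg F x = divg (fun x => η x • φ x) x + divg (fun x => (1 - η x) • ψ x) x := e1
    rw [this, e3, e4]
    simp only [map_sub, neg_apply]
    ring
  have hbd : ∀ x, - fderiv ℝ η x (φ x - ψ x) ≤ S.indicator (fun _ => 2 * L) x := by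
    intro x
    have h2 : ‖φ x - ψ x‖ ≤ 2 := by
      have := norm_sub_le (φ x) (ψ x)
      have := hφ.2.2 x
      have := hψ.2.2 x
      linarith
    have h3 := (fderiv ℝ η x).le_opNorm (φ x - ψ x)
    have h4 : - fderiv ℝ η x (φ x - ψ x) ≤ ‖fderiv ℝ η x (φ x - ψ x)‖ := by
      rw [Real.norm_eq_abs]; exact neg_le_abs _
    have h5 := hD x
    by_cases hx : x ∈ S
    · simp only [indicator_of_mem hx] at h5 ⊢
      have : ‖fderiv ℝ η x‖ * ‖φ x - ψ x‖ ≤ L * 2 := by gcongr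
      linarith
    · simp only [indicator_of_notMem hx] at h5 ⊢
      have : ‖fderiv ℝ η x‖ = 0 := le_antisymm h5 (norm_nonneg _)
      rw [this] at h3
      linarith
  have hInteg : Integrable (fun x => S.indicator (fun _ => 2 * L) x) (volume.restrict Ω) := by
    have : IsFiniteMeasure (volume.restrict Ω) := ⟨by simpa using hΩ.2.2⟩
    exact (integrable_const _).indicator hS
  calc ∫ x in Ω, (η x * divg φ x + (1 - η x) * divg ψ x)
      ≤ ∫ x in Ω, (divg F x + S.indicator (fun _ => 2 * L) x) := by
        apply integral_mono
        · apply Integrable.integrableOn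
          have c1 : Continuous (fun x => η x * divg φ x + (1 - η x) * divg ψ x) :=
            (hη.continuous.mul (divg_continuous hφ.1)).add
              (hη'.continuous.mul (divg_continuous hψ.1))
          exact c1.integrable_of_hasCompactSupport
            (((divg_compact hφ.2.1).mul_left).add ((divg_compact hψ.2.1).mul_left))
        · exact (divg_integrable hFt).integrableOn.add hInteg
        · intro x
          show η x * divg φ x + (1 - η x) * divg ψ x ≤ _
          rw [hdiv]
          have := hbd x
          linarith
    _ = (∫ x in Ω, divg F x) + ∫ x in Ω, S.indicator (fun _ => 2 * L) x :=
        integral_add (divg_integrable hFt).integrableOn hInteg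
    _ ≤ per Ω + 2 * (L * vol (Ω ∩ S)) := by
        have := le_per hΩ.2.1 hFt
        rw [integral_indicator hS, Measure.restrict_restrict hS, setIntegral_const, Measure.real,
          inter_comm]
        simp only [smul_eq_mul, vol]
        linarith

/-- Passing to the limit in smooth cuts. -/
lemma cut_limit {Ω : Set E3} (hΩ : Good Ω) {H : Set E3} (hH : MeasurableSet H)
    {η : ℕ → E3 → ℝ} (hη : ∀ i, ContDiff ℝ 1 (η i))
    (h0 : ∀ i x, 0 ≤ η i x) (h1 : ∀ i x, η i x ≤ 1) {S : ℕ → Set E3}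
    (hS : ∀ i, MeasurableSet (S i)) {L : ℕ → ℝ}
    (hL : ∀ i, 0 ≤ L i) (hD : ∀ i x, ‖fderiv ℝ (η i) x‖ ≤ (S i).indicator (fun _ => L i) x)
    (hlim : ∀ᵐ x, Tendsto (fun i => η i x) atTop (𝓝 (H.indicator (fun _ => (1:ℝ)) x)))
    {q : ℝ} (hq : ∀ i, L i * vol (Ω ∩ S i) ≤ q) :
    Good (Ω ∩ H) ∧ Good (Ω \ H) ∧ per (Ω ∩ H) + per (Ω \ H) ≤ per Ω + 2 * q := by
  have key : ∀ φ ψ, IsTest φ → IsTest ψ →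
      (∫ x in Ω ∩ H, divg φ x) + ∫ x in Ω \ H, divg ψ x ≤ per Ω + 2 * q := by
    intro φ ψ hφ hψ
    have iφ := divg_integrable hφ
    have iψ := divg_integrable hψ
    have e : (∫ x in Ω ∩ H, divg φ x) + ∫ x in Ω \ H, divg ψ x
        = ∫ x in Ω, (H.indicator (fun _ => (1:ℝ)) x * divg φ x
            + (1 - H.indicator (fun _ => (1:ℝ)) x) * divg ψ x) := by
      have e1 : ∫ x in Ω ∩ H, divg φ x = ∫ x in Ω, H.indicator (divg φ) x := by
        rw [integral_indicator hH, Measure.restrict_restrict hH, inter_comm]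
      have e2 : ∫ x in Ω \ H, divg ψ x = ∫ x in Ω, Hᶜ.indicator (divg ψ) x := by
        rw [integral_indicator hH.compl, Measure.restrict_restrict hH.compl, inter_comm]
        rfl
      rw [e1, e2, ← integral_add]
      · congr 1
        ext x
        by_cases hx : x ∈ H <;> simp [hx]
      · exact (iφ.indicator hH).integrableOn
      · exact (iψ.indicator hH.compl).integrableOn
    have ht : Tendsto (fun i => ∫ x in Ω, (η i x * divg φ x + (1 - η i x) * divg ψ x)) atTop
        (𝓝 (∫ x in Ω, (H.indicator (fun _ => (1:ℝ)) x * divg φ x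
            + (1 - H.indicator (fun _ => (1:ℝ)) x) * divg ψ x))) := by
      apply tendsto_integral_of_dominated_convergence (fun x => |divg φ x| + |divg ψ x|)
      · intro i
        have c1 : Continuous (fun x => η i x * divg φ x + (1 - η i x) * divg ψ x) :=
          ((hη i).continuous.mul (divg_continuous hφ.1)).add
            ((continuous_const.sub (hη i).continuous).mul (divg_continuous hψ.1))
        exact c1.aestronglyMeasurable
      · exact (iφ.abs.add iψ.abs).integrableOn
      · intro i
        refine Eventually.of_forall fun x => ?_
        have a0 := h0 i x
        have a1 := h1 i x
        rw [Real.norm_eq_abs]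
        refine (abs_add_le _ _).trans ?_
        rw [abs_mul, abs_mul, abs_of_nonneg a0, abs_of_nonneg (sub_nonneg.2 a1)]
        have := abs_nonneg (divg φ x)
        have := abs_nonneg (divg ψ x)
        nlinarith
      · refine ae_restrict_of_ae ?_
        filter_upwards [hlim] with x hx
        exact (hx.mul_const _).add ((tendsto_const_nhds.sub hx).mul_const _)
    rw [e]
    refine le_of_tendsto' ht fun i => ?_
    have := cut_core hΩ (hη i) (h0 i) (h1 i) (hS i) (hL i) (hD i) hφ hψ
    have := hq i
    linarith
  have k1 : HasFinPer (Ω ∩ H) := (per_le (b := per Ω + 2 * q) fun φ hφ => by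
    have := key φ _ hφ isTest_zero
    simpa [divg_zero] using this).1
  have k2 : HasFinPer (Ω \ H) := (per_le (b := per Ω + 2 * q) fun φ hφ => by
    have := key _ φ isTest_zero hφ
    simpa [divg_zero] using this).1
  refine ⟨⟨hΩ.1.inter hH, k1, (measure_mono inter_subset_left).trans_lt hΩ.2.2⟩,
    ⟨hΩ.1.diff hH, k2, (measure_mono sdiff_subset).trans_lt hΩ.2.2⟩, ?_⟩
  have : per (Ω ∩ H) ≤ per Ω + 2 * q - per (Ω \ H) := by
    refine (per_le fun φ hφ => ?_).2
    have : per (Ω \ H) ≤ per Ω + 2 * q - ∫ x in Ω ∩ H, divg φ x := by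
      refine (per_le fun ψ hψ => ?_).2
      have := key φ ψ hφ hψ
      linarith
    linarith
  linarith

lemma deriv_transition_eq_zero {s : ℝ} (h : s ≤ 0 ∨ 1 ≤ s) : deriv Real.smoothTransition s = 0 := by
  rcases h with h | h
  · apply IsLocalMin.deriv_eq_zero
    refine Eventually.of_forall fun t => ?_
    rw [Real.smoothTransition.zero_of_nonpos h]
    exact Real.smoothTransition.nonneg t
  · apply IsLocalMax.deriv_eq_zero
    refine Eventually.of_forall fun t => ?_
    rw [Real.smoothTransition.one_of_one_le h]
    exact Real.smoothTransition.le_one t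

lemma exists_transition_bound : ∃ K : ℝ, 0 < K ∧ ∀ s, |deriv Real.smoothTransition s| ≤ K := by
  have hc : Continuous (deriv Real.smoothTransition) :=
    (Real.smoothTransition.contDiff (n := 1)).continuous_deriv (by norm_num)
  have hs : HasCompactSupport (deriv Real.smoothTransition) := by
    apply HasCompactSupport.intro (isCompact_Icc (a := (0:ℝ)) (b := 1))
    intro x hx
    apply deriv_transition_eq_zero
    by_contra hh
    push Not at hh
    exact hx ⟨hh.1.le, hh.2.le⟩
  obtain ⟨C, hC⟩ := hc.bounded_above_of_compact_support hs
  refine ⟨C + 1, ?_, fun s => (hC s).trans (by linarith)⟩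
  have := (norm_nonneg _).trans (hC 0)
  linarith

/-- Bound on the slope of the smooth transition function. -/
def KT : ℝ := exists_transition_bound.choose
lemma KT_pos : 0 < KT := exists_transition_bound.choose_spec.1
lemma KT_bound (s : ℝ) : |deriv Real.smoothTransition s| ≤ KT := exists_transition_bound.choose_spec.2 s

/-- Functions whose sublevel sets we use to cut. -/
def Slice (u : E3 → ℝ) : Prop :=
  ContDiff ℝ 1 u ∧ (∀ x, ‖fderiv ℝ u x‖ ≤ 1) ∧ ∀ t, volume {x | u x = t} = 0

/-- `H` cuts every subset of `Ω` with perimeter error at most `q`. -/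
def CutBy (Ω H : Set E3) (q : ℝ) : Prop :=
  ∀ Ω' ⊆ Ω, Good Ω' → Good (Ω' ∩ H) ∧ Good (Ω' \ H) ∧ per (Ω' ∩ H) + per (Ω' \ H) ≤ per Ω' + q

lemma vol_mono {A B : Set E3} (h : A ⊆ B) (hB : volume B < ⊤) : vol A ≤ vol B :=
  ENNReal.toReal_mono hB.ne (measure_mono h)

lemma cut_at {u : E3 → ℝ} (hu : Slice u) {Ω : Set E3} (hfin : volume Ω < ⊤) {t q : ℝ}
    {α β : ℕ → ℝ} (hαβ : ∀ i, α i < β i) (hαt : ∀ i, α i ≤ t) (htβ : ∀ i, t ≤ β i)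
    (hlim : Tendsto (fun i => β i - α i) atTop (𝓝 0))
    (hq : ∀ i, vol (Ω ∩ {x | α i ≤ u x ∧ u x < β i}) ≤ q * (β i - α i)) :
    CutBy Ω {x | u x < t} (2 * (KT * q)) := by
  intro Ω' hsub hΩ'
  have hcu : Continuous u := hu.1.continuous
  have hmeas : ∀ i, MeasurableSet {x | α i ≤ u x ∧ u x < β i} := fun i =>
    (measurableSet_le measurable_const hcu.measurable).inter
      (measurableSet_lt hcu.measurable measurable_const)
  set g : ℕ → E3 → ℝ := fun i x => (u x - α i) / (β i - α i) with hg
  have hgd : ∀ i, ContDiff ℝ 1 (g i) := fun i => (hu.1.sub contDiff_const).div_const _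
  have hsm : ContDiff ℝ 1 Real.smoothTransition := Real.smoothTransition.contDiff (n := 1)
  refine cut_limit hΩ' (measurableSet_lt hcu.measurable measurable_const)
    (η := fun i x => 1 - Real.smoothTransition (g i x))
    (S := fun i => {x | α i ≤ u x ∧ u x < β i}) (L := fun i => KT / (β i - α i))
    ?_ ?_ ?_ hmeas ?_ ?_ ?_ ?_
  · intro i
    exact contDiff_const.sub (hsm.comp (hgd i))
  · intro i x
    exact sub_nonneg.2 (Real.smoothTransition.le_one _)
  · intro i x
    have := Real.smoothTransition.nonneg (g i x)
    linarith
  · intro i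
    exact div_nonneg KT_pos.le (sub_nonneg.2 (hαβ i).le)
  · intro i x
    have hpos : 0 < β i - α i := sub_pos.2 (hαβ i)
    have hud : DifferentiableAt ℝ u x := (hu.1.differentiable (by norm_num)) x
    have hgx : HasFDerivAt (g i) ((β i - α i)⁻¹ • fderiv ℝ u x) x := by
      have := (hud.hasFDerivAt.sub_const (α i)).const_smul ((β i - α i)⁻¹)
      refine this.congr_of_eventuallyEq (Eventually.of_forall fun y => ?_)
      simp [hg, div_eq_inv_mul]
    have hs : HasDerivAt Real.smoothTransition (deriv Real.smoothTransition (g i x)) (g i x) :=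
      ((hsm.differentiable (by norm_num)) _).hasDerivAt
    have hcomp : HasFDerivAt (fun x => 1 - Real.smoothTransition (g i x))
        (-(deriv Real.smoothTransition (g i x) • ((β i - α i)⁻¹ • fderiv ℝ u x))) x := by
      simpa using (hs.comp_hasFDerivAt x hgx).const_sub 1
    rw [hcomp.fderiv, norm_neg, norm_smul, norm_smul]
    by_cases hx : x ∈ {x | α i ≤ u x ∧ u x < β i}
    · rw [indicator_of_mem hx, Real.norm_eq_abs, norm_inv, Real.norm_of_nonneg hpos.le]
      have a1 := KT_bound (g i x)
      have a2 := hu.2.1 x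
      calc _ ≤ KT * ((β i - α i)⁻¹ * 1) := by
            gcongr
            exact KT_pos.le
        _ = _ := by rw [mul_one]; rfl
    · rw [indicator_of_notMem hx]
      have : deriv Real.smoothTransition (g i x) = 0 := by
        apply deriv_transition_eq_zero
        by_cases h : α i ≤ u x
        · right
          rw [hg]
          simp only
          rw [one_le_div hpos]
          have : ¬ (u x < β i) := fun h' => hx ⟨h, h'⟩
          linarith
        · left
          apply div_nonpos_of_nonpos_of_nonneg _ hpos.le
          linarith
      simp [this]
  · have : ∀ᵐ x, u x ≠ t := by
      rw [ae_iff]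
      simpa using hu.2.2 t
    filter_upwards [this] with x hx
    rcases lt_or_gt_of_ne hx with h | h
    · have hx' : x ∈ {x | u x < t} := h
      rw [indicator_of_mem hx']
      apply tendsto_const_nhds.congr'
      have : ∀ᶠ i in atTop, β i - α i < t - u x := hlim.eventually_lt_const (by linarith)
      filter_upwards [this] with i hi
      rw [Real.smoothTransition.zero_of_nonpos, sub_zero]
      apply div_nonpos_of_nonpos_of_nonneg _ (sub_pos.2 (hαβ i)).le
      have := htβ i
      linarith
    · have hx' : x ∉ {x | u x < t} := by simpa using h.le
      rw [indicator_of_notMem hx']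
      apply tendsto_const_nhds.congr'
      have : ∀ᶠ i in atTop, β i - α i < u x - t := hlim.eventually_lt_const (by linarith)
      filter_upwards [this] with i hi
      rw [Real.smoothTransition.one_of_one_le, sub_self]
      rw [hg]
      simp only
      rw [one_le_div (sub_pos.2 (hαβ i))]
      have := hαt i
      linarith
  · intro i
    have hpos : 0 < β i - α i := sub_pos.2 (hαβ i)
    have h1 : vol (Ω' ∩ {x | α i ≤ u x ∧ u x < β i}) ≤ q * (β i - α i) :=
      (vol_mono (inter_subset_inter_left _ hsub)
        ((measure_mono inter_subset_left).trans_lt hfin)).trans (hq i)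
    calc KT / (β i - α i) * vol (Ω' ∩ {x | α i ≤ u x ∧ u x < β i})
        ≤ KT / (β i - α i) * (q * (β i - α i)) := by
          have := KT_pos
          gcongr
      _ = KT * q := by field_simp

lemma bisect (V : ℝ → ℝ) (a b : ℝ) (hab : a < b) :
    ∃ t, a ≤ t ∧ t ≤ b ∧ ∃ α β : ℕ → ℝ, (∀ i, α i < β i) ∧ (∀ i, a ≤ α i) ∧ (∀ i, β i ≤ b) ∧
      (∀ i, α i ≤ t) ∧ (∀ i, t ≤ β i) ∧
      Tendsto (fun i => β i - α i) atTop (𝓝 0) ∧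
      ∀ i, V (β i) - V (α i) ≤ (V b - V a) / (b - a) * (β i - α i) := by
  classical
  let step : ℝ × ℝ → ℝ × ℝ := fun p =>
    if V ((p.1 + p.2) / 2) - V p.1 ≤ (V b - V a) / (b - a) * ((p.2 - p.1) / 2)
    then (p.1, (p.1 + p.2) / 2) else ((p.1 + p.2) / 2, p.2)
  let p : ℕ → ℝ × ℝ := fun n => step^[n] (a, b)
  have hp0 : p 0 = (a, b) := rfl
  have hps : ∀ n, p (n + 1) = step (p n) := fun n => Function.iterate_succ_apply' _ _ _
  have hlt : ∀ n, (p n).2 - (p n).1 = (b - a) / 2 ^ n := by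
    intro n
    induction n with
    | zero => simp [hp0]
    | succ n ih =>
      rw [hps]
      simp only [step]
      split_ifs <;> (simp only [pow_succ]; field_simp; field_simp at ih; linarith)
  have hpos : ∀ n, (p n).1 < (p n).2 := by
    intro n
    have h1 := hlt n
    have : 0 < (b - a) / 2 ^ n := div_pos (sub_pos.2 hab) (by positivity)
    linarith
  have hV : ∀ n, V (p n).2 - V (p n).1 ≤ (V b - V a) / (b - a) * ((p n).2 - (p n).1) := by
    intro n
    induction n with
    | zero =>
      rw [hp0]
      simp only
      rw [div_mul_cancel₀]
      exact (sub_pos.2 hab).ne'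
    | succ n ih =>
      rw [hps]
      simp only [step]
      split_ifs with h
      · simp only
        convert h using 2
        ring
      · simp only
        push Not at h
        have : (p n).2 - ((p n).1 + (p n).2) / 2 = ((p n).2 - (p n).1) / 2 := by ring
        rw [this]
        linarith
  have hmono : Monotone (fun n => (p n).1) := by
    apply monotone_nat_of_le_succ
    intro n
    have := hpos n
    rw [hps]
    simp only [step]
    split_ifs
    · exact le_rfl
    · simp only; linarith
  have hanti : Antitone (fun n => (p n).2) := by
    apply antitone_nat_of_succ_le
    intro n
    have := hpos n
    rw [hps]
    simp only [step]
    split_ifs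
    · simp only; linarith
    · exact le_rfl
  have hcross : ∀ i j, (p i).1 ≤ (p j).2 := by
    intro i j
    have h1 : (p i).1 ≤ (p (max i j)).1 := hmono (le_max_left i j)
    have h2 : (p (max i j)).2 ≤ (p j).2 := hanti (le_max_right i j)
    have := hpos (max i j)
    linarith
  have hbdd : BddAbove (range fun n => (p n).1) := ⟨(p 0).2, by
    rintro _ ⟨i, rfl⟩; exact hcross i 0⟩
  have ha : ∀ i, (p i).1 ≤ ⨆ n, (p n).1 := fun i => le_ciSup hbdd i
  have hb : ∀ i, (⨆ n, (p n).1) ≤ (p i).2 := fun i => ciSup_le fun j => hcross j i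
  refine ⟨⨆ n, (p n).1, ha 0, hb 0, fun n => (p n).1, fun n => (p n).2, hpos,
    fun i => hmono (Nat.zero_le i), fun i => hanti (Nat.zero_le i), ha, hb, ?_, hV⟩
  simp_rw [hlt]
  have := (tendsto_pow_atTop_nhds_zero_of_lt_one (r := (1/2:ℝ)) (by norm_num) (by norm_num)).const_mul (b - a)
  simpa [div_eq_mul_inv] using this

lemma vol_diff {A B : Set E3} (h : A ⊆ B) (hA : MeasurableSet A) (hB : volume B < ⊤) :
    vol (B \ A) = vol B - vol A := by
  unfold vol
  rw [measure_sdiff h hA.nullMeasurableSet ((measure_mono h).trans_lt hB).ne,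
    ENNReal.toReal_sub_of_le (measure_mono h) hB.ne]

lemma vol_slab {u : E3 → ℝ} (hu : Measurable u) {Ω : Set E3} (hm : MeasurableSet Ω)
    (hfin : volume Ω < ⊤) {α β : ℝ} (h : α ≤ β) :
    vol (Ω ∩ {x | α ≤ u x ∧ u x < β}) = vol (Ω ∩ {x | u x < β}) - vol (Ω ∩ {x | u x < α}) := by
  rw [← vol_diff]
  · congr 1
    ext x
    simp only [mem_inter_iff, mem_ofPred_eq, Set.mem_sdiff, not_and, not_lt]
    tauto
  · rintro x ⟨h1, h2⟩
    exact ⟨h1, lt_of_lt_of_le h2 h⟩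
  · exact hm.inter (measurableSet_lt hu measurable_const)
  · exact (measure_mono inter_subset_left).trans_lt hfin

lemma cut_exists {u : E3 → ℝ} (hu : Slice u) {Ω : Set E3} (hm : MeasurableSet Ω)
    (hfin : volume Ω < ⊤) {a b : ℝ} (hab : a < b) :
    ∃ t, a ≤ t ∧ t ≤ b ∧ CutBy Ω {x | u x < t}
      (2 * KT * vol (Ω ∩ {x | a ≤ u x ∧ u x < b}) / (b - a)) := by
  obtain ⟨t, h1, h2, α, β, hαβ, -, -, hαt, htβ, hlim, hV⟩ :=
    bisect (fun s => vol (Ω ∩ {x | u x < s})) a b hab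
  refine ⟨t, h1, h2, ?_⟩
  have := cut_at hu hfin hαβ hαt htβ hlim
    (q := vol (Ω ∩ {x | a ≤ u x ∧ u x < b}) / (b - a)) (fun i => by
      rw [vol_slab hu.1.continuous.measurable hm hfin (hαβ i).le,
        vol_slab hu.1.continuous.measurable hm hfin hab.le]
      exact hV i)
  convert this using 1
  ring

/-- Translate of a set. -/
def shift (a : E3) (Ω : Set E3) : Set E3 := {x : E3 | x + a ∈ Ω}

lemma shift_eq (a : E3) (Ω : Set E3) : shift a Ω = (fun x => x + a) ⁻¹' Ω := rfl

lemma shift_meas {a : E3} {Ω : Set E3} (h : MeasurableSet Ω) : MeasurableSet (shift a Ω) :=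
  (measurable_add_const a) h

lemma shift_volume (a : E3) (Ω : Set E3) : volume (shift a Ω) = volume Ω :=
  measure_preimage_add_right volume a Ω

lemma shift_setIntegral (a : E3) {Ω : Set E3} (hm : MeasurableSet Ω) (f : E3 → ℝ) :
    ∫ x in shift a Ω, f x = ∫ x in Ω, f (x - a) := by
  rw [← integral_indicator (shift_meas hm), ← integral_indicator hm,
    ← integral_sub_right_eq_self _ a]
  congr 1
  ext x
  by_cases hx : x ∈ Ω
  · rw [indicator_of_mem hx, indicator_of_mem]
    simpa [shift] using hx
  · rw [indicator_of_notMem hx, indicator_of_notMem]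
    simpa [shift] using hx

lemma trans_test {Ω : Set E3} (hΩ : Good Ω) {ψ : E3 → ℝ} (hψ : ContDiff ℝ 1 ψ)
    (hc : HasCompactSupport ψ) (h1 : ∀ x, |ψ x| ≤ 1) (h : E3) :
    (∫ x in Ω, ψ x) - ∫ x in Ω, ψ (x - h) ≤ ‖h‖ * per Ω := by
  rcases eq_or_ne h 0 with rfl | hne
  · simp
  have hfm : IsFiniteMeasure (volume.restrict Ω) := ⟨by simpa using hΩ.2.2⟩
  have hdψ : Differentiable ℝ ψ := hψ.differentiable (by norm_num)
  have hDc : Continuous (fderiv ℝ ψ) := hψ.continuous_fderiv (by norm_num)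
  obtain ⟨C, hC⟩ := hDc.bounded_above_of_compact_support (hc.fderiv ℝ)
  have hpt : ∀ s x, HasDerivAt (fun s : ℝ => ψ (x - s • h)) (-(fderiv ℝ ψ (x - s • h) h)) s := by
    intro s x
    have e1 : HasDerivAt (fun s : ℝ => x - s • h) (-h) s := by
      simpa using ((hasDerivAt_id s).smul_const h).const_sub x
    have e2 := (hdψ (x - s • h)).hasFDerivAt.comp_hasDerivAt s e1
    rw [map_neg] at e2
    exact e2
  have hder : ∀ s : ℝ, HasDerivAt (fun s : ℝ => ∫ x in Ω, ψ (x - s • h))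
      (∫ x in Ω, -(fderiv ℝ ψ (x - s • h) h)) s := by
    intro s
    refine (hasDerivAt_integral_of_dominated_loc_of_deriv_le (s := univ)
      (F := fun s x => ψ (x - s • h)) (F' := fun s x => -(fderiv ℝ ψ (x - s • h) h))
      (bound := fun _ => C * ‖h‖) univ_mem ?_ ?_ ?_ ?_ ?_ ?_).2
    · refine Eventually.of_forall fun s => ?_
      exact (hψ.continuous.comp (continuous_id.sub continuous_const)).aestronglyMeasurable
    · refine Integrable.of_bound
        (hψ.continuous.comp (continuous_id.sub continuous_const)).aestronglyMeasurable 1 ?_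
      exact Eventually.of_forall fun x => h1 _
    · have : Continuous fun x => -(fderiv ℝ ψ (x - s • h) h) :=
        ((hDc.comp (continuous_id.sub continuous_const)).clm_apply continuous_const).neg
      exact this.aestronglyMeasurable
    · refine Eventually.of_forall fun x s _ => ?_
      rw [norm_neg]
      refine ((fderiv ℝ ψ (x - s • h)).le_opNorm h).trans ?_
      gcongr
      exact hC _
    · exact integrable_const _
    · exact Eventually.of_forall fun x s _ => hpt s x
  have hbd : ∀ s : ℝ, ∫ x in Ω, (fderiv ℝ ψ (x - s • h) h) ≤ ‖h‖ * per Ω := by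
    intro s
    have hn : ‖h‖ ≠ 0 := norm_ne_zero_iff.2 hne
    set v : E3 := ‖h‖⁻¹ • h with hv
    have hsh : ContDiff ℝ 1 (fun x : E3 => ψ (x - s • h)) :=
      hψ.comp (contDiff_id.sub contDiff_const)
    have ht : IsTest (fun x => ψ (x - s • h) • v) := by
      refine ⟨hsh.smul contDiff_const, ?_, ?_⟩
      · have : HasCompactSupport (fun x : E3 => ψ (x - s • h)) :=
          hc.comp_homeomorph (Homeomorph.subRight (s • h))
        exact this.smul_right
      · intro x
        rw [norm_smul, hv, norm_smul, norm_inv, norm_norm, inv_mul_cancel₀ hn, mul_one]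
        exact h1 _
    have hdiv : ∀ x, divg (fun x => ψ (x - s • h) • v) x = ‖h‖⁻¹ * fderiv ℝ ψ (x - s • h) h := by
      intro x
      rw [divg_smul (hsh.differentiable (by norm_num) x) (differentiableAt_const v)]
      have e1 : divg (fun _ => v) x = 0 := by simp [divg]
      have e2 : fderiv ℝ (fun x : E3 => ψ (x - s • h)) x = fderiv ℝ ψ (x - s • h) := by
        have := fderiv_comp_add_right (𝕜 := ℝ) (f := ψ) (x := x) (-(s • h))
        simpa [sub_eq_add_neg] using this
      rw [e1, e2, hv, map_smul]
      simp
    have := le_per hΩ.2.1 ht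
    simp_rw [hdiv] at this
    rw [integral_const_mul] at this
    have hp : 0 < ‖h‖ := norm_pos_iff.2 hne
    rwa [inv_mul_le_iff₀ hp] at this
  have hfin := image_sub_le_mul_sub_of_deriv_le
    (f := fun s : ℝ => - ∫ x in Ω, ψ (x - s • h)) (fun s => (hder s).neg.differentiableAt)
    (C := ‖h‖ * per Ω) (fun s => by
      have e : deriv (fun s : ℝ => - ∫ x in Ω, ψ (x - s • h)) s
        = -∫ x in Ω, -(fderiv ℝ ψ (x - s • h) h) := (hder s).neg.deriv
      rw [e, integral_neg, neg_neg]
      exact hbd s) (zero_le_one)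
  simp only [one_smul, zero_smul, sub_zero, mul_one] at hfin
  linarith

lemma exists_bump {K U : Set E3} (hK : IsCompact K) (hU : IsOpen U) (h : K ⊆ U) :
    ∃ ψ : E3 → ℝ, ContDiff ℝ 1 ψ ∧ HasCompactSupport ψ ∧ (∀ x, 0 ≤ ψ x) ∧ (∀ x, ψ x ≤ 1) ∧
      (∀ x ∈ K, ψ x = 1) ∧ ∀ x, x ∉ U → ψ x = 0 := by
  obtain ⟨r, hr⟩ := hK.isBounded.subset_ball (0 : E3)
  obtain ⟨ψ, h1, h2, h3, h4⟩ := exists_contMDiff_support_eq_eq_one_iff (n := ⊤)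
    (modelWithCornersSelf ℝ E3)
    (hU.inter (isOpen_ball (x := (0:E3)) (ε := r))) hK.isClosed (subset_inter h hr)
  have hr' : ∀ x, ψ x ∈ Icc (0:ℝ) 1 := fun x => h2 ⟨x, rfl⟩
  refine ⟨ψ, h1.contDiff.of_le (by norm_cast), ?_, fun x => (hr' x).1, fun x => (hr' x).2,
    fun x hx => (h4 x).1 hx, ?_⟩
  · refine HasCompactSupport.of_support_subset_isCompact (isCompact_closedBall (0:E3) r) ?_
    rw [h3]
    exact inter_subset_right.trans ball_subset_closedBall
  · intro x hx
    by_contra hne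
    have : x ∈ Function.support ψ := hne
    rw [h3] at this
    exact hx this.1

lemma trans_vol {Ω : Set E3} (hΩ : Good Ω) (h : E3) :
    volume (Ω \ shift h Ω) ≤ ENNReal.ofReal (‖h‖ * per Ω) := by
  have hmS := shift_meas (a := h) hΩ.1
  set S := Ω \ shift h Ω with hS
  have hSm : MeasurableSet S := hΩ.1.diff hmS
  have hSf : volume S < ⊤ := (measure_mono sdiff_subset).trans_lt hΩ.2.2
  suffices hs : ∀ ε : ℝ, 0 < ε → volume.real S ≤ ‖h‖ * per Ω + ε by
    have : volume.real S ≤ ‖h‖ * per Ω := le_of_forall_pos_le_add hs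
    rw [← ENNReal.ofReal_toReal hSf.ne]
    exact ENNReal.ofReal_le_ofReal this
  intro ε hε
  have hε2 : ENNReal.ofReal (ε / 2) ≠ 0 := by
    simp only [ne_eq, ENNReal.ofReal_eq_zero, not_le]; linarith
  obtain ⟨K, hKS, hK, hKv⟩ := hSm.exists_isCompact_lt_add hSf.ne hε2
  obtain ⟨U, hKU, hU, hUv⟩ := hK.exists_isOpen_lt_add (μ := volume) hε2
  obtain ⟨ψ, p1, p2, p3, p4, p5, p6⟩ := exists_bump hK hU hKU
  have hInteg : Integrable ψ := p1.continuous.integrable_of_hasCompactSupport p2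
  have t1 := trans_test hΩ p1 p2 (fun x => abs_le.2 ⟨by linarith [p3 x], p4 x⟩) h
  rw [← shift_setIntegral h hΩ.1 ψ] at t1
  have d1 : ∫ x in Ω, ψ x = (∫ x in Ω ∩ shift h Ω, ψ x) + ∫ x in S, ψ x :=
    (integral_inter_add_sdiff hmS hInteg.integrableOn).symm
  have d2 : ∫ x in shift h Ω, ψ x = (∫ x in shift h Ω ∩ Ω, ψ x) + ∫ x in shift h Ω \ Ω, ψ x :=
    (integral_inter_add_sdiff hΩ.1 hInteg.integrableOn).symm
  rw [inter_comm] at d2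
  have hKf : volume K < ⊤ := hK.measure_lt_top
  have hUf : volume U < ⊤ := hUv.trans_le le_top
  have b1 : volume.real K ≤ ∫ x in S, ψ x := by
    have : ∫ x in K, ψ x = volume.real K := by
      rw [setIntegral_congr_fun hK.measurableSet (g := fun _ => (1:ℝ)) (fun x hx => p5 x hx)]
      simp
    rw [← this]
    exact setIntegral_mono_set hInteg.integrableOn (Eventually.of_forall p3)
      (LE.le.eventuallyLE hKS)
  have b2 : ∫ x in shift h Ω \ Ω, ψ x ≤ volume.real (U \ K) := by
    have hUK : MeasurableSet (U \ K) := hU.measurableSet.diff hK.measurableSet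
    have hf : volume (U \ K) < ⊤ := (measure_mono sdiff_subset).trans_lt hUf
    calc ∫ x in shift h Ω \ Ω, ψ x ≤ ∫ x in shift h Ω \ Ω, (U \ K).indicator (fun _ => (1:ℝ)) x := by
          apply setIntegral_mono_on hInteg.integrableOn
          · exact ((integrable_indicator_iff hUK).2 (integrableOn_const hf.ne)).integrableOn
          · exact hmS.diff hΩ.1
          · intro x hx
            by_cases hxU : x ∈ U
            · rw [indicator_of_mem]
              · exact p4 x
              · exact ⟨hxU, fun hxK => hx.2 (hKS hxK).1⟩
            · rw [p6 x hxU]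
              exact indicator_nonneg (fun _ _ => zero_le_one) _
      _ ≤ ∫ x, (U \ K).indicator (fun _ => (1:ℝ)) x := by
          apply setIntegral_le_integral
          · exact ((integrable_indicator_iff hUK).2 (integrableOn_const hf.ne))
          · exact Eventually.of_forall fun x => indicator_nonneg (fun _ _ => zero_le_one) _
      _ = volume.real (U \ K) := by
          rw [integral_indicator hUK]; simp
  have b3 : volume.real (U \ K) ≤ ε / 2 := by
    have e : volume U = volume (U ∩ K) + volume (U \ K) := (measure_inter_add_sdiff U hK.measurableSet).symm
    rw [inter_eq_self_of_subset_right hKU] at e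
    rw [e] at hUv
    have := (ENNReal.add_lt_add_iff_left hKf.ne).1 hUv
    exact (ENNReal.toReal_mono ENNReal.ofReal_ne_top this.le).trans
      (ENNReal.toReal_ofReal (by linarith)).le
  have b4 : volume.real S ≤ volume.real K + ε / 2 := by
    have := ENNReal.toReal_mono (by finiteness) hKv.le
    rwa [ENNReal.toReal_add hKf.ne (by finiteness), ENNReal.toReal_ofReal (by linarith)] at this
  linarith

lemma shift_sdiff_ball (x : E3) (r : ℝ) (Ω : Set E3) :
    shift x (ball x r \ Ω) = ball 0 r \ shift x Ω := by
  ext y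
  simp [shift, dist_eq_norm]

lemma volume_ball_eq (x : E3) (r : ℝ) : volume (ball x r) = volume (ball (0:E3) r) := by
  rw [Measure.addHaar_ball_center]

lemma meas_sub_ball {Ω : Set E3} (hm : MeasurableSet Ω) (r : ℝ) :
    Measurable (fun x => volume (ball x r \ Ω)) := by
  have : MeasurableSet {p : E3 × E3 | p.2 ∈ ball p.1 r \ Ω} := by
    have h1 : MeasurableSet {p : E3 × E3 | dist p.2 p.1 < r} :=
      measurableSet_lt (by fun_prop) measurable_const
    exact h1.inter (measurable_snd hm.compl)
  exact measurable_measure_prodMk_left this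

lemma meas_inter_ball {Ω : Set E3} (hm : MeasurableSet Ω) (r : ℝ) :
    Measurable (fun x => volume (ball x r ∩ Ω)) := by
  have := meas_sub_ball hm.compl r
  simpa [sdiff_compl] using this

/-- Averaged translation estimate. -/
lemma avg_bound {Ω : Set E3} (hΩ : Good Ω) {r : ℝ} (hr : 0 ≤ r) :
    ∫⁻ x in Ω, volume (ball x r \ Ω) ≤ volume (ball (0:E3) r) * ENNReal.ofReal (r * per Ω) := by
  set G : E3 → E3 → ℝ≥0∞ := fun x h => (Ωᶜ).indicator (fun _ => (1:ℝ≥0∞)) (x + h) with hG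
  have hGm : Measurable (Function.uncurry G) := by
    have : Measurable (fun p : E3 × E3 => p.1 + p.2) := by fun_prop
    exact (measurable_const.indicator hΩ.1.compl).comp this
  have e1 : ∀ x, volume (ball x r \ Ω) = ∫⁻ h in ball (0:E3) r, G x h := by
    intro x
    rw [← shift_volume x, shift_sdiff_ball]
    have : ∀ h, G x h = ((shift x Ω)ᶜ).indicator (fun _ => 1) h := by
      intro h
      show (Ωᶜ).indicator (fun _ => (1:ℝ≥0∞)) (x + h) = _
      rw [add_comm]
      rfl
    simp_rw [this]
    rw [lintegral_indicator (shift_meas hΩ.1).compl, setLIntegral_const, one_mul,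
      Measure.restrict_apply (shift_meas hΩ.1).compl, inter_comm]
    rfl
  simp_rw [e1]
  rw [lintegral_lintegral_swap hGm.aemeasurable]
  have e2 : ∀ h, ∫⁻ x in Ω, G x h = volume (Ω \ shift h Ω) := by
    intro h
    have : ∀ x, G x h = ((shift h Ω)ᶜ).indicator (fun _ => 1) x := by
      intro x
      rfl
    simp_rw [this]
    rw [lintegral_indicator (shift_meas hΩ.1).compl, setLIntegral_const, one_mul,
      Measure.restrict_apply (shift_meas hΩ.1).compl, inter_comm]
    rfl
  simp_rw [e2]
  calc ∫⁻ h in ball (0:E3) r, volume (Ω \ shift h Ω)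
      ≤ ∫⁻ h in ball (0:E3) r, ENNReal.ofReal (r * per Ω) := by
        apply setLIntegral_mono' measurableSet_ball
        intro h hh
        refine (trans_vol hΩ h).trans (ENNReal.ofReal_le_ofReal ?_)
        have : ‖h‖ ≤ r := by simpa using (mem_ball_zero_iff.1 hh).le
        exact mul_le_mul_of_nonneg_right this per_nonneg
    _ = _ := by rw [setLIntegral_const, mul_comm]

lemma avg_bound' {Ω : Set E3} (hΩ : Good Ω) {r : ℝ} (hr : 0 ≤ r) :
    ∫⁻ x in Ωᶜ, volume (ball x r ∩ Ω) ≤ volume (ball (0:E3) r) * ENNReal.ofReal (r * per Ω) := by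
  refine le_trans (le_of_eq ?_) (avg_bound hΩ hr)
  set G : E3 → E3 → ℝ≥0∞ := fun x y => {p : E3 × E3 | dist p.2 p.1 < r}.indicator (fun _ => 1) (x, y)
    with hG
  have hGs : MeasurableSet {p : E3 × E3 | dist p.2 p.1 < r} :=
      measurableSet_lt (by fun_prop) measurable_const
  have hGm : Measurable (Function.uncurry G) := measurable_const.indicator hGs
  have hsym : ∀ x y, G x y = G y x := by
    intro x y
    simp only [hG, indicator, mem_ofPred_eq, dist_comm]
  have e : ∀ (S : Set E3), ∀ x, volume (ball x r ∩ S) = ∫⁻ y in S, G x y := by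
    intro S x
    have : ∀ y, G x y = (ball x r).indicator (fun _ => 1) y := by
      intro y
      simp only [hG, indicator, mem_ofPred_eq, mem_ball]
    simp_rw [this]
    rw [lintegral_indicator measurableSet_ball, setLIntegral_const, one_mul,
      Measure.restrict_apply measurableSet_ball]
  have e' : ∀ x, volume (ball x r \ Ω) = ∫⁻ y in Ωᶜ, G x y := fun x => e Ωᶜ x
  simp_rw [e, e']
  rw [lintegral_lintegral_swap hGm.aemeasurable]
  simp_rw [hsym]

lemma ball_vol_pos {r : ℝ} (hr : 0 < r) : 0 < volume (ball (0:E3) r) := measure_ball_pos _ _ hr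
lemma ball_vol_fin (x : E3) (r : ℝ) : volume (ball x r) < ⊤ := measure_ball_lt_top

/-- Local isoperimetric inequality. -/
lemma iso_local {Ω : Set E3} (hΩ : Good Ω) {S : Set E3} (hS : MeasurableSet S) {r : ℝ} (hr : 0 < r)
    (h : ∀ x ∈ Ω \ S, volume (ball x r ∩ Ω) ≤ volume (ball (0:E3) r) / 2) :
    vol (Ω \ S) ≤ 2 * r * per Ω := by
  set B := volume (ball (0:E3) r) with hB
  have hB0 : B ≠ 0 := (ball_vol_pos hr).ne'
  have hBt : B ≠ ⊤ := (ball_vol_fin 0 r).ne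
  have h1 : (B / 2) * volume (Ω \ S) ≤ B * ENNReal.ofReal (r * per Ω) := by
    refine le_trans ?_ (avg_bound hΩ hr.le)
    calc (B / 2) * volume (Ω \ S) = ∫⁻ x in Ω \ S, B / 2 := by rw [setLIntegral_const]
      _ ≤ ∫⁻ x in Ω \ S, volume (ball x r \ Ω) := by
        apply setLIntegral_mono' (hΩ.1.diff hS)
        intro x hx
        have e : B = volume (ball x r ∩ Ω) + volume (ball x r \ Ω) := by
          rw [measure_inter_add_sdiff _ hΩ.1, hB, volume_ball_eq x]
        have hx' := h x hx
        have : B / 2 + B / 2 ≤ B / 2 + volume (ball x r \ Ω) := by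
          rw [ENNReal.add_halves]
          calc B = volume (ball x r ∩ Ω) + volume (ball x r \ Ω) := e
            _ ≤ _ := by gcongr
        exact (ENNReal.add_le_add_iff_left (ENNReal.div_ne_top hBt (by norm_num))).1 this
      _ ≤ _ := lintegral_mono_set sdiff_subset
  have h2 := ENNReal.toReal_mono (by finiteness) h1
  rw [ENNReal.toReal_mul, ENNReal.toReal_mul, ENNReal.toReal_div,
    ENNReal.toReal_ofReal (mul_nonneg hr.le per_nonneg)] at h2
  have hBp : 0 < B.toReal := ENNReal.toReal_pos hB0 hBt
  unfold vol
  simp only [ENNReal.toReal_ofNat] at h2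
  have : B.toReal * ((volume (Ω \ S)).toReal / 2) ≤ B.toReal * (r * per Ω) := by linarith
  have := le_of_mul_le_mul_left this hBp
  linarith

lemma weak_subseq {Ω : ℕ → Set E3} (hm : ∀ n, MeasurableSet (Ω n)) (hf : ∀ n, volume (Ω n) < ⊤)
    {M : ℝ} (hM : ∀ n, vol (Ω n) ≤ M) :
    ∃ φ : ℕ → ℕ, StrictMono φ ∧ ∀ x r, ∃ L, Tendsto
      (fun n => volume.real (ball x r ∩ Ω (φ n))) atTop (𝓝 L) := by
  have : Fact ((2:ℝ≥0∞) ≠ ⊤) := ⟨by norm_num⟩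
  let E := Lp ℝ 2 (volume : Measure E3)
  let f : ℕ → E := fun n => indicatorConstLp 2 (hm n) (hf n).ne (1:ℝ)
  have hfn : ∀ n, ‖f n‖ ≤ Real.sqrt M := by
    intro n
    have h1 : ‖f n‖ ^ 2 ≤ M := by
      rw [← real_inner_self_eq_norm_sq,
        L2.real_inner_indicatorConstLp_one_indicatorConstLp_one (hm n) (hm n) (hf n).ne (hf n).ne, inter_self]
      exact hM n
    exact Real.le_sqrt_of_sq_le h1
  let g : ℕ → WeakDual ℝ E := fun n => StrongDual.toWeakDual (innerSL ℝ (f n))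
  have hg : ∀ n, g n ∈ (WeakDual.toStrongDual ⁻¹' Metric.closedBall (0 : StrongDual ℝ E) (Real.sqrt M)) := by
    intro n
    simp only [mem_preimage, mem_closedBall, dist_zero_right]
    have : ‖innerSL ℝ (f n)‖ ≤ Real.sqrt M := by
      rw [innerSL_apply_norm]; exact hfn n
    exact this
  obtain ⟨G, -, φ, hφ, ht⟩ := WeakDual.isSeqCompact_closedBall ℝ E 0 (Real.sqrt M) hg
  refine ⟨φ, hφ, fun x r => ?_⟩
  let b : E := indicatorConstLp 2 (measurableSet_ball (x := x) (ε := r)) (ball_vol_fin x r).ne (1:ℝ)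
  refine ⟨G b, ?_⟩
  have h2 := ((WeakDual.eval_continuous b).tendsto G).comp ht
  refine h2.congr fun n => ?_
  show inner ℝ (f (φ n)) b = _
  rw [L2.real_inner_indicatorConstLp_one_indicatorConstLp_one (hm _) measurableSet_ball (hf _).ne (ball_vol_fin x r).ne, inter_comm]

lemma pair_bound {X Y : Set E3} (hX : Good X) (hY : Good Y) {r : ℝ} (hr : 0 < r) (R : ℝ) :
    volume (ball (0:E3) r) * volume ((X \ Y) ∩ ball 0 R) ≤
      volume (ball (0:E3) r) * ENNReal.ofReal (r * per X) +
      volume (ball (0:E3) r) * ENNReal.ofReal (r * per Y) +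
      ∫⁻ x in ball (0:E3) R, ENNReal.ofReal
        |volume.real (ball x r ∩ X) - volume.real (ball x r ∩ Y)| := by
  have mXY : MeasurableSet ((X \ Y) ∩ ball 0 R) := (hX.1.diff hY.1).inter measurableSet_ball
  have hpt : ∀ x, volume (ball (0:E3) r) ≤ volume (ball x r \ X) + volume (ball x r ∩ Y) +
      ENNReal.ofReal |volume.real (ball x r ∩ X) - volume.real (ball x r ∩ Y)| := by
    intro x
    have f1 : volume (ball x r ∩ X) ≠ ⊤ := ((measure_mono inter_subset_left).trans_lt (ball_vol_fin x r)).ne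
    have f2 : volume (ball x r ∩ Y) ≠ ⊤ := ((measure_mono inter_subset_left).trans_lt (ball_vol_fin x r)).ne
    have h1 : volume (ball x r ∩ X) ≤ volume (ball x r ∩ Y) +
      ENNReal.ofReal |volume.real (ball x r ∩ X) - volume.real (ball x r ∩ Y)| := by
      rw [← ENNReal.ofReal_toReal f1, ← ENNReal.ofReal_toReal f2,
        ← ENNReal.ofReal_add ENNReal.toReal_nonneg (abs_nonneg _)]
      apply ENNReal.ofReal_le_ofReal
      have := le_abs_self (volume.real (ball x r ∩ X) - volume.real (ball x r ∩ Y))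
      simp only [Measure.real] at this ⊢
      linarith
    calc volume (ball (0:E3) r) = volume (ball x r ∩ X) + volume (ball x r \ X) := by
          rw [measure_inter_add_sdiff _ hX.1, volume_ball_eq x]
      _ ≤ _ := by
        rw [add_comm, add_assoc]
        gcongr
  calc volume (ball (0:E3) r) * volume ((X \ Y) ∩ ball 0 R)
      = ∫⁻ x in (X \ Y) ∩ ball 0 R, volume (ball (0:E3) r) := by rw [setLIntegral_const]
    _ ≤ ∫⁻ x in (X \ Y) ∩ ball 0 R, (volume (ball x r \ X) + volume (ball x r ∩ Y) +
      ENNReal.ofReal |volume.real (ball x r ∩ X) - volume.real (ball x r ∩ Y)|) :=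
        lintegral_mono fun x => hpt x
    _ = (∫⁻ x in (X \ Y) ∩ ball 0 R, volume (ball x r \ X)) +
        (∫⁻ x in (X \ Y) ∩ ball 0 R, volume (ball x r ∩ Y)) + 
        ∫⁻ x in (X \ Y) ∩ ball 0 R, 
          ENNReal.ofReal |volume.real (ball x r ∩ X) - volume.real (ball x r ∩ Y)| := by
        have hm1 : Measurable fun x => volume (ball x r \ X) + volume (ball x r ∩ Y) :=
          (meas_sub_ball hX.1 r).add (meas_inter_ball hY.1 r)
        rw [lintegral_add_left hm1,
          lintegral_add_left (meas_sub_ball hX.1 r)]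
    _ ≤ _ := by
        gcongr
        · exact (lintegral_mono_set (fun x hx => hx.1.1)).trans (avg_bound hX hr.le)
        · exact (lintegral_mono_set (fun x hx => hx.1.2)).trans (avg_bound' hY hr.le)
        · exact inter_subset_right

lemma cauchy_seq {Ω : ℕ → Set E3} (hΩ : ∀ n, Good (Ω n)) {P : ℝ} (hP : ∀ n, per (Ω n) ≤ P)
    (hw : ∀ x r, ∃ L, Tendsto (fun n => volume.real (ball x r ∩ Ω n)) atTop (𝓝 L))
    (R : ℝ) {ε : ℝ} (hε : 0 < ε) :
    ∃ N, ∀ n ≥ N, ∀ k ≥ N, volume ((Ω n \ Ω k) ∩ ball 0 R) ≤ ENNReal.ofReal ε := by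
  have hP0 : 0 ≤ P := per_nonneg.trans (hP 0)
  set r : ℝ := ε / (4 * (P + 1)) with hrdef
  have hr : 0 < r := by positivity
  have hrP : r * P ≤ ε / 4 := by
    rw [hrdef, div_mul_eq_mul_div, div_le_div_iff₀ (by positivity) (by norm_num)]
    nlinarith
  set B := volume (ball (0:E3) r) with hB
  have hB0 : 0 < B := ball_vol_pos hr
  have hBt : B ≠ ⊤ := (ball_vol_fin 0 r).ne
  choose L hL using fun x => hw x r
  set f : ℕ → E3 → ℝ := fun n x => volume.real (ball x r ∩ Ω n) with hf
  have hfm : ∀ n, Measurable (f n) := fun n => (meas_inter_ball (hΩ n).1 r).ennreal_toReal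
  have hLm : Measurable L := measurable_of_tendsto_metrizable hfm (tendsto_pi_nhds.2 hL)
  have hfb : ∀ n x, 0 ≤ f n x ∧ f n x ≤ B.toReal := by
    intro n x
    refine ⟨ENNReal.toReal_nonneg, ENNReal.toReal_mono hBt ?_⟩
    rw [hB, ← volume_ball_eq x]
    exact measure_mono inter_subset_left
  have hLb : ∀ x, 0 ≤ L x ∧ L x ≤ B.toReal := fun x =>
    ⟨ge_of_tendsto' (hL x) fun n => (hfb n x).1, le_of_tendsto' (hL x) fun n => (hfb n x).2⟩
  have hdc : Tendsto (fun n => ∫⁻ x in ball (0:E3) R, ENNReal.ofReal |f n x - L x|) atTop (𝓝 0) := by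
    have : Tendsto (fun n => ∫⁻ x in ball (0:E3) R, ENNReal.ofReal |f n x - L x|) atTop
        (𝓝 (∫⁻ x in ball (0:E3) R, 0)) := by
      apply tendsto_lintegral_of_dominated_convergence (fun _ => B)
      · intro n
        exact (((hfm n).sub hLm).abs).ennreal_ofReal
      · intro n
        refine Eventually.of_forall fun x => ?_
        rw [← ENNReal.ofReal_toReal hBt]
        apply ENNReal.ofReal_le_ofReal
        rw [abs_le]
        have := hfb n x
        have := hLb x
        constructor <;> linarith
      · rw [setLIntegral_const]
        exact ENNReal.mul_ne_top hBt (ball_vol_fin 0 R).ne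
      · refine Eventually.of_forall fun x => ?_
        have h1 : Tendsto (fun n => |f n x - L x|) atTop (𝓝 0) := by
          have := ((hL x).sub_const (L x)).abs
          simpa using this
        simpa using ENNReal.tendsto_ofReal h1
    simpa using this
  have hpos : 0 < B * ENNReal.ofReal (ε / 4) :=
    ENNReal.mul_pos hB0.ne' (by simp only [ne_eq, ENNReal.ofReal_eq_zero, not_le]; linarith)
  obtain ⟨N, hN⟩ := eventually_atTop.1 (hdc.eventually_lt_const hpos)
  refine ⟨N, fun n hn k hk => ?_⟩
  have hb := pair_bound (hΩ n) (hΩ k) hr R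
  have h3 : ∫⁻ x in ball (0:E3) R, ENNReal.ofReal |f n x - f k x| ≤
      B * ENNReal.ofReal (ε / 4) + B * ENNReal.ofReal (ε / 4) := by
    calc ∫⁻ x in ball (0:E3) R, ENNReal.ofReal |f n x - f k x|
        ≤ ∫⁻ x in ball (0:E3) R, (ENNReal.ofReal |f n x - L x| + ENNReal.ofReal |f k x - L x|) := by
          apply lintegral_mono
          intro x
          show _ ≤ ENNReal.ofReal |f n x - L x| + ENNReal.ofReal |f k x - L x|
          rw [← ENNReal.ofReal_add (abs_nonneg _) (abs_nonneg _)]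
          apply ENNReal.ofReal_le_ofReal
          have := abs_sub_le (f n x) (L x) (f k x)
          rwa [abs_sub_comm (L x)] at this
      _ = (∫⁻ x in ball (0:E3) R, ENNReal.ofReal |f n x - L x|) + 
          ∫⁻ x in ball (0:E3) R, ENNReal.ofReal |f k x - L x| := 
          lintegral_add_left (((hfm n).sub hLm).abs).ennreal_ofReal _
      _ ≤ _ := add_le_add (hN n hn).le (hN k hk).le
  have h4 : ∀ j, B * ENNReal.ofReal (r * per (Ω j)) ≤ B * ENNReal.ofReal (ε / 4) := by
    intro j
    gcongr
    have := hP j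
    nlinarith
  have h5 : B * volume ((Ω n \ Ω k) ∩ ball 0 R) ≤ B * ENNReal.ofReal ε := by
    calc _ ≤ B * ENNReal.ofReal (ε / 4) + B * ENNReal.ofReal (ε / 4) +
          (B * ENNReal.ofReal (ε / 4) + B * ENNReal.ofReal (ε / 4)) :=
          hb.trans (add_le_add (add_le_add (h4 n) (h4 k)) h3)
      _ = B * ENNReal.ofReal ε := by
        rw [← mul_add, ← mul_add, ← ENNReal.ofReal_add (by linarith) (by linarith),
          ← ENNReal.ofReal_add (by linarith) (by linarith)]
        congr 2
        ring
  exact (ENNReal.mul_le_mul_iff_right hB0.ne' hBt).1 h5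

/-- Compactness for sets of bounded perimeter. -/
lemma compactness {Ω : ℕ → Set E3} (hΩ : ∀ n, Good (Ω n)) {P M : ℝ} (hP : ∀ n, per (Ω n) ≤ P)
    (hM : ∀ n, vol (Ω n) ≤ M) :
    ∃ (S : Set E3) (φ : ℕ → ℕ), StrictMono φ ∧ MeasurableSet S ∧
      ∀ ρ, Tendsto (fun n => volume (symmDiff (Ω (φ n)) S ∩ ball 0 ρ)) atTop (𝓝 0) := by
  obtain ⟨φ₁, hφ₁, hw⟩ := weak_subseq (fun n => (hΩ n).1) (fun n => (hΩ n).2.2) hM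
  set X : ℕ → Set E3 := fun n => Ω (φ₁ n) with hX
  have hc : ∀ k : ℕ, ∀ᶠ N in atTop, ∀ n ≥ N, ∀ j ≥ N,
      volume ((X n \ X j) ∩ ball 0 (k:ℝ)) ≤ ENNReal.ofReal ((1/2) ^ k) := by
    intro k
    obtain ⟨N, hN⟩ := cauchy_seq (Ω := X) (fun n => hΩ _) (fun n => hP _) hw (k:ℝ)
      (ε := (1/2)^k) (by positivity)
    filter_upwards [eventually_ge_atTop N] with N' hN' n hn j hj
    exact hN n (hN'.trans hn) j (hN'.trans hj)
  obtain ⟨φ₂, hφ₂, hc2⟩ := extraction_forall_of_eventually hc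
  set Y : ℕ → Set E3 := fun n => X (φ₂ n) with hY
  set S : Set E3 := ⋃ N, ⋂ k, Y (N + k) with hS
  have hYm : ∀ n, MeasurableSet (Y n) := fun n => (hΩ _).1
  have hSm : MeasurableSet S := MeasurableSet.iUnion fun N => MeasurableSet.iInter fun k => hYm _
  refine ⟨S, φ₁ ∘ φ₂, hφ₁.comp hφ₂, hSm, fun ρ => ?_⟩
  show Tendsto (fun n => volume (symmDiff (Y n) S ∩ ball 0 ρ)) atTop (𝓝 0)
  have hdi : ∀ i : ℕ, volume (symmDiff (Y i) (Y (i+1)) ∩ ball 0 (i:ℝ)) ≤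
      ENNReal.ofReal (2 * (1/2)^i) := by
    intro i
    have h1 := hc2 i (φ₂ i) le_rfl (φ₂ (i+1)) (hφ₂.monotone (Nat.le_succ i))
    have h2 := hc2 i (φ₂ (i+1)) (hφ₂.monotone (Nat.le_succ i)) (φ₂ i) le_rfl
    have : symmDiff (Y i) (Y (i+1)) ∩ ball 0 (i:ℝ) ⊆
      ((Y i \ Y (i+1)) ∩ ball 0 (i:ℝ)) ∪ ((Y (i+1) \ Y i) ∩ ball 0 (i:ℝ)) := by
      rw [← union_inter_distrib_right]
      rfl
    refine (measure_mono this).trans ((measure_union_le _ _).trans ?_)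
    rw [two_mul, ENNReal.ofReal_add (by positivity) (by positivity)]
    exact add_le_add h1 h2
  have hsub : ∀ k : ℕ, symmDiff (Y k) S ∩ ball 0 (k:ℝ) ⊆
      ⋃ i : ℕ, symmDiff (Y (k+i)) (Y (k+i+1)) ∩ ball 0 ((k+i : ℕ):ℝ) := by
    intro k x hx
    by_contra hn
    simp only [mem_iUnion, not_exists] at hn
    have hb : ∀ i : ℕ, x ∈ ball (0:E3) ((k+i:ℕ):ℝ) := fun i =>
      ball_subset_ball (by push_cast; linarith [(Nat.cast_nonneg i : (0:ℝ) ≤ i)]) hx.2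
    have hstep : ∀ i, x ∈ Y (k+i) ↔ x ∈ Y (k+i+1) := by
      intro i
      by_contra h
      refine hn i ⟨?_, hb i⟩
      rw [Set.mem_symmDiff]
      tauto
    have hall : ∀ i, x ∈ Y (k+i) ↔ x ∈ Y k := by
      intro i
      induction i with
      | zero => rfl
      | succ i ih => rw [← ih]; exact (hstep i).symm
    have hSx : x ∈ S ↔ x ∈ Y k := by
      constructor
      · intro h
        obtain ⟨N, hN⟩ := mem_iUnion.1 h
        have := mem_iInter.1 hN k
        rw [add_comm] at this
        exact (hall N).1 this
      · intro h
        exact mem_iUnion.2 ⟨k, mem_iInter.2 fun i => (hall i).2 h⟩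
    have := hx.1
    rw [Set.mem_symmDiff] at this
    tauto
  have hbound : ∀ k : ℕ, volume (symmDiff (Y k) S ∩ ball 0 (k:ℝ)) ≤ ENNReal.ofReal (4 * (1/2)^k) := by
    intro k
    refine (measure_mono (hsub k)).trans ((measure_iUnion_le _).trans ?_)
    have hs : HasSum (fun i : ℕ => 2 * (1/2:ℝ)^(k+i)) (4 * (1/2)^k) := by
      have := (hasSum_geometric_two).mul_left (2 * (1/2:ℝ)^k)
      have e : (fun i:ℕ => 2*(1/2:ℝ)^(k+i)) = fun i : ℕ => 2*(1/2:ℝ)^k*(1/2)^i := by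
        funext i; rw [pow_add]; ring
      have e2 : 4*(1/2:ℝ)^k = 2*(1/2)^k*2 := by ring
      rw [e, e2]; exact this
    calc _ ≤ ∑' i : ℕ, ENNReal.ofReal (2 * (1/2:ℝ)^(k+i)) := ENNReal.tsum_le_tsum fun i => hdi (k+i)
      _ = ENNReal.ofReal (4 * (1/2)^k) := by
        rw [← ENNReal.ofReal_tsum_of_nonneg (fun i => by positivity) hs.summable, hs.tsum_eq]
  have hz : Tendsto (fun k : ℕ => ENNReal.ofReal (4 * (1/2)^k)) atTop (𝓝 0) := by
    have := (tendsto_pow_atTop_nhds_zero_of_lt_one (r := (1/2:ℝ)) (by norm_num) (by norm_num)).const_mul 4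
    rw [mul_zero] at this
    simpa using ENNReal.tendsto_ofReal this
  refine tendsto_of_tendsto_of_tendsto_of_le_of_le' tendsto_const_nhds hz
    (Eventually.of_forall fun _ => zero_le) ?_
  obtain ⟨k0, hk0⟩ := exists_nat_ge ρ
  filter_upwards [eventually_ge_atTop k0] with k hk
  refine (measure_mono ?_).trans (hbound k)
  apply inter_subset_inter_right
  apply ball_subset_ball
  exact hk0.trans (by exact_mod_cast hk)

def kern (x y : E3) : ℝ≥0∞ := ENNReal.ofReal (1 / ‖x - y‖)

def JJ (A B : Set E3) : ℝ≥0∞ := ∫⁻ x in A, ∫⁻ y in B, kern x y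

def DD (A B : Set E3) : ℝ := (JJ A B).toReal

def c1 : ℝ≥0∞ := ∫⁻ z in ball (0:E3) 1, kern z 0

def MF (A : Set E3) : Prop := MeasurableSet A ∧ volume A < ⊤

lemma Good.mf {A : Set E3} (h : Good A) : MF A := ⟨h.1, h.2.2⟩

lemma kern_meas : Measurable (Function.uncurry kern) := by
  unfold kern Function.uncurry
  fun_prop

lemma kern_meas_right (x : E3) : Measurable (kern x) := by
  unfold kern
  fun_prop

lemma kern_meas_int (B : Set E3) : Measurable fun x => ∫⁻ y in B, kern x y :=
  Measurable.lintegral_prod_right' (f := Function.uncurry kern) kern_meas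

lemma kern_comm (x y : E3) : kern x y = kern y x := by
  unfold kern; rw [norm_sub_rev]

lemma c1_lt_top : c1 < ⊤ := by
  have h : Integrable (fun x : E3 => (Iio (1:ℝ)).indicator (fun r => 1 / r) ‖x‖) := by
    rw [integrable_fun_norm_addHaar (volume : Measure E3)]
    have : IntegrableOn (fun y : ℝ => (Iio (1:ℝ)).indicator (fun _ => (1:ℝ)) y) (Ioi 0) := by
      rw [integrableOn_indicator_iff measurableSet_Iio]
      apply integrableOn_const (by rw [Iio_inter_Ioi]; simp)
    have hb : IntegrableOn (fun y : ℝ => (Iio (1:ℝ)).indicator (fun y => y) y) (Ioi 0) := by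
      refine Integrable.mono this ?_ ?_
      · exact (measurable_id.indicator measurableSet_Iio).aestronglyMeasurable
      · rw [ae_restrict_iff' measurableSet_Ioi]
        refine Eventually.of_forall fun y hy => ?_
        by_cases h : y ∈ Iio (1:ℝ)
        · simp only [indicator_of_mem h]
          have h1 : (0:ℝ) < y := hy
          have h2 : y < 1 := h
          rw [Real.norm_of_nonneg h1.le]; simp; linarith
        · simp [indicator_of_notMem h]
    refine hb.congr ?_
    rw [EventuallyEq, ae_restrict_iff' measurableSet_Ioi]
    refine Eventually.of_forall fun y hy => ?_
    have h1 : (0:ℝ) < y := hy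
    by_cases h : y ∈ Iio (1:ℝ)
    · simp only [indicator_of_mem h]
      simp
      field_simp
    · simp [indicator_of_notMem h]
  have h2 := h.hasFiniteIntegral
  unfold HasFiniteIntegral at h2
  refine lt_of_le_of_lt ?_ h2
  unfold c1
  rw [← lintegral_indicator measurableSet_ball]
  apply lintegral_mono
  intro x
  by_cases hx : x ∈ ball (0:E3) 1
  · rw [indicator_of_mem hx]
    have : ‖x‖ ∈ Iio (1:ℝ) := by simpa using hx
    simp only [indicator_of_mem this, kern, sub_zero]
    rw [← ofReal_norm, Real.norm_of_nonneg (by positivity)]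
  · rw [indicator_of_notMem hx]; exact zero_le

lemma pot_le (x : E3) (B : Set E3) : ∫⁻ y in B, kern x y ≤ c1 + volume B := by
  calc ∫⁻ y in B, kern x y ≤ ∫⁻ y in B ∩ ball x 1 ∪ B \ ball x 1, kern x y := by
        apply lintegral_mono_set; rw [inter_union_sdiff]
    _ ≤ (∫⁻ y in B ∩ ball x 1, kern x y) + ∫⁻ y in B \ ball x 1, kern x y := lintegral_union_le _ _ _
    _ ≤ (∫⁻ y in ball x 1, kern x y) + ∫⁻ y in B \ ball x 1, 1 := by
        gcongr ?_ + ?_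
        · exact lintegral_mono_set inter_subset_right
        · apply lintegral_mono_ae
          have hs : MeasurableSet {y : E3 | kern x y ≤ 1} := measurableSet_le (kern_meas_right x) measurable_const
          have : ∀ᵐ y ∂(volume.restrict (ball x 1)ᶜ), kern x y ≤ 1 := by
            rw [ae_restrict_iff' measurableSet_ball.compl]
            refine Eventually.of_forall fun y hy => ?_
            have : 1 ≤ ‖x - y‖ := by
              rw [mem_compl_iff, mem_ball, dist_comm, dist_eq_norm, not_lt] at hy; exact hy
            unfold kern
            rw [ENNReal.ofReal_le_one]
            rw [div_le_one (by linarith)]; exact this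
          exact ae_restrict_of_ae_restrict_of_subset (fun y hy => hy.2) this
    _ ≤ c1 + volume B := by
        gcongr ?_ + ?_
        · apply le_of_eq
          unfold c1
          rw [← lintegral_indicator measurableSet_ball, ← lintegral_indicator measurableSet_ball]
          rw [← lintegral_add_right_eq_self _ x]
          apply lintegral_congr
          intro z
          by_cases hz : z ∈ ball (0:E3) 1
          · rw [indicator_of_mem hz, indicator_of_mem (by simpa using hz)]
            unfold kern; congr 2; rw [sub_zero, ← norm_neg]; congr 1; abel
          · rw [indicator_of_notMem hz, indicator_of_notMem (by simpa using hz)]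
        · rw [lintegral_one, Measure.restrict_apply_univ]
          exact measure_mono sdiff_subset

lemma JJ_le (A B : Set E3) : JJ A B ≤ volume A * (c1 + volume B) := by
  unfold JJ
  calc _ ≤ ∫⁻ x in A, (c1 + volume B) := lintegral_mono fun x => pot_le x B
    _ = _ := by rw [setLIntegral_const, mul_comm]

lemma JJ_lt_top {A B : Set E3} (hA : volume A < ⊤) (hB : volume B < ⊤) : JJ A B < ⊤ :=
  (JJ_le A B).trans_lt (ENNReal.mul_lt_top hA (ENNReal.add_lt_top.2 ⟨c1_lt_top, hB⟩))

lemma JJ_comm (A B : Set E3) : JJ A B = JJ B A := by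
  unfold JJ
  rw [lintegral_lintegral_swap kern_meas.aemeasurable]
  refine lintegral_congr fun x => lintegral_congr fun y => kern_comm _ _

lemma JJ_mono {A A' B B' : Set E3} (hA : A ⊆ A') (hB : B ⊆ B') : JJ A B ≤ JJ A' B' := by
  unfold JJ
  exact (lintegral_mono_set hA).trans (lintegral_mono fun x => lintegral_mono_set hB)

lemma JJ_union {A A' B : Set E3} (hA' : MeasurableSet A') (hd : Disjoint A A') :
    JJ (A ∪ A') B = JJ A B + JJ A' B := lintegral_union hA' hd

lemma DD_nonneg {A B : Set E3} : 0 ≤ DD A B := ENNReal.toReal_nonneg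

lemma DD_comm (A B : Set E3) : DD A B = DD B A := by unfold DD; rw [JJ_comm]

lemma DD_mono {A A' B B' : Set E3} (hA' : volume A' < ⊤) (hB' : volume B' < ⊤)
    (hA : A ⊆ A') (hB : B ⊆ B') : DD A B ≤ DD A' B' :=
  ENNReal.toReal_mono (JJ_lt_top hA' hB').ne (JJ_mono hA hB)

lemma DD_union {A A' B : Set E3} (hA : MF A) (hA' : MF A') (hB : MF B) (hd : Disjoint A A') :
    DD (A ∪ A') B = DD A B + DD A' B := by
  unfold DD
  rw [JJ_union hA'.1 hd, ENNReal.toReal_add (JJ_lt_top hA.2 hB.2).ne (JJ_lt_top hA'.2 hB.2).ne]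

lemma MF.union {A B : Set E3} (hA : MF A) (hB : MF B) : MF (A ∪ B) :=
  ⟨hA.1.union hB.1, measure_union_lt_top hA.2 hB.2⟩

lemma MF.inter {A B : Set E3} (hA : MF A) (hB : MeasurableSet B) : MF (A ∩ B) :=
  ⟨hA.1.inter hB, (measure_mono inter_subset_left).trans_lt hA.2⟩

lemma MF.diff {A B : Set E3} (hA : MF A) (hB : MeasurableSet B) : MF (A \ B) :=
  ⟨hA.1.diff hB, (measure_mono sdiff_subset).trans_lt hA.2⟩

lemma DD_self_union {A A' : Set E3} (hA : MF A) (hA' : MF A') (hd : Disjoint A A') :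
    DD (A ∪ A') (A ∪ A') = DD A A + DD A' A' + 2 * DD A A' := by
  rw [DD_union hA hA' (hA.union hA') hd, DD_comm A, DD_comm A', DD_union hA hA' hA hd,
    DD_union hA hA' hA' hd, DD_comm A' A]
  ring

def cc1 : ℝ := c1.toReal

lemma DD_le {A B : Set E3} (hA : MF A) (hB : MF B) : DD A B ≤ vol A * (cc1 + vol B) := by
  unfold DD vol cc1
  rw [← ENNReal.toReal_add c1_lt_top.ne hB.2.ne, ← ENNReal.toReal_mul]
  exact ENNReal.toReal_mono (ENNReal.mul_lt_top hA.2 (ENNReal.add_lt_top.2 ⟨c1_lt_top, hB.2⟩)).ne (JJ_le A B)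

lemma DD_lower {A B : Set E3} (hA : MF A) (hB : MF B) {d : ℝ} (hd : 0 < d)
    (h : ∀ x ∈ A, ∀ y ∈ B, ‖x - y‖ ≤ d) : vol A * vol B / d ≤ DD A B := by
  have h1 : volume A * (volume B * ENNReal.ofReal (1/d)) ≤ JJ A B := by
    unfold JJ
    calc volume A * (volume B * ENNReal.ofReal (1/d)) = ∫⁻ x in A, (volume B * ENNReal.ofReal (1/d)) := by
          rw [setLIntegral_const, mul_comm]
      _ ≤ _ := by
          apply setLIntegral_mono (kern_meas_int B)
          intro x hx
          calc volume B * ENNReal.ofReal (1/d) = ∫⁻ y in B, ENNReal.ofReal (1/d) := by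
                rw [setLIntegral_const, mul_comm]
            _ ≤ _ := by
                apply setLIntegral_mono_ae (kern_meas_right x).aemeasurable
                have : ∀ᵐ y : E3, y ≠ x := by
                  simp [ae_iff]
                filter_upwards [this] with y hy hyB
                unfold kern
                apply ENNReal.ofReal_le_ofReal
                apply one_div_le_one_div_of_le
                · rw [norm_pos_iff, sub_ne_zero]; exact fun h => hy h.symm
                · exact h x hx y hyB
  have h2 := ENNReal.toReal_mono (JJ_lt_top hA.2 hB.2).ne h1
  rw [ENNReal.toReal_mul, ENNReal.toReal_mul, ENNReal.toReal_ofReal (by positivity)] at h2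
  unfold vol DD
  refine le_trans (le_of_eq ?_) h2
  ring

lemma II_eq {Ω : Set E3} (h : volume Ω < ⊤) : II Ω = per Ω + (1/2) * DD Ω Ω := by
  unfold II DD JJ
  congr 2
  have h1 : ∀ x, ∫ y in Ω, 1 / ‖x - y‖ = (∫⁻ y in Ω, kern x y).toReal := by
    intro x
    rw [integral_eq_lintegral_of_nonneg_ae]
    · rfl
    · exact Eventually.of_forall fun y => by positivity
    · exact Measurable.aestronglyMeasurable (by fun_prop)
  simp only [h1]
  rw [integral_toReal (kern_meas_int Ω).aemeasurable]
  exact Eventually.of_forall fun x => (pot_le x Ω).trans_lt (ENNReal.add_lt_top.2 ⟨c1_lt_top, h⟩)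

lemma per_le_II {Ω : Set E3} (h : volume Ω < ⊤) : per Ω ≤ II Ω := by
  rw [II_eq h]; have := DD_nonneg (A := Ω) (B := Ω); linarith

lemma II_nonneg {Ω : Set E3} (h : volume Ω < ⊤) : 0 ≤ II Ω := per_nonneg.trans (per_le_II h)

lemma vol_nonneg {Ω : Set E3} : 0 ≤ vol Ω := ENNReal.toReal_nonneg

lemma muStar_nonneg : 0 ≤ muStar := by
  unfold muStar
  apply Real.sInf_nonneg
  rintro t ⟨Ω, -, -, -, h, rfl⟩
  exact div_nonneg (II_nonneg h) vol_nonneg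

lemma muStar_le {Ω : Set E3} (h : Good Ω) : muStar * vol Ω ≤ II Ω := by
  by_cases h0 : volume Ω = 0
  · have : vol Ω = 0 := by simp [vol, h0]
    rw [this, mul_zero]; exact II_nonneg h.2.2
  · have h1 : muStar ≤ II Ω / vol Ω := by
      unfold muStar
      refine csInf_le ⟨0, ?_⟩ ⟨Ω, h.1, h.2.1, pos_iff_ne_zero.2 h0, h.2.2, rfl⟩
      rintro t ⟨Ω, -, -, -, h, rfl⟩
      exact div_nonneg (II_nonneg h) vol_nonneg
    have h2 : 0 < vol Ω := ENNReal.toReal_pos h0 h.2.2.ne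
    rwa [le_div_iff₀ h2] at h1

/-- excess energy -/
def EX (Ω : Set E3) : ℝ := II Ω - muStar * vol Ω

lemma EX_nonneg {Ω : Set E3} (h : Good Ω) : 0 ≤ EX Ω := by
  unfold EX; linarith [muStar_le h]

lemma EX_eq {Ω : Set E3} (h : volume Ω < ⊤) : EX Ω = per Ω + (1/2) * DD Ω Ω - muStar * vol Ω := by
  unfold EX; rw [II_eq h]

lemma vol_union {A B : Set E3} (hA : MF A) (hB : MF B) (hd : Disjoint A B) :
    vol (A ∪ B) = vol A + vol B := by
  unfold vol
  rw [measure_union hd hB.1, ENNReal.toReal_add hA.2.ne hB.2.ne]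

/-- cut estimate for the excess -/
lemma EX_cut {Ω H : Set E3} {q : ℝ} (h : Good Ω) (hc : CutBy Ω H q) :
    Good (Ω ∩ H) ∧ Good (Ω \ H) ∧
    EX (Ω ∩ H) + EX (Ω \ H) + DD (Ω ∩ H) (Ω \ H) ≤ EX Ω + q := by
  obtain ⟨h1, h2, h3⟩ := hc Ω Subset.rfl h
  refine ⟨h1, h2, ?_⟩
  have hd : Disjoint (Ω ∩ H) (Ω \ H) := disjoint_sdiff_inter.symm
  have hu : Ω ∩ H ∪ Ω \ H = Ω := inter_union_sdiff Ω H
  have e1 := DD_self_union h1.mf h2.mf hd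
  have e2 := vol_union h1.mf h2.mf hd
  rw [hu] at e1 e2
  rw [EX_eq h.2.2, EX_eq h1.2.2, EX_eq h2.2.2, e1, e2]
  linarith

lemma shift_shift (a : E3) (Ω : Set E3) : shift (-a) (shift a Ω) = Ω := by
  ext x; simp [shift]

lemma isTest_trans {φ : E3 → E3} (h : IsTest φ) (a : E3) : IsTest (fun x => φ (x - a)) := by
  refine ⟨h.1.comp (contDiff_id.sub contDiff_const), ?_, fun x => h.2.2 _⟩
  have := h.2.1.comp_homeomorph (Homeomorph.subRight a)
  exact this

lemma divg_trans (φ : E3 → E3) (a x : E3) : divg (fun x => φ (x - a)) x = divg φ (x - a) := by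
  unfold divg
  rw [fderiv_comp_sub]

lemma shift_per_le {Ω : Set E3} (h : Good Ω) (a : E3) :
    HasFinPer (shift a Ω) ∧ per (shift a Ω) ≤ per Ω := by
  apply per_le
  intro φ hφ
  rw [shift_setIntegral a h.1]
  have := le_per h.2.1 (isTest_trans hφ a)
  simpa only [divg_trans] using this

lemma shift_good {Ω : Set E3} (h : Good Ω) (a : E3) : Good (shift a Ω) :=
  ⟨shift_meas h.1, (shift_per_le h a).1, by rw [shift_volume]; exact h.2.2⟩

lemma shift_per {Ω : Set E3} (h : Good Ω) (a : E3) : per (shift a Ω) = per Ω := by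
  apply le_antisymm (shift_per_le h a).2
  have := (shift_per_le (shift_good h a) (-a)).2
  rwa [shift_shift] at this

lemma shift_vol (a : E3) (Ω : Set E3) : vol (shift a Ω) = vol Ω := by
  unfold vol; rw [shift_volume]

lemma shift_setLIntegral (a : E3) {Ω : Set E3} (hm : MeasurableSet Ω) (f : E3 → ℝ≥0∞) :
    ∫⁻ x in shift a Ω, f x = ∫⁻ x in Ω, f (x - a) := by
  rw [← lintegral_indicator (shift_meas hm), ← lintegral_indicator hm,
    ← lintegral_sub_right_eq_self _ a]
  congr 1
  ext x
  by_cases hx : x ∈ Ω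
  · rw [indicator_of_mem hx, indicator_of_mem]
    simpa [shift] using hx
  · rw [indicator_of_notMem hx, indicator_of_notMem]
    simpa [shift] using hx

lemma shift_DD {A B : Set E3} (hA : MeasurableSet A) (hB : MeasurableSet B) (a : E3) :
    DD (shift a A) (shift a B) = DD A B := by
  unfold DD JJ
  rw [shift_setLIntegral a hA]
  simp only [shift_setLIntegral a hB]
  simp only [kern, sub_sub_sub_cancel_right]

lemma shift_EX {Ω : Set E3} (h : Good Ω) (a : E3) : EX (shift a Ω) = EX Ω := by
  rw [EX_eq (shift_good h a).2.2, EX_eq h.2.2, shift_per h, shift_DD h.1 h.1, shift_vol]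

lemma CutBy.mono {Ω Ω' H : Set E3} {q q' : ℝ} (h : CutBy Ω H q) (hs : Ω' ⊆ Ω) (hq : q ≤ q') :
    CutBy Ω' H q' := by
  intro X hX hg
  obtain ⟨h1, h2, h3⟩ := h X (hX.trans hs) hg
  exact ⟨h1, h2, by linarith⟩

def usl (a x : E3) : ℝ := Real.sqrt (1 + ‖x - a‖ ^ 2)

lemma usl_lt_iff {a x : E3} {t : ℝ} (ht : 1 ≤ t) :
    usl a x < t ↔ x ∈ ball a (Real.sqrt (t ^ 2 - 1)) := by
  unfold usl
  rw [Real.sqrt_lt' (by linarith), mem_ball, dist_eq_norm, Real.lt_sqrt (norm_nonneg _)]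
  constructor <;> intro h <;> linarith

lemma usl_ball {a : E3} {t : ℝ} (ht : 1 ≤ t) :
    {x | usl a x < t} = ball a (Real.sqrt (t ^ 2 - 1)) := by
  ext x; exact usl_lt_iff ht

lemma norm_le_usl (a x : E3) : ‖x - a‖ ≤ usl a x := by
  unfold usl; apply Real.le_sqrt_of_sq_le; linarith

lemma usl_le (a x : E3) : usl a x ≤ 1 + ‖x - a‖ := by
  unfold usl; rw [Real.sqrt_le_left (by positivity)]; nlinarith [norm_nonneg (x - a)]

lemma one_le_usl (a x : E3) : 1 ≤ usl a x := by
  unfold usl; rw [Real.one_le_sqrt]; nlinarith [norm_nonneg (x - a)]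

lemma usl_lip (a : E3) : LipschitzWith 1 (usl a) := by
  apply LipschitzWith.of_le_add
  intro x y
  have h1 := norm_le_usl a x
  have h2 := norm_le_usl a y
  have h3 : usl a x ^ 2 = 1 + ‖x - a‖ ^ 2 := Real.sq_sqrt (by positivity)
  have h4 : usl a y ^ 2 = 1 + ‖y - a‖ ^ 2 := Real.sq_sqrt (by positivity)
  have h5 : ‖x - a‖ ≤ ‖y - a‖ + dist x y := by
    rw [dist_eq_norm]
    calc ‖x - a‖ = ‖(y - a) + (x - y)‖ := by congr 1; abel
      _ ≤ _ := norm_add_le _ _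
  have h6 := one_le_usl a x
  have h7 := one_le_usl a y
  have h8 : 0 ≤ dist x y := dist_nonneg
  by_contra hc
  push Not at hc
  have h9 : (usl a y + dist x y) ^ 2 < usl a x ^ 2 := by
    apply pow_lt_pow_left₀ hc (by linarith) (by norm_num)
  have h10 : ‖x - a‖ ^ 2 ≤ (‖y - a‖ + dist x y) ^ 2 := by
    apply pow_le_pow_left₀ (norm_nonneg _) h5
  nlinarith [norm_nonneg (y - a)]

lemma usl_slice (a : E3) : Slice (usl a) := by
  refine ⟨?_, fun x => ?_, fun t => ?_⟩
  · unfold usl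
    apply ContDiff.sqrt
    · exact contDiff_const.add ((contDiff_id.sub contDiff_const).norm_sq ℝ)
    · intro x; positivity
  · exact_mod_cast norm_fderiv_le_of_lipschitz ℝ (usl_lip a)
  · by_cases ht : 1 ≤ t
    · have : {x | usl a x = t} ⊆ sphere a (Real.sqrt (t ^ 2 - 1)) := by
        intro x hx
        have hx : usl a x = t := hx
        rw [mem_sphere, dist_eq_norm]
        have h3 : usl a x ^ 2 = 1 + ‖x - a‖ ^ 2 := Real.sq_sqrt (by positivity)
        rw [← hx, h3, add_sub_cancel_left, Real.sqrt_sq (norm_nonneg _)]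
      exact measure_mono_null this (Measure.addHaar_sphere _ _ _)
    · have : {x | usl a x = t} = ∅ := by
        ext x; simp only [mem_ofPred_eq, mem_empty_iff_false, iff_false]
        intro h; exact ht (h ▸ one_le_usl a x)
      rw [this]; simp

lemma rad_le {t : ℝ} (ht : 1 ≤ t) : Real.sqrt (t ^ 2 - 1) ≤ t := by
  rw [Real.sqrt_le_left (by linarith)]; linarith

lemma le_rad {t : ℝ} (ht : 1 ≤ t) : t - 1 ≤ Real.sqrt (t ^ 2 - 1) := by
  apply Real.le_sqrt_of_sq_le; nlinarith

lemma KT_nn : 0 ≤ KT := KT_pos.le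

/-- cutting with a ball -/
lemma ball_cut {Ω : Set E3} (h : MF Ω) (a : E3) {r0 r1 : ℝ} (h0 : 0 ≤ r0) (h1 : r0 + 1 < r1) :
    ∃ r, r0 ≤ r ∧ r ≤ r1 ∧ CutBy Ω (ball a r)
      (2 * KT * vol (Ω ∩ (ball a r1 \ ball a r0)) / (r1 - 1 - r0)) := by
  obtain ⟨t, ht1, ht2, hc⟩ := cut_exists (usl_slice a) h.1 h.2 (a := r0 + 1) (b := r1) h1
  have ht : 1 ≤ t := by linarith
  refine ⟨Real.sqrt (t ^ 2 - 1), by linarith [le_rad ht], by linarith [rad_le ht], ?_⟩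
  rw [usl_ball ht] at hc
  refine hc.mono Subset.rfl ?_
  rw [show r1 - (r0 + 1) = r1 - 1 - r0 by ring]
  apply div_le_div_of_nonneg_right _ (by linarith)
  apply mul_le_mul_of_nonneg_left _ (by linarith [KT_nn])
  apply vol_mono _ (h.inter (measurableSet_ball.diff measurableSet_ball)).2
  rintro x ⟨hx, hx1, hx2⟩
  refine ⟨hx, ?_, ?_⟩
  · rw [mem_ball, dist_eq_norm]; linarith [norm_le_usl a x]
  · rw [mem_ball, dist_eq_norm]; linarith [usl_le a x]

lemma coord_slice (i : Fin 3) : Slice (fun x : E3 => x i) := by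
  refine ⟨?_, fun x => ?_, fun t => ?_⟩
  · exact (EuclideanSpace.proj (𝕜 := ℝ) i).contDiff
  · have : LipschitzWith 1 (fun x : E3 => x i) := by
      apply LipschitzWith.of_dist_le_mul
      intro x y
      rw [dist_eq_norm, dist_eq_norm, NNReal.coe_one, one_mul]
      exact PiLp.norm_apply_le (x - y) i
    exact_mod_cast norm_fderiv_le_of_lipschitz ℝ this
  · have h := (EuclideanSpace.volume_preserving_symm_measurableEquiv_toLp (Fin 3))
    have h2 := h.measure_preimage (s := {f : Fin 3 → ℝ | f i = t})
      (measurableSet_eq_fun (measurable_pi_apply i) measurable_const).nullMeasurableSet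
    have h3 : volume {f : Fin 3 → ℝ | f i = t} = 0 := by
      rw [volume_pi]; exact Measure.pi_hyperplane (α := fun _ : Fin 3 => ℝ) (fun _ => volume) i t
    rw [h3] at h2
    exact h2

lemma good_empty : Good ∅ := by
  refine ⟨MeasurableSet.empty, (per_le (b := 0) ?_).1, by simp⟩
  intro φ _; simp

def vb (r : ℝ) : ℝ := vol (ball (0:E3) r)

lemma vb_pos {r : ℝ} (hr : 0 < r) : 0 < vb r :=
  ENNReal.toReal_pos (ball_vol_pos hr).ne' (ball_vol_fin 0 r).ne

lemma vb_half {r : ℝ} : vb (r / 2) = vb r / 8 := by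
  unfold vb vol
  have := Measure.addHaar_ball_mul (volume : Measure E3) 0 (r := 1/2) (by norm_num) r
  rw [show (1/2:ℝ) * r = r / 2 by ring] at this
  rw [this, ENNReal.toReal_mul, finrank_euclideanSpace, Fintype.card_fin,
    ENNReal.toReal_ofReal (by norm_num)]
  ring

lemma vol_le_iff {A : Set E3} (hA : volume A < ⊤) {r : ℝ} :
    volume A ≤ volume (ball (0:E3) r) / 2 ↔ vol A ≤ vb r / 2 := by
  unfold vb vol
  have hb : volume (ball (0:E3) r) / 2 ≠ ⊤ := ENNReal.div_ne_top (ball_vol_fin 0 r).ne (by norm_num)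
  rw [← ENNReal.toReal_le_toReal hA.ne hb, ENNReal.toReal_div]
  simp

lemma iso_small {Ω : Set E3} (h : Good Ω) {r : ℝ} (hr : 0 < r) (hv : vol Ω ≤ vb r / 2) :
    vol Ω ≤ 2 * r * per Ω := by
  have := iso_local h MeasurableSet.empty hr (by
    intro x _
    exact (measure_mono inter_subset_right).trans ((vol_le_iff h.2.2).2 hv))
  simpa using this

lemma EX_small {Ω : Set E3} (h : Good Ω) {r : ℝ} (hr : 0 < r) (hμ : 4 * r * muStar ≤ 1)
    (hv : vol Ω ≤ vb r / 2) : vol Ω ≤ 4 * r * EX Ω := by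
  have h1 := iso_small h hr hv
  rw [EX_eq h.2.2]
  have h2 := DD_nonneg (A := Ω) (B := Ω)
  have h3 := vol_nonneg (Ω := Ω)
  have h4 : 4 * r * muStar * vol Ω ≤ 1 * vol Ω := mul_le_mul_of_nonneg_right hμ h3
  have h5 : 0 ≤ r * DD Ω Ω := by positivity
  nlinarith

def rr0 : ℝ := 1 / (4 * (muStar + 1))

lemma rr0_pos : 0 < rr0 := by
  unfold rr0; have := muStar_nonneg; positivity

lemma rr0_mu : 4 * rr0 * muStar ≤ 1 := by
  unfold rr0; have := muStar_nonneg
  rw [show 4 * (1 / (4 * (muStar + 1))) * muStar = muStar / (muStar + 1) by field_simp]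
  rw [div_le_one (by linarith)]; linarith

lemma IsMinimizer.good {Ω : Set E3} (h : IsMinimizer Ω) : Good Ω := ⟨h.1, h.2.1, h.2.2.2.1⟩
lemma IsMinimizer.ex {Ω : Set E3} (h : IsMinimizer Ω) : EX Ω = 0 := by
  unfold EX; rw [h.2.2.2.2]; ring
lemma IsMinimizer.vol_pos {Ω : Set E3} (h : IsMinimizer Ω) : 0 < vol Ω :=
  ENNReal.toReal_pos h.2.2.1.ne' h.2.2.2.1.ne

lemma isMinimizer_of {Ω : Set E3} (h : Good Ω) (hv : 0 < vol Ω) (he : EX Ω ≤ 0) : IsMinimizer Ω := by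
  refine ⟨h.1, h.2.1, ?_, h.2.2, ?_⟩
  · exact (ENNReal.toReal_pos_iff.1 hv).1
  · unfold EX at he; linarith [muStar_le h]

lemma IsMinimizer.mass_lower {Ω : Set E3} (h : IsMinimizer Ω) : vb rr0 / 2 ≤ vol Ω := by
  by_contra hc
  push Not at hc
  have := EX_small h.good rr0_pos rr0_mu hc.le
  rw [h.ex] at this
  linarith [h.vol_pos]

lemma tail_tendsto {Ω : Set E3} (h : MF Ω) :
    Tendsto (fun n : ℕ => vol (Ω \ ball 0 (n:ℝ))) atTop (𝓝 0) := by
  have h1 : Tendsto (fun n : ℕ => volume (Ω \ ball 0 (n:ℝ))) atTop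
      (𝓝 (volume (⋂ n : ℕ, Ω \ ball 0 (n:ℝ)))) := by
    apply tendsto_measure_iInter_atTop
    · intro n; exact (h.diff measurableSet_ball).1.nullMeasurableSet
    · intro a b hab
      apply sdiff_subset_sdiff_right
      exact ball_subset_ball (by exact_mod_cast hab)
    · exact ⟨0, (h.diff measurableSet_ball).2.ne⟩
  have h2 : (⋂ n : ℕ, Ω \ ball 0 (n:ℝ)) = ∅ := by
    ext x
    simp only [mem_iInter, mem_empty_iff_false, iff_false, not_forall]
    obtain ⟨n, hn⟩ := exists_nat_gt ‖x‖
    refine ⟨n, fun hx => hx.2 ?_⟩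
    simpa using hn
  rw [h2, measure_empty] at h1
  have := (ENNReal.tendsto_toReal ENNReal.zero_ne_top).comp h1
  rw [ENNReal.toReal_zero] at this
  exact this

lemma usl_meas (a : E3) (t : ℝ) : MeasurableSet {x | usl a x < t} :=
  measurableSet_lt (usl_slice a).1.continuous.measurable measurable_const

lemma decay_step {Ω : Set E3} (h : Good Ω) (he : EX Ω = 0) {ρ T : ℝ} (hρ : 0 < ρ)
    (hμ : 4 * ρ * muStar ≤ 1) (hT : vol (Ω \ {x | usl 0 x < T}) ≤ vb ρ / 2) :
    vol (Ω \ {x | usl 0 x < T + 64 * KT * ρ}) ≤ vb (ρ / 2) / 2 := by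
  have hK := KT_pos
  obtain ⟨t, ht1, ht2, hc⟩ := cut_exists (usl_slice 0) h.1 h.2.2 (a := T) (b := T + 64 * KT * ρ)
    (by nlinarith [mul_pos hK hρ])
  obtain ⟨g1, g2, h3⟩ := EX_cut h hc
  have hm : ∀ s, MF (Ω \ {x | usl 0 x < s}) := fun s => h.mf.diff (usl_meas 0 s)
  have hv1 : vol (Ω \ {x | usl 0 x < t}) ≤ vol (Ω \ {x | usl 0 x < T}) := by
    apply vol_mono _ (hm T).2
    apply sdiff_subset_sdiff_right
    intro x hx; exact lt_of_lt_of_le hx ht1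
  have hv2 : vol (Ω \ {x | usl 0 x < T + 64 * KT * ρ}) ≤ vol (Ω \ {x | usl 0 x < t}) := by
    apply vol_mono _ (hm t).2
    apply sdiff_subset_sdiff_right
    intro x hx; exact lt_of_lt_of_le hx ht2
  have hv3 : vol (Ω ∩ {x | T ≤ usl 0 x ∧ usl 0 x < T + 64 * KT * ρ}) ≤ vol (Ω \ {x | usl 0 x < T}) := by
    apply vol_mono _ (hm T).2
    rintro x ⟨hx, hx1, hx2⟩
    exact ⟨hx, not_lt.2 hx1⟩
  have h4 := EX_small g2 hρ hμ (hv1.trans hT)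
  have h5 := EX_nonneg g1
  have h6 := DD_nonneg (A := Ω ∩ {x | usl 0 x < t}) (B := Ω \ {x | usl 0 x < t})
  rw [he, add_sub_cancel_left, zero_add] at h3
  have h7 : 2 * KT * vol (Ω ∩ {x | T ≤ usl 0 x ∧ usl 0 x < T + 64 * KT * ρ}) / (64 * KT * ρ)
      ≤ vol (Ω \ {x | usl 0 x < T}) / (32 * ρ) := by
    rw [div_le_div_iff₀ (by positivity) (by positivity)]
    have : 0 ≤ 64 * KT * ρ := by positivity
    nlinarith
  have h8 : EX (Ω \ {x | usl 0 x < t}) ≤ vol (Ω \ {x | usl 0 x < T}) / (32 * ρ) := by linarith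
  have h9 : 4 * ρ * EX (Ω \ {x | usl 0 x < t}) ≤ 4 * ρ * (vol (Ω \ {x | usl 0 x < T}) / (32 * ρ)) :=
    mul_le_mul_of_nonneg_left h8 (by positivity)
  have h10 : 4 * ρ * (vol (Ω \ {x | usl 0 x < T}) / (32 * ρ)) = vol (Ω \ {x | usl 0 x < T}) / 8 := by
    field_simp; ring
  rw [vb_half]
  linarith

lemma IsMinimizer.bounded {Ω : Set E3} (h : IsMinimizer Ω) :
    ∃ R0, 0 < R0 ∧ volume (Ω \ ball 0 R0) = 0 := by
  have hK := KT_pos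
  have hr := rr0_pos
  obtain ⟨n, hn⟩ := ((tail_tendsto h.good.mf).eventually_lt_const
    (show (0:ℝ) < vb rr0 / 2 by linarith [vb_pos rr0_pos])).exists
  set T0 : ℝ := n + 1 with hT0
  have h0 : vol (Ω \ {x | usl 0 x < T0}) ≤ vb rr0 / 2 := by
    refine le_trans (vol_mono ?_ (h.good.mf.diff measurableSet_ball).2) hn.le
    apply sdiff_subset_sdiff_right
    intro x hx
    have h1 := usl_le 0 x
    rw [sub_zero] at h1
    have h2 : ‖x‖ < n := by simpa using hx
    show usl 0 x < T0
    linarith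
  have hk : ∀ k : ℕ, vol (Ω \ {x | usl 0 x < T0 + 128 * KT * rr0 * (1 - (1/2)^k)}) ≤
      vb (rr0 / 2^k) / 2 := by
    intro k
    induction k with
    | zero => simpa using h0
    | succ k ih =>
      have hp : (1:ℝ) ≤ 2 ^ k := one_le_pow₀ (by norm_num)
      have hle : rr0 / 2^k ≤ rr0 := div_le_self hr.le hp
      have := decay_step h.good h.ex (ρ := rr0 / 2^k) (by positivity) (by
        refine le_trans ?_ rr0_mu
        have := muStar_nonneg
        gcongr) ih
      rw [show rr0 / 2^(k+1) = rr0 / 2^k / 2 by rw [pow_succ]; field_simp]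
      have e : T0 + 128 * KT * rr0 * (1 - (1/2)^(k+1)) =
          T0 + 128 * KT * rr0 * (1 - (1 / 2) ^ k) + 64 * KT * (rr0 / 2 ^ k) := by
        rw [one_div, inv_pow, inv_pow, pow_succ]
        field_simp
        ring
      rw [e]
      exact this
  have hvb : ∀ k : ℕ, vb (rr0 / 2^k) = vb rr0 * (1/8)^k := by
    intro k
    induction k with
    | zero => simp
    | succ k ih =>
      rw [show rr0 / 2^(k+1) = rr0 / 2^k / 2 by rw [pow_succ]; field_simp, vb_half, ih]
      ring
  set R0 := T0 + 128 * KT * rr0 with hR0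
  have hT1 : 1 ≤ T0 := by rw [hT0]; linarith [(Nat.cast_nonneg n : (0:ℝ) ≤ n)]
  have hpos : 0 < R0 := by positivity
  refine ⟨R0, hpos, ?_⟩
  have hz : vol (Ω \ ball 0 R0) ≤ 0 := by
    have hlim : Tendsto (fun k : ℕ => vb rr0 * (1/8:ℝ)^k / 2) atTop (𝓝 0) := by
      have := ((tendsto_pow_atTop_nhds_zero_of_lt_one (r := (1/8:ℝ)) (by norm_num)
        (by norm_num)).const_mul (vb rr0)).div_const 2
      simpa using this
    refine ge_of_tendsto' hlim fun k => ?_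
    rw [← hvb]
    refine le_trans (vol_mono ?_ (h.good.mf.diff (usl_meas 0 _)).2) (hk k)
    apply sdiff_subset_sdiff_right
    intro x hx
    have h1 := norm_le_usl 0 x
    have h2 : usl 0 x < T0 + 128 * KT * rr0 * (1 - (1/2)^k) := hx
    have h3 : (0:ℝ) ≤ 128 * KT * rr0 * (1/2)^k := by positivity
    rw [mem_ball, dist_eq_norm]
    linarith
  have := le_antisymm hz vol_nonneg
  unfold vol at this
  exact ((ENNReal.toReal_eq_zero_iff _).1 this).resolve_right (h.good.mf.diff measurableSet_ball).2.ne

lemma coord_meas (i : Fin 3) : Measurable (fun x : E3 => x i) := (coord_slice i).1.continuous.measurable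

lemma half_bound {Ω : Set E3} (h : IsMinimizer Ω) (i : Fin 3) (t : ℝ) :
    JJ (Ω ∩ {x | x i < t}) (Ω ∩ {x | t + 1 ≤ x i}) ≤
      ENNReal.ofReal (2 * KT) * volume (Ω ∩ {x | t ≤ x i ∧ x i < t + 1}) := by
  have hg := h.good
  obtain ⟨s, hs1, hs2, hc⟩ := cut_exists (coord_slice i) hg.1 hg.2.2 (a := t) (b := t + 1) (by linarith)
  obtain ⟨g1, g2, h3⟩ := EX_cut hg hc
  have h4 := EX_nonneg g1
  have h5 := EX_nonneg g2
  rw [h.ex] at h3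
  have hm : MeasurableSet {x : E3 | t ≤ x i ∧ x i < t + 1} :=
    (measurableSet_le measurable_const (coord_meas i)).inter (measurableSet_lt (coord_meas i) measurable_const)
  have h6 : DD (Ω ∩ {x | x i < s}) (Ω \ {x | x i < s}) ≤ 2 * KT * vol (Ω ∩ {x | t ≤ x i ∧ x i < t + 1}) := by
    have : t + 1 - t = 1 := by ring
    rw [this, div_one] at h3
    linarith
  calc JJ (Ω ∩ {x | x i < t}) (Ω ∩ {x | t + 1 ≤ x i}) ≤ JJ (Ω ∩ {x | x i < s}) (Ω \ {x | x i < s}) := by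
        apply JJ_mono
        · rintro x ⟨hx, hx1⟩; exact ⟨hx, lt_of_lt_of_le hx1 hs1⟩
        · rintro x ⟨hx, hx1⟩
          exact ⟨hx, not_lt.2 (hs2.trans hx1)⟩
    _ = ENNReal.ofReal (DD (Ω ∩ {x | x i < s}) (Ω \ {x | x i < s})) :=
        (ENNReal.ofReal_toReal (JJ_lt_top g1.2.2 g2.2.2).ne).symm
    _ ≤ ENNReal.ofReal (2 * KT * vol (Ω ∩ {x | t ≤ x i ∧ x i < t + 1})) := ENNReal.ofReal_le_ofReal h6
    _ = _ := by
        rw [ENNReal.ofReal_mul (by linarith [KT_nn]), vol, ENNReal.ofReal_toReal (hg.mf.inter hm).2.ne]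

def AA (i : Fin 3) (x y : E3) : ℝ≥0∞ := ENNReal.ofReal (y i - 1 - x i) * kern x y

lemma AA_meas (i : Fin 3) : Measurable (Function.uncurry (AA i)) := by
  have h1 : Measurable (fun p : E3 × E3 => ENNReal.ofReal (p.2 i - 1 - p.1 i)) := by
    apply Measurable.ennreal_ofReal
    exact (((coord_meas i).comp measurable_snd).sub measurable_const).sub ((coord_meas i).comp measurable_fst)
  exact h1.mul kern_meas

lemma WW_meas_gen {X : Type*} [MeasurableSpace X] {c : X → ℝ} (hc : Measurable c)
    {k : X → X → ℝ≥0∞} (hk : Measurable (Function.uncurry k)) : Measurable (fun p : (ℝ × X) × X =>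
    (Ioc (c p.1.2) (c p.2 - 1)).indicator (fun _ => k p.1.2 p.2) p.1.1) := by
  have e : (fun p : (ℝ × X) × X =>
    (Ioc (c p.1.2) (c p.2 - 1)).indicator (fun _ => k p.1.2 p.2) p.1.1) =
      ({p : (ℝ × X) × X | c p.1.2 < p.1.1} ∩ {p : (ℝ × X) × X | p.1.1 ≤ c p.2 - 1}).indicator
        (fun p => k p.1.2 p.2) := by
    ext p
    simp only [indicator, mem_Ioc, mem_inter_iff, mem_ofPred_eq]
  rw [e]
  have hk1 : Measurable (fun p : (ℝ × X) × X => (p.1.2, p.2)) := by fun_prop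
  have hk2 : Measurable (fun p : (ℝ × X) × X => k p.1.2 p.2) := hk.comp hk1
  have h1 : Measurable (fun p : (ℝ × X) × X => c p.1.2) := by fun_prop
  have h2 : Measurable (fun p : (ℝ × X) × X => p.1.1) := by fun_prop
  have h3 : Measurable (fun p : (ℝ × X) × X => c p.2 - 1) := by fun_prop
  exact hk2.indicator ((measurableSet_lt h1 h2).inter (measurableSet_le h2 h3))

lemma AA_bound {Ω : Set E3} (h : IsMinimizer Ω) (i : Fin 3) :
    ∫⁻ x in Ω, ∫⁻ y in Ω, AA i x y ≤ ENNReal.ofReal (2 * KT) * volume Ω := by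
  have hg := h.good
  set W : ℝ → E3 → E3 → ℝ≥0∞ := fun t x y => (Ioc (x i) (y i - 1)).indicator (fun _ => kern x y) t with hW
  have hWm : Measurable (fun p : (ℝ × E3) × E3 => W p.1.1 p.1.2 p.2) :=
    WW_meas_gen (coord_meas i) kern_meas
  have e1 : ∀ t : ℝ, JJ (Ω ∩ {x | x i < t}) (Ω ∩ {x | t + 1 ≤ x i}) = ∫⁻ x in Ω, ∫⁻ y in Ω, W t x y := by
    intro t
    unfold JJ
    rw [inter_comm Ω, ← setLIntegral_indicator (measurableSet_lt (coord_meas i) measurable_const)]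
    apply lintegral_congr
    intro x
    by_cases hx : x i < t
    · rw [indicator_of_mem (show x ∈ {x : E3 | x i < t} from hx), inter_comm Ω,
        ← setLIntegral_indicator (measurableSet_le measurable_const (coord_meas i))]
      apply lintegral_congr
      intro y
      by_cases hy : t + 1 ≤ y i
      · rw [indicator_of_mem (show y ∈ {x : E3 | t + 1 ≤ x i} from hy)]
        simp only [hW]
        rw [indicator_of_mem (show t ∈ Ioc (x i) (y i - 1) from ⟨hx, by linarith⟩)]
      · rw [indicator_of_notMem (show y ∉ {x : E3 | t + 1 ≤ x i} from hy)]
        simp only [hW]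
        rw [indicator_of_notMem]
        intro hh; exact hy (by linarith [hh.2])
    · rw [indicator_of_notMem (show x ∉ {x : E3 | x i < t} from hx)]
      symm
      rw [lintegral_eq_zero_iff']
      · refine Eventually.of_forall fun y => ?_
        simp only [hW]
        rw [indicator_of_notMem]
        · rfl
        · intro hh; exact hx hh.1
      · exact (hWm.comp (measurable_const.prodMk measurable_id : Measurable fun y : E3 => ((t, x), y))).aemeasurable
  have e2 : ∫⁻ t, ∫⁻ x in Ω, ∫⁻ y in Ω, W t x y = ∫⁻ x in Ω, ∫⁻ y in Ω, AA i x y := by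
    rw [lintegral_lintegral_swap]
    · apply lintegral_congr
      intro x
      rw [lintegral_lintegral_swap]
      · apply lintegral_congr
        intro y
        simp only [hW]
        rw [lintegral_indicator measurableSet_Ioc, setLIntegral_const, Real.volume_Ioc, mul_comm]
        rfl
      · exact (hWm.comp (((measurable_fst.prodMk measurable_const).prodMk measurable_snd) :
          Measurable fun p : ℝ × E3 => ((p.1, x), p.2))).aemeasurable
    · exact (Measurable.lintegral_prod_right' hWm).aemeasurable
  have e3 : ∫⁻ t : ℝ, volume (Ω ∩ {x | t ≤ x i ∧ x i < t + 1}) = volume Ω := by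
    have hm : Measurable (fun p : ℝ × E3 => {p : ℝ × E3 | p.1 ≤ p.2 i ∧ p.2 i < p.1 + 1}.indicator (fun _ => (1:ℝ≥0∞)) p) := by
      apply measurable_const.indicator
      apply MeasurableSet.inter
      · exact measurableSet_le measurable_fst ((coord_meas i).comp measurable_snd)
      · exact measurableSet_lt ((coord_meas i).comp measurable_snd) (measurable_fst.add measurable_const)
    have : ∀ t : ℝ, volume (Ω ∩ {x | t ≤ x i ∧ x i < t + 1}) =
        ∫⁻ x in Ω, {p : ℝ × E3 | p.1 ≤ p.2 i ∧ p.2 i < p.1 + 1}.indicator (fun _ => (1:ℝ≥0∞)) (t, x) := by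
      intro t
      have hmm : MeasurableSet {x : E3 | t ≤ x i ∧ x i < t + 1} :=
        (measurableSet_le measurable_const (coord_meas i)).inter (measurableSet_lt (coord_meas i) measurable_const)
      rw [inter_comm, ← Measure.restrict_apply hmm, ← lintegral_indicator_one hmm]
      rfl
    simp only [this]
    rw [lintegral_lintegral_swap hm.aemeasurable]
    have h2 : ∀ x : E3, ∫⁻ t, {p : ℝ × E3 | p.1 ≤ p.2 i ∧ p.2 i < p.1 + 1}.indicator (fun _ => (1:ℝ≥0∞)) (t, x) = 1 := by
      intro x
      have : ∀ t : ℝ, {p : ℝ × E3 | p.1 ≤ p.2 i ∧ p.2 i < p.1 + 1}.indicator (fun _ => (1:ℝ≥0∞)) (t, x) =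
          (Ioc (x i - 1) (x i)).indicator 1 t := by
        intro t
        simp only [indicator, mem_ofPred_eq, mem_Ioc, Pi.one_apply]
        congr 1
        apply propext
        constructor
        · rintro ⟨h1, h2⟩; constructor <;> linarith
        · rintro ⟨h1, h2⟩; constructor <;> linarith
      simp only [this]
      rw [lintegral_indicator_one measurableSet_Ioc, Real.volume_Ioc]
      simp
    simp only [h2]
    simp
  rw [← e2, ← e3, ← lintegral_const_mul' _ _ ENNReal.ofReal_ne_top]
  apply lintegral_mono
  intro t
  have := half_bound h i t
  rw [e1 t] at this
  exact this

lemma sum_abs_ge (d : E3) : ‖d‖ ≤ ∑ i, |d i| := by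
  rw [EuclideanSpace.norm_eq]
  rw [Real.sqrt_le_left (Finset.sum_nonneg fun i _ => abs_nonneg _)]
  simp only [Fin.sum_univ_three, Real.norm_eq_abs]
  nlinarith [abs_nonneg (d 0), abs_nonneg (d 1), abs_nonneg (d 2),
    mul_nonneg (abs_nonneg (d 0)) (abs_nonneg (d 1)), mul_nonneg (abs_nonneg (d 0)) (abs_nonneg (d 2)),
    mul_nonneg (abs_nonneg (d 1)) (abs_nonneg (d 2))]

lemma AA_lower (x y : E3) :
    1 ≤ (ball x 6).indicator 1 y + 2 * ∑ i, (AA i x y + AA i y x) := by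
  by_cases hy : y ∈ ball x 6
  · rw [indicator_of_mem hy]; simp
  · rw [indicator_of_notMem hy, zero_add]
    have hd : 6 ≤ ‖y - x‖ := by rw [mem_ball, dist_eq_norm, not_lt] at hy; exact hy
    have h1 : ∀ i, ENNReal.ofReal ((|(y - x) i| - 1) * (1 / ‖y - x‖)) ≤ AA i x y + AA i y x := by
      intro i
      unfold AA kern
      rw [norm_sub_rev x y]
      rcases abs_cases ((y - x) i) with ⟨h, -⟩ | ⟨h, -⟩
      · refine le_trans ?_ le_self_add
        rw [h, ENNReal.ofReal_mul' (by positivity)]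
        refine mul_le_mul' (ENNReal.ofReal_le_ofReal ?_) le_rfl
        simp only [PiLp.sub_apply]; linarith
      · refine le_trans ?_ le_add_self
        rw [h, ENNReal.ofReal_mul' (by positivity)]
        refine mul_le_mul' (ENNReal.ofReal_le_ofReal ?_) le_rfl
        simp only [PiLp.sub_apply]; linarith
    have h2 : ENNReal.ofReal (∑ i, (|(y - x) i| - 1) * (1 / ‖y - x‖)) ≤ ∑ i, (AA i x y + AA i y x) := by
      refine le_trans ?_ (Finset.sum_le_sum fun i _ => h1 i)
      simp only [Fin.sum_univ_three]
      exact ENNReal.ofReal_add_le.trans (add_le_add_left ENNReal.ofReal_add_le _)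
    have h3 : (1/2 : ℝ) ≤ ∑ i, (|(y - x) i| - 1) * (1 / ‖y - x‖) := by
      rw [← Finset.sum_mul, Finset.sum_sub_distrib]
      have h4 := sum_abs_ge (y - x)
      simp only [Finset.sum_const, Finset.card_univ, Fintype.card_fin, nsmul_eq_mul, mul_one]
      rw [mul_one_div, le_div_iff₀ (by linarith)]
      push_cast
      linarith
    calc (1:ℝ≥0∞) = 2 * ENNReal.ofReal (1/2) := by
          rw [show (2:ℝ≥0∞) = ENNReal.ofReal 2 by simp, ← ENNReal.ofReal_mul (by norm_num)]
          norm_num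
      _ ≤ _ := by
          gcongr
          exact (ENNReal.ofReal_le_ofReal h3).trans h2

lemma IsMinimizer.mass_upper {Ω : Set E3} (h : IsMinimizer Ω) : vol Ω ≤ vb 6 + 24 * KT := by
  have hg := h.good
  have hA : ∀ i, ∫⁻ x in Ω, ∫⁻ y in Ω, AA i y x ≤ ENNReal.ofReal (2 * KT) * volume Ω := by
    intro i
    rw [lintegral_lintegral_swap (f := fun x y => AA i y x) ((AA_meas i).comp measurable_swap).aemeasurable]
    exact AA_bound h i
  have hmA : ∀ i x, Measurable (fun y => AA i x y) := fun i x => (AA_meas i).comp measurable_prodMk_left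
  have hmA' : ∀ i x, Measurable (fun y => AA i y x) := fun i x => (AA_meas i).comp measurable_prodMk_right
  have hmI : ∀ i, Measurable (fun x => ∫⁻ y in Ω, AA i x y) := fun i =>
    Measurable.lintegral_prod_right' (AA_meas i)
  have hmI' : ∀ i, Measurable (fun x => ∫⁻ y in Ω, AA i y x) := fun i =>
    Measurable.lintegral_prod_right' ((AA_meas i).comp measurable_swap)
  have h1 : volume Ω * volume Ω ≤ volume Ω * (volume (ball (0:E3) 6) + ENNReal.ofReal (24 * KT)) := by
    calc volume Ω * volume Ω = ∫⁻ x in Ω, ∫⁻ y in Ω, 1 := by simp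
      _ ≤ ∫⁻ x in Ω, ∫⁻ y in Ω, ((ball x 6).indicator 1 y + 2 * ∑ i, (AA i x y + AA i y x)) :=
          lintegral_mono fun x => lintegral_mono fun y => AA_lower x y
      _ ≤ ∫⁻ x in Ω, (volume (ball (0:E3) 6) + 2 * ∑ i, ((∫⁻ y in Ω, AA i x y) + ∫⁻ y in Ω, AA i y x)) := by
          apply lintegral_mono
          intro x
          show ∫⁻ y in Ω, ((ball x 6).indicator 1 y + 2 * ∑ i, (AA i x y + AA i y x)) ≤ _
          rw [lintegral_add_left (measurable_one.indicator measurableSet_ball)]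
          apply add_le_add
          · rw [lintegral_indicator_one measurableSet_ball, ← volume_ball_eq x]
            exact Measure.restrict_apply_le _ _
          · rw [lintegral_const_mul' _ _ (by norm_num), lintegral_finsetSum]
            · apply le_of_eq
              congr 1
              apply Finset.sum_congr rfl
              intro i _
              exact lintegral_add_left (hmA i x) _
            · intro i _
              exact (hmA i x).add (hmA' i x)
      _ = volume Ω * volume (ball (0:E3) 6) + 2 * ∑ i, ((∫⁻ x in Ω, ∫⁻ y in Ω, AA i x y) +
            ∫⁻ x in Ω, ∫⁻ y in Ω, AA i y x) := by
          rw [lintegral_add_left measurable_const, setLIntegral_const, mul_comm (volume Ω)]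
          congr 1
          rw [lintegral_const_mul' _ _ (by norm_num), lintegral_finsetSum]
          · congr 1
            apply Finset.sum_congr rfl
            intro i _
            exact lintegral_add_left (hmI i) _
          · intro i _
            exact (hmI i).add (hmI' i)
      _ ≤ volume Ω * volume (ball (0:E3) 6) + 2 * ∑ i : Fin 3, (ENNReal.ofReal (2 * KT) * volume Ω +
            ENNReal.ofReal (2 * KT) * volume Ω) := by
          gcongr with i _
          · exact AA_bound h i
          · exact hA i
      _ = _ := by
          rw [Finset.sum_const, Finset.card_univ, Fintype.card_fin, mul_add]
          congr 1
          rw [← two_mul, show (24:ℝ) * KT = 12 * (2 * KT) by ring,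
            ENNReal.ofReal_mul (by norm_num : (0:ℝ) ≤ 12)]
          rw [nsmul_eq_mul]
          have : ENNReal.ofReal 12 = 12 := by simp
          rw [this]
          push_cast
          ring
  have hv0 : volume Ω ≠ 0 := h.2.2.1.ne'
  have h2 := (ENNReal.mul_le_mul_iff_right hv0 hg.2.2.ne).1 h1
  have hK := KT_nn
  have h3 := ENNReal.toReal_mono (ENNReal.add_lt_top.2 ⟨ball_vol_fin 0 6, ENNReal.ofReal_lt_top⟩).ne h2
  rw [ENNReal.toReal_add (ball_vol_fin 0 6).ne ENNReal.ofReal_ne_top, ENNReal.toReal_ofReal (by linarith)] at h3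
  exact h3

lemma IsMinimizer.mass_between {Ω : Set E3} (h : IsMinimizer Ω) : mStarStar ≤ vol Ω ∧ vol Ω ≤ mStar := by
  constructor
  · apply csInf_le
    · refine ⟨0, ?_⟩
      rintro _ ⟨S, _, rfl⟩; exact vol_nonneg
    · exact ⟨Ω, h, rfl⟩
  · apply le_csSup
    · refine ⟨vb 6 + 24 * KT, ?_⟩
      rintro _ ⟨S, hS, rfl⟩; exact hS.mass_upper
    · exact ⟨Ω, h, rfl⟩

lemma DD_sub {A B : Set E3} (hA : MF A) (hB : MF B) :
    DD B B ≤ DD A A + 2 * (vol (B \ A) * (cc1 + vol B)) := by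
  have h1 := hB.inter hA.1
  have h2 := hB.diff hA.1
  have hd : Disjoint (B ∩ A) (B \ A) := disjoint_sdiff_inter.symm
  have hu : B ∩ A ∪ B \ A = B := inter_union_sdiff B A
  have e1 := DD_self_union h1 h2 hd
  have e2 := DD_union h1 h2 h2 hd
  rw [hu] at e1 e2
  have h3 := DD_mono hA.2 hA.2 (inter_subset_right : B ∩ A ⊆ A) (inter_subset_right : B ∩ A ⊆ A)
  have h4 := DD_le h2 hB
  rw [DD_comm] at h4
  have h5 := DD_nonneg (A := B \ A) (B := B \ A)
  linarith

lemma int_sub {f : E3 → ℝ} (hf : Integrable f) {C ρ : ℝ} (hC : 0 ≤ C) (hb : ∀ x, |f x| ≤ C)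
    (h0 : ∀ x, x ∉ ball (0:E3) ρ → f x = 0) {A B : Set E3} (hA : MF A) (hB : MF B) :
    ∫ x in B, f x ≤ (∫ x in A, f x) + 2 * C * vol (symmDiff A B ∩ ball 0 ρ) := by
  have key : ∀ D : Set E3, MF D → D ⊆ symmDiff A B → |∫ x in D, f x| ≤ C * vol (symmDiff A B ∩ ball 0 ρ) := by
    intro D hD hDs
    have e : ∫ x in D, f x = ∫ x in D ∩ ball 0 ρ, f x := by
      apply setIntegral_eq_of_subset_of_forall_sdiff_eq_zero hD.1 inter_subset_left
      rintro x ⟨hx1, hx2⟩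
      exact h0 x fun h => hx2 ⟨hx1, h⟩
    rw [e]
    have hfin := (hD.inter (measurableSet_ball (x := (0:E3)) (ε := ρ))).2
    refine (norm_setIntegral_le_of_norm_le_const (f := f) (C := C) hfin (fun x _ => hb x)).trans ?_
    apply mul_le_mul_of_nonneg_left _ hC
    apply vol_mono (inter_subset_inter_left _ hDs)
    exact (measure_mono inter_subset_right).trans_lt (ball_vol_fin 0 ρ)
  have k1 := key (B \ A) (hB.diff hA.1) (fun x hx => Or.inr hx)
  have k2 := key (A \ B) (hA.diff hB.1) (fun x hx => Or.inl hx)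
  have e1 := integral_inter_add_sdiff (s := B) (t := A) (f := f) hA.1 hf.integrableOn
  have e2 := integral_inter_add_sdiff (s := A) (t := B) (f := f) hB.1 hf.integrableOn
  rw [inter_comm] at e2
  rw [abs_le] at k1 k2
  linarith

/-- volume of symmetric differences in real form -/
lemma toReal_tendsto {u : ℕ → ℝ≥0∞} (h : Tendsto u atTop (𝓝 0)) :
    Tendsto (fun n => (u n).toReal) atTop (𝓝 0) := by
  have := (ENNReal.tendsto_toReal ENNReal.zero_ne_top).comp h
  rw [ENNReal.toReal_zero] at this
  exact this

lemma vol_le_symm {A B : Set E3} (hA : volume A < ⊤) (hB : volume (symmDiff A B) < ⊤) : vol B ≤ vol A + vol (symmDiff A B) := by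
  unfold vol
  rw [← ENNReal.toReal_add hA.ne hB.ne]
  apply ENNReal.toReal_mono (ENNReal.add_lt_top.2 ⟨hA, hB⟩).ne
  refine (measure_mono ?_).trans (measure_union_le _ _)
  intro x hx
  by_cases h : x ∈ A
  · exact Or.inl h
  · exact Or.inr (Or.inr ⟨hx, h⟩)

def LocTo (X : ℕ → Set E3) (S : Set E3) : Prop :=
  ∀ ρ : ℝ, Tendsto (fun n => volume (symmDiff (X n) S ∩ ball 0 ρ)) atTop (𝓝 0)

lemma vol_ball_inter_le {X S : Set E3} (hX : volume X < ⊤) (ρ : ℝ) :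
    vol (S ∩ ball 0 ρ) ≤ vol (X ∩ ball 0 ρ) + vol (symmDiff X S ∩ ball 0 ρ) := by
  have hB := ball_vol_fin 0 ρ
  unfold vol
  have f1 : volume (X ∩ ball 0 ρ) < ⊤ := (measure_mono inter_subset_right).trans_lt hB
  have f2 : volume (symmDiff X S ∩ ball 0 ρ) < ⊤ := (measure_mono inter_subset_right).trans_lt hB
  rw [← ENNReal.toReal_add f1.ne f2.ne]
  apply ENNReal.toReal_mono (ENNReal.add_lt_top.2 ⟨f1, f2⟩).ne
  refine (measure_mono ?_).trans (measure_union_le _ _)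
  rintro x ⟨hx, hb⟩
  by_cases h : x ∈ X
  · exact Or.inl ⟨h, hb⟩
  · exact Or.inr ⟨Or.inr ⟨hx, h⟩, hb⟩

lemma vol_ball_inter_le' {X S : Set E3} (ρ : ℝ) :
    vol (X ∩ ball 0 ρ) ≤ vol (S ∩ ball 0 ρ) + vol (symmDiff X S ∩ ball 0 ρ) := by
  have hB := ball_vol_fin 0 ρ
  unfold vol
  have f1 : volume (S ∩ ball 0 ρ) < ⊤ := (measure_mono inter_subset_right).trans_lt hB
  have f2 : volume (symmDiff X S ∩ ball 0 ρ) < ⊤ := (measure_mono inter_subset_right).trans_lt hB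
  rw [← ENNReal.toReal_add f1.ne f2.ne]
  apply ENNReal.toReal_mono (ENNReal.add_lt_top.2 ⟨f1, f2⟩).ne
  refine (measure_mono ?_).trans (measure_union_le _ _)
  rintro x ⟨hx, hb⟩
  by_cases h : x ∈ S
  · exact Or.inl ⟨h, hb⟩
  · exact Or.inr ⟨Or.inl ⟨hx, h⟩, hb⟩

lemma lim_vol {X : ℕ → Set E3} {S : Set E3} (hX : ∀ n, Good (X n)) {M : ℝ}
    (hM : ∀ n, vol (X n) ≤ M) (hS : MeasurableSet S) (hl : LocTo X S) : MF S := by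
  refine ⟨hS, ?_⟩
  have h1 : ∀ ρ : ℝ, vol (S ∩ ball 0 ρ) ≤ M := by
    intro ρ
    have ht := (toReal_tendsto (hl ρ)).const_add M
    rw [add_zero] at ht
    refine ge_of_tendsto' ht fun n => ?_
    refine (vol_ball_inter_le (hX n).2.2 ρ).trans ?_
    have := vol_mono (inter_subset_left : X n ∩ ball 0 ρ ⊆ X n) (hX n).2.2
    have := hM n
    unfold vol at *
    linarith
  have h2 : ∀ k : ℕ, volume (S ∩ ball 0 (k:ℝ)) ≤ ENNReal.ofReal M := by
    intro k
    have f1 : volume (S ∩ ball 0 (k:ℝ)) < ⊤ := (measure_mono inter_subset_right).trans_lt (ball_vol_fin 0 _)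
    rw [← ENNReal.ofReal_toReal f1.ne]
    exact ENNReal.ofReal_le_ofReal (h1 k)
  have h3 : volume S = ⨆ k : ℕ, volume (S ∩ ball 0 (k:ℝ)) := by
    rw [← Monotone.measure_iUnion]
    · congr 1
      rw [← inter_iUnion, iUnion_ball_nat, inter_univ]
    · intro a b hab
      apply inter_subset_inter_right
      exact ball_subset_ball (by exact_mod_cast hab)
  rw [h3]
  exact (iSup_le h2).trans_lt ENNReal.ofReal_lt_top

lemma lim_step {X : ℕ → Set E3} {S : Set E3} (hX : ∀ n, Good (X n)) {M : ℝ}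
    (hM : ∀ n, vol (X n) ≤ M) (hE : Tendsto (fun n => EX (X n)) atTop (𝓝 0))
    (hS : MF S) (hl : LocTo X S) {φ : E3 → E3} (hφ : IsTest φ) {ρ : ℝ}
    (hρ : ∀ x, x ∉ ball (0:E3) ρ → divg φ x = 0) :
    (∫ x in S, divg φ x) + (1/2) * DD (S ∩ ball 0 ρ) (S ∩ ball 0 ρ) ≤ muStar * vol S := by
  obtain ⟨C, hC, hCb⟩ := divg_bdd hφ
  have hK := KT_pos
  have hμ := muStar_nonneg
  have hM0 : 0 ≤ M := vol_nonneg.trans (hM 0)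
  have hcc : 0 ≤ cc1 := ENNReal.toReal_nonneg
  have main : ∀ k : ℕ, 1 ≤ k → ρ ≤ k → 
      (∫ x in S, divg φ x) + (1/2) * DD (S ∩ ball 0 ρ) (S ∩ ball 0 ρ) ≤ muStar * vol S + 2 * KT * M / k := by
    intro k hk hρk
    have hk0 : (1:ℝ) ≤ k := by exact_mod_cast hk
    set δ : ℕ → ℝ := fun n => (volume (symmDiff (X n) S ∩ ball 0 (2*k+1:ℝ))).toReal with hδ
    have hδt : Tendsto δ atTop (𝓝 0) := toReal_tendsto (hl _)
    have ht : Tendsto (fun n => muStar * vol S + 2 * KT * M / k + (2 * C * δ n + δ n * (cc1 + vol S)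
        + muStar * δ n + EX (X n))) atTop (𝓝 (muStar * vol S + 2 * KT * M / k + (2 * C * 0 + 0 * (cc1 + vol S)
        + muStar * 0 + 0))) := by
      apply Tendsto.const_add
      exact (((hδt.const_mul _).add (hδt.mul_const _)).add (hδt.const_mul _)).add hE
    simp only [mul_zero, zero_mul, add_zero] at ht
    refine ge_of_tendsto' ht fun n => ?_
    obtain ⟨r, hr1, hr2, hc⟩ := ball_cut (hX n).mf 0 (r0 := k) (r1 := 2*k+1) (by linarith) (by linarith)
    obtain ⟨g1, g2, h3⟩ := EX_cut (hX n) hc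
    have h4 := EX_nonneg g2
    have h5 := DD_nonneg (A := X n ∩ ball 0 r) (B := X n \ ball 0 r)
    have h6 : 2 * KT * vol (X n ∩ (ball 0 (2*k+1:ℝ) \ ball 0 (k:ℝ))) / (2*k+1-1-k) ≤ 2 * KT * M / k := by
      rw [show (2*k+1-1-k:ℝ) = k by ring]
      apply div_le_div_of_nonneg_right _ (by linarith)
      apply mul_le_mul_of_nonneg_left _ (by linarith)
      exact (vol_mono inter_subset_left (hX n).2.2).trans (hM n)
    have h7 : EX (X n ∩ ball 0 r) ≤ EX (X n) + 2 * KT * M / k := by linarith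
    rw [EX_eq g1.2.2] at h7
    have h8 := le_per g1.2.1 hφ
    have fin2 : volume (symmDiff (X n) S ∩ ball 0 (2*k+1:ℝ)) < ⊤ :=
      (measure_mono inter_subset_right).trans_lt (ball_vol_fin 0 _)
    have h9 : vol (symmDiff (X n ∩ ball 0 r) S ∩ ball 0 ρ) ≤ δ n := by
      apply vol_mono _ fin2
      rintro x ⟨hx, hb⟩
      refine ⟨?_, ball_subset_ball (by linarith) hb⟩
      rcases hx with ⟨⟨h1, h2⟩, h3⟩ | ⟨h1, h2⟩
      · exact Or.inl ⟨h1, h3⟩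
      · exact Or.inr ⟨h1, fun h => h2 ⟨h, ball_subset_ball (by linarith) hb⟩⟩
    have h10 := int_sub (divg_integrable hφ) hC hCb hρ g1.mf hS
    have h11 := DD_sub g1.mf (hS.inter (measurableSet_ball (x := (0:E3)) (ε := ρ)))
    have h12 : vol ((S ∩ ball 0 ρ) \ (X n ∩ ball 0 r)) ≤ δ n := by
      apply vol_mono _ fin2
      rintro x ⟨⟨hx, hb⟩, hn⟩
      have hb2 : x ∈ ball (0:E3) r := ball_subset_ball (by linarith) hb
      exact ⟨Or.inr ⟨hx, fun h => hn ⟨h, hb2⟩⟩, ball_subset_ball (by linarith) hb⟩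
    have h13 : vol (S ∩ ball 0 ρ) ≤ vol S := vol_mono inter_subset_left hS.2
    have h14 : vol (X n ∩ ball 0 r) ≤ vol S + δ n := by
      calc vol (X n ∩ ball 0 r) ≤ vol (X n ∩ ball 0 (2*k+1:ℝ)) :=
            vol_mono (inter_subset_inter_right _ (ball_subset_ball (by linarith)))
              ((hX n).mf.inter measurableSet_ball).2
        _ ≤ vol (S ∩ ball 0 (2*k+1:ℝ)) + δ n := vol_ball_inter_le' _
        _ ≤ vol S + δ n := by linarith [vol_mono (inter_subset_left : S ∩ ball 0 (2*k+1:ℝ) ⊆ S) hS.2]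
    have h15 : vol ((S ∩ ball 0 ρ) \ (X n ∩ ball 0 r)) * (cc1 + vol (S ∩ ball 0 ρ)) ≤ δ n * (cc1 + vol S) := by
      apply mul_le_mul h12 (by linarith) _ (vol_nonneg.trans h12)
      linarith [vol_nonneg (Ω := S ∩ ball 0 ρ)]
    have h16 : muStar * vol (X n ∩ ball 0 r) ≤ muStar * (vol S + δ n) := mul_le_mul_of_nonneg_left h14 hμ
    have h17 : 2 * C * vol (symmDiff (X n ∩ ball 0 r) S ∩ ball 0 ρ) ≤ 2 * C * δ n :=
      mul_le_mul_of_nonneg_left h9 (by linarith)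
    linarith
  have ht : Tendsto (fun k : ℕ => muStar * vol S + 2 * KT * M / k) atTop (𝓝 (muStar * vol S + 0)) :=
    (tendsto_const_div_atTop_nhds_zero_nat _).const_add _
  rw [add_zero] at ht
  refine ge_of_tendsto ht ?_
  obtain ⟨k0, hk0⟩ := exists_nat_ge ρ
  filter_upwards [eventually_ge_atTop 1, eventually_ge_atTop k0] with k h1 h2
  exact main k h1 (hk0.trans (by exact_mod_cast h2))

lemma lim_minimizer {X : ℕ → Set E3} {S : Set E3} (hX : ∀ n, Good (X n)) {M : ℝ}
    (hM : ∀ n, vol (X n) ≤ M) (hE : Tendsto (fun n => EX (X n)) atTop (𝓝 0))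
    (hS : MeasurableSet S) (hl : LocTo X S) (h0 : 0 < volume S) : IsMinimizer S := by
  have hSf := lim_vol hX hM hS hl
  have hcc : 0 ≤ cc1 := ENNReal.toReal_nonneg
  have key : ∀ φ, IsTest φ → ∫ x in S, divg φ x ≤ muStar * vol S - (1/2) * DD S S := by
    intro φ hφ
    obtain ⟨ρ, hρ⟩ := (divg_compact hφ.2.1).isCompact.isBounded.subset_ball (0:E3)
    have ht : Tendsto (fun k : ℕ => muStar * vol S - (1/2) * DD S S +
        vol (S \ ball 0 (k:ℝ)) * (cc1 + vol S)) atTop (𝓝 (muStar * vol S - (1/2) * DD S S + 0 * (cc1 + vol S))) :=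
      ((tail_tendsto hSf).mul_const _).const_add _
    rw [zero_mul, add_zero] at ht
    refine ge_of_tendsto ht ?_
    obtain ⟨k0, hk0⟩ := exists_nat_ge ρ
    filter_upwards [eventually_ge_atTop k0] with k hk
    have h1 := lim_step hX hM hE hSf hl hφ (ρ := k) (by
      intro x hx
      by_contra hne
      refine hx (ball_subset_ball ?_ (hρ (subset_tsupport _ hne)))
      exact hk0.trans (by exact_mod_cast hk))
    have h2 := DD_sub (hSf.inter (measurableSet_ball (x := (0:E3)) (ε := k))) hSf
    rw [sdiff_self_inter] at h2
    linarith
  obtain ⟨h1, h2⟩ := per_le key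
  have hg : Good S := ⟨hS, h1, hSf.2⟩
  refine isMinimizer_of hg (ENNReal.toReal_pos h0.ne' hSf.2.ne) ?_
  rw [EX_eq hSf.2]
  linarith

lemma DD_sum_le {ι : Type*} [DecidableEq ι] {A : Set E3} (hA : MF A) (G : ι → Set E3)
    (hG : ∀ j, MeasurableSet (G j)) (hd : ∀ j k, j ≠ k → Disjoint (G j) (G k)) (s : Finset ι) :
    ∀ B, MF B → (∀ j ∈ s, G j ⊆ B) → ∑ j ∈ s, DD (G j) A ≤ DD B A := by
  induction s using Finset.induction_on with
  | empty => intro B _ _; simpa using DD_nonneg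
  | insert a s ha ih =>
    intro B hB hs
    rw [Finset.sum_insert ha]
    have h1 := ih (B \ G a) (hB.diff (hG a)) (by
      intro j hj x hx
      refine ⟨hs j (Finset.mem_insert_of_mem hj) hx, fun hxa => ?_⟩
      have hne : j ≠ a := fun h => ha (h ▸ hj)
      exact (Set.disjoint_left.1 (hd j a hne)) hx hxa)
    have h2 := DD_union (hB.inter (hG a)) (hB.diff (hG a)) hA disjoint_sdiff_inter.symm
    rw [inter_union_sdiff, inter_eq_self_of_subset_right (hs a (Finset.mem_insert_self a s))] at h2
    linarith

lemma multi_cut {K : ℕ} (H : Fin K → Set E3) (hH : ∀ j, MeasurableSet (H j))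
    (hd : ∀ j k, j ≠ k → Disjoint (H j) (H k)) (q : Fin K → ℝ) (s : Finset (Fin K)) :
    ∀ Ω, Good Ω → (∀ j, CutBy Ω (H j) (q j)) → Good (Ω \ ⋃ j ∈ s, H j) ∧
    (∑ j ∈ s, EX (Ω ∩ H j)) + EX (Ω \ ⋃ j ∈ s, H j) +
      (∑ j ∈ s, ∑ k ∈ s, if j < k then DD (Ω ∩ H j) (Ω ∩ H k) else 0) ≤ EX Ω + ∑ j ∈ s, q j := by
  induction s using Finset.induction_on_max with
  | empty => intro Ω h _; simpa using h
  | insert a s hmax ih =>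
    intro Ω h hc
    have ha : a ∉ s := fun h => lt_irrefl _ (hmax a h)
    obtain ⟨g1, g2, h3⟩ := EX_cut h (hc a)
    obtain ⟨g4, h5⟩ := ih (Ω \ H a) g2 (fun j => (hc j).mono sdiff_subset le_rfl)
    have e1 : ∀ j ∈ s, (Ω \ H a) ∩ H j = Ω ∩ H j := by
      intro j hj
      have hne : j ≠ a := fun h => ha (h ▸ hj)
      ext x
      constructor
      · rintro ⟨hx, hx2⟩; exact ⟨hx.1, hx2⟩
      · rintro ⟨hx, hx2⟩; exact ⟨⟨hx, fun hx3 => Set.disjoint_left.1 (hd j a hne) hx2 hx3⟩, hx2⟩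
    have e2 : (Ω \ H a) \ (⋃ j ∈ s, H j) = Ω \ ⋃ j ∈ insert a s, H j := by
      rw [Finset.set_biUnion_insert, Set.sdiff_sdiff]
    rw [e2] at g4 h5
    refine ⟨g4, ?_⟩
    have e3 : ∑ j ∈ s, EX ((Ω \ H a) ∩ H j) = ∑ j ∈ s, EX (Ω ∩ H j) :=
      Finset.sum_congr rfl fun j hj => by rw [e1 j hj]
    have e4 : (∑ j ∈ s, ∑ k ∈ s, if j < k then DD ((Ω \ H a) ∩ H j) ((Ω \ H a) ∩ H k) else 0)
        = ∑ j ∈ s, ∑ k ∈ s, if j < k then DD (Ω ∩ H j) (Ω ∩ H k) else 0 :=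
      Finset.sum_congr rfl fun j hj => Finset.sum_congr rfl fun k hk => by rw [e1 j hj, e1 k hk]
    rw [e3, e4] at h5
    have h6 := DD_sum_le g1.mf (fun j => Ω ∩ H j) (fun j => h.1.inter (hH j))
      (fun j k hjk => (hd j k hjk).mono inter_subset_right inter_subset_right) s (Ω \ H a) g2.mf
      (fun j hj x hx => ⟨hx.1, fun hx3 =>
        Set.disjoint_left.1 (hd j a (fun h => ha (h ▸ hj))) hx.2 hx3⟩)
    rw [DD_comm] at h3
    rw [Finset.sum_insert ha, Finset.sum_insert ha, Finset.sum_insert ha, Finset.sum_insert ha]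
    have e5 : (∑ k ∈ s, if a < k then DD (Ω ∩ H a) (Ω ∩ H k) else 0) = 0 :=
      Finset.sum_eq_zero fun k hk => if_neg (hmax k hk).not_gt
    have e6 : (∑ j ∈ s, ∑ k ∈ insert a s, if j < k then DD (Ω ∩ H j) (Ω ∩ H k) else 0) =
        (∑ j ∈ s, DD (Ω ∩ H j) (Ω ∩ H a)) +
        ∑ j ∈ s, ∑ k ∈ s, if j < k then DD (Ω ∩ H j) (Ω ∩ H k) else 0 := by
      rw [← Finset.sum_add_distrib]
      refine Finset.sum_congr rfl fun j hj => ?_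
      rw [Finset.sum_insert ha, if_pos (hmax j hj)]
    rw [e5, e6, if_neg (lt_irrefl a)]
    linarith

lemma vol_split {K : ℕ} {X : Set E3} (hX : MF X) (H : Fin K → Set E3) (hH : ∀ j, MeasurableSet (H j))
    (hd : ∀ j k, j ≠ k → Disjoint (H j) (H k)) :
    vol X = (∑ j, vol (X ∩ H j)) + vol (X \ ⋃ j, H j) := by
  have hU : MeasurableSet (⋃ j, H j) := MeasurableSet.iUnion hH
  have h1 := measure_inter_add_sdiff (μ := volume) X hU
  have h2 : volume (X ∩ ⋃ j, H j) = ∑ j, volume (X ∩ H j) := by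
    rw [inter_iUnion, measure_iUnion _ (fun j => hX.1.inter (hH j)), tsum_fintype]
    intro j k hjk
    exact (hd j k hjk).mono inter_subset_right inter_subset_right
  have f1 : ∀ j, volume (X ∩ H j) ≠ ⊤ := fun j => (hX.inter (hH j)).2.ne
  unfold vol
  rw [← h1, h2, ENNReal.toReal_add, ENNReal.toReal_sum (fun j _ => f1 j)]
  · exact (ENNReal.sum_lt_top.2 fun j _ => (f1 j).lt_top).ne
  · exact (hX.diff hU).2.ne

/-- A union bound for the remainder. -/
lemma vol_union_bound {K : ℕ} {X : Set E3} (hX : MF X) (H : Fin K → Set E3)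
    (hH : ∀ j, MeasurableSet (H j)) :
    vol X ≤ (∑ j, vol (X ∩ H j)) + vol (X \ ⋃ j, H j) := by
  have hU : MeasurableSet (⋃ j, H j) := MeasurableSet.iUnion hH
  have h1 := measure_inter_add_sdiff (μ := volume) X hU
  have h2 : volume (X ∩ ⋃ j, H j) ≤ ∑ j, volume (X ∩ H j) := by
    rw [inter_iUnion]
    exact (measure_iUnion_le _).trans (by rw [tsum_fintype])
  have f1 : ∀ j, volume (X ∩ H j) ≠ ⊤ := fun j => (hX.inter (hH j)).2.ne
  have f2 := (ENNReal.sum_lt_top.2 fun j (_ : j ∈ Finset.univ) => (f1 j).lt_top).ne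
  unfold vol
  rw [← ENNReal.toReal_sum (fun j _ => f1 j), ← ENNReal.toReal_add f2 (hX.diff hU).2.ne]
  apply ENNReal.toReal_mono (ENNReal.add_lt_top.2 ⟨f2.lt_top, (hX.diff hU).2⟩).ne
  rw [← h1]
  gcongr

lemma shift_ball_vol (a : E3) (X : Set E3) (ρ : ℝ) :
    vol (shift a X ∩ ball 0 ρ) = vol (X ∩ ball a ρ) := by
  rw [← shift_vol a (X ∩ ball a ρ)]
  congr 1
  ext x
  simp [shift, mem_ball, dist_eq_norm]

def Data (X : ℕ → Set E3) (K : ℕ) (S : Fin K → Set E3) (a : ℕ → Fin K → E3) (φ : ℕ → ℕ) : Prop :=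
  StrictMono φ ∧ (∀ j k, j ≠ k → Tendsto (fun n => ‖a n j - a n k‖) atTop atTop) ∧
  (∀ j, IsMinimizer (S j)) ∧ ∀ j, LocTo (fun n => shift (a n j) (X (φ n))) (S j)

lemma LocTo.sub {X : ℕ → Set E3} {S : Set E3} (h : LocTo X S) {ψ : ℕ → ℕ} (hψ : StrictMono ψ) :
    LocTo (fun n => X (ψ n)) S := fun ρ => (h ρ).comp hψ.tendsto_atTop

lemma Data.sub {X : ℕ → Set E3} {K : ℕ} {S : Fin K → Set E3} {a : ℕ → Fin K → E3} {φ : ℕ → ℕ}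
    (h : Data X K S a φ) {ψ : ℕ → ℕ} (hψ : StrictMono ψ) :
    Data X K S (fun n => a (ψ n)) (fun n => φ (ψ n)) :=
  ⟨h.1.comp hψ, fun j k hjk => (h.2.1 j k hjk).comp hψ.tendsto_atTop, h.2.2.1,
    fun j => LocTo.sub (h.2.2.2 j) hψ⟩

lemma balls_disj {a b : E3} {ρ : ℝ} (h : 2 * ρ ≤ ‖a - b‖) : Disjoint (ball a ρ) (ball b ρ) := by
  apply ball_disjoint_ball
  rw [dist_eq_norm]; linarith

lemma exists_R0 {K : ℕ} {S : Fin K → Set E3} (h : ∀ j, IsMinimizer (S j)) :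
    ∃ R0 : ℝ, 0 < R0 ∧ ∀ j, volume (S j \ ball 0 R0) = 0 := by
  choose R hR hv using fun j => (h j).bounded
  refine ⟨1 + ∑ j, R j, ?_, fun j => ?_⟩
  · have : 0 ≤ ∑ j, R j := Finset.sum_nonneg fun j _ => (hR j).le
    linarith
  · refine measure_mono_null (sdiff_subset_sdiff_right (ball_subset_ball ?_)) (hv j)
    have := Finset.single_le_sum (f := R) (fun j _ => (hR j).le) (Finset.mem_univ j)
    linarith

lemma vol_inter_of_null {S B : Set E3} (hB : MeasurableSet B) (h : volume (S \ B) = 0) :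
    vol (S ∩ B) = vol S := by
  unfold vol
  rw [← measure_inter_add_sdiff S hB, h, add_zero]

lemma Data.eventually_sep {X : ℕ → Set E3} {K : ℕ} {S : Fin K → Set E3} {a : ℕ → Fin K → E3}
    {φ : ℕ → ℕ} (h : Data X K S a φ) (ρ : ℝ) :
    ∀ᶠ n in atTop, ∀ j k, j ≠ k → ρ ≤ ‖a n j - a n k‖ := by
  rw [eventually_all]; intro j
  rw [eventually_all]; intro k
  by_cases hjk : j = k
  · exact Eventually.of_forall fun n hn => absurd hjk hn
  · exact ((h.2.1 j k hjk).eventually_ge_atTop ρ).mono fun n hn _ => hn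

lemma Data.mass_le {X : ℕ → Set E3} {K : ℕ} {S : Fin K → Set E3} {a : ℕ → Fin K → E3}
    {φ : ℕ → ℕ} (h : Data X K S a φ) (hX : ∀ n, Good (X n)) {m : ℝ}
    (hv : Tendsto (fun n => vol (X n)) atTop (𝓝 m)) : ∑ j, vol (S j) ≤ m := by
  obtain ⟨ρ, hρ, h0⟩ := exists_R0 h.2.2.1
  have ht : Tendsto (fun n => vol (X (φ n)) +
      ∑ j, vol (symmDiff (shift (a n j) (X (φ n))) (S j) ∩ ball 0 ρ)) atTop (𝓝 (m + ∑ j : Fin K, 0)) :=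
    (hv.comp h.1.tendsto_atTop).add
      (tendsto_finsetSum _ fun j _ => toReal_tendsto (h.2.2.2 j ρ))
  rw [Finset.sum_const_zero, add_zero] at ht
  refine ge_of_tendsto ht ?_
  filter_upwards [h.eventually_sep (2 * ρ)] with n hn
  have h1 := vol_split (hX (φ n)).mf (fun j => ball (a n j) ρ) (fun j => measurableSet_ball)
    (fun j k hjk => balls_disj (hn j k hjk))
  have h2 : ∀ j, vol (S j) ≤ vol (X (φ n) ∩ ball (a n j) ρ) +
      vol (symmDiff (shift (a n j) (X (φ n))) (S j) ∩ ball 0 ρ) := by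
    intro j
    have h3 := vol_ball_inter_le (X := shift (a n j) (X (φ n))) (S := S j)
      (shift_good (hX _) _).2.2 ρ
    rw [shift_ball_vol, vol_inter_of_null measurableSet_ball (h0 j)] at h3
    exact h3
  have h3 := Finset.sum_le_sum fun j (_ : j ∈ Finset.univ) => h2 j
  rw [Finset.sum_add_distrib] at h3
  have h4 := vol_nonneg (Ω := X (φ n) \ ⋃ j, ball (a n j) ρ)
  linarith

lemma Data.extend {X : ℕ → Set E3} {K : ℕ} {S : Fin K → Set E3} {a : ℕ → Fin K → E3}
    {φ : ℕ → ℕ} (h : Data X K S a φ) (hX : ∀ n, Good (X n)) {m M P : ℝ}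
    (hP : ∀ n, per (X n) ≤ P) (hM : ∀ n, vol (X n) ≤ M)
    (hE : Tendsto (fun n => EX (X n)) atTop (𝓝 0))
    (hv : Tendsto (fun n => vol (X n)) atTop (𝓝 m)) (hlt : ∑ j, vol (S j) < m) :
    ∃ S' a' φ', Data X (K+1) S' a' φ' := by
  have hP0 : 0 ≤ P := (per_nonneg (Ω := X 0)).trans (hP 0)
  set δ := m - ∑ j, vol (S j) with hδ
  have hδ0 : 0 < δ := by linarith
  set r := δ / (8 * (P + 1)) with hr
  have hr0 : 0 < r := by positivity
  have hrP : 2 * r * P ≤ δ / 4 := by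
    have : r * (8 * (P + 1)) = δ := by rw [hr]; field_simp
    nlinarith
  have step : ∀ k : ℕ, ∀ᶠ n in atTop, ∃ x : E3, (∀ j, (k:ℝ) ≤ ‖x - a n j‖) ∧
      vb r / 2 < vol (ball x r ∩ X (φ n)) := by
    intro k
    have ht : Tendsto (fun n =>
        ∑ j, vol (symmDiff (shift (a n j) (X (φ n))) (S j) ∩ ball 0 (k:ℝ))) atTop (𝓝 (∑ j : Fin K, 0)) :=
        (tendsto_finsetSum _ fun j _ => toReal_tendsto (h.2.2.2 j k))
    rw [Finset.sum_const_zero] at ht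
    filter_upwards [ht.eventually_lt_const (show (0:ℝ) < δ / 4 by positivity),
      (hv.comp h.1.tendsto_atTop).eventually_const_lt (show m - δ / 4 < m by linarith)] with n hn1 hn2
    have hn2' : m - δ / 4 < vol (X (φ n)) := hn2
    by_contra hc
    push Not at hc
    have h1 := vol_union_bound (hX (φ n)).mf (fun j => ball (a n j) (k:ℝ)) (fun j => measurableSet_ball)
    have h2 : ∀ j, vol (X (φ n) ∩ ball (a n j) (k:ℝ)) ≤ vol (S j) +
        vol (symmDiff (shift (a n j) (X (φ n))) (S j) ∩ ball 0 (k:ℝ)) := by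
      intro j
      have h3 := vol_ball_inter_le' (X := shift (a n j) (X (φ n))) (S := S j) (k:ℝ)
      rw [shift_ball_vol] at h3
      have h4 := vol_mono (inter_subset_left : S j ∩ ball 0 (k:ℝ) ⊆ S j) (h.2.2.1 j).2.2.2.1
      linarith
    have h3 := Finset.sum_le_sum fun j (_ : j ∈ Finset.univ) => h2 j
    rw [Finset.sum_add_distrib] at h3
    have h5 := iso_local (hX (φ n)) (S := ⋃ j, ball (a n j) (k:ℝ))
      (MeasurableSet.iUnion fun j => measurableSet_ball) hr0 (by
        rintro x ⟨hx1, hx2⟩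
        rw [vol_le_iff ((measure_mono inter_subset_left).trans_lt (ball_vol_fin x r))]
        apply hc x
        intro j
        by_contra hj
        push Not at hj
        exact hx2 (mem_iUnion.2 ⟨j, by rw [mem_ball, dist_eq_norm]; exact hj⟩))
    have h6 : 2 * r * per (X (φ n)) ≤ 2 * r * P := by
      apply mul_le_mul_of_nonneg_left (hP _); positivity
    linarith
  obtain ⟨ψ, hψ, hψ2⟩ := extraction_forall_of_eventually step
  choose x hx1 hx2 using hψ2
  obtain ⟨T, χ, hχ, hT, hl⟩ := compactness (Ω := fun k => shift (x k) (X (φ (ψ k)))) (P := P) (M := M)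
    (fun k => shift_good (hX _) _)
    (fun k => by rw [shift_per (hX _)]; exact hP _) (fun k => by rw [shift_vol]; exact hM _)
  have hTv : vb r / 2 ≤ vol (T ∩ ball 0 r) := by
    have ht := (toReal_tendsto (hl r)).const_add (vol (T ∩ ball 0 r))
    rw [add_zero] at ht
    refine ge_of_tendsto' ht fun n => ?_
    have h1 := vol_ball_inter_le' (X := shift (x (χ n)) (X (φ (ψ (χ n))))) (S := T) r
    rw [shift_ball_vol, inter_comm] at h1
    exact (hx2 (χ n)).le.trans h1
  have hT0 : 0 < volume T := by
    have h1 := vb_pos hr0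
    have h2 : 0 < vol (T ∩ ball 0 r) := by linarith
    exact (ENNReal.toReal_pos_iff.1 h2).1.trans_le (measure_mono inter_subset_left)
  have hsub : StrictMono fun n => φ (ψ (χ n)) := h.1.comp (hψ.comp hχ)
  have hTm : IsMinimizer T := by
    refine lim_minimizer (X := fun n => shift (x (χ n)) (X (φ (ψ (χ n))))) (M := M)
      (fun k => shift_good (hX _) _) (fun k => by rw [shift_vol]; exact hM _) ?_ hT hl hT0
    have : (fun n => EX (shift (x (χ n)) (X (φ (ψ (χ n)))))) = fun n => EX (X (φ (ψ (χ n)))) := by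
      funext n; exact shift_EX (hX _) _
    rw [this]
    exact hE.comp hsub.tendsto_atTop
  have hd := h.sub (hψ.comp hχ)
  have hdiv : ∀ j, Tendsto (fun n => ‖x (χ n) - a (ψ (χ n)) j‖) atTop atTop := by
    intro j
    refine tendsto_atTop_mono (fun n => hx1 (χ n) j) ?_
    exact tendsto_natCast_atTop_atTop.comp hχ.tendsto_atTop
  refine ⟨Fin.cons (α := fun _ => Set E3) T S,
    fun n => Fin.cons (α := fun _ => E3) (x (χ n)) (a (ψ (χ n))), fun n => φ (ψ (χ n)), hsub, ?_, ?_, ?_⟩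
  · intro j k
    refine Fin.cases ?_ (fun j => ?_) j <;> refine Fin.cases ?_ (fun k => ?_) k
    · intro h; exact absurd rfl h
    · intro _; simpa using hdiv k
    · intro _; simp only [Fin.cons_zero, Fin.cons_succ]
      exact (hdiv j).congr fun n => norm_sub_rev _ _
    · intro hjk; simp only [Fin.cons_succ]
      exact hd.2.1 j k (fun h => hjk (by rw [h]))
  · intro j
    refine Fin.cases ?_ (fun j => ?_) j
    · exact hTm
    · exact h.2.2.1 j
  · intro j
    refine Fin.cases ?_ (fun j => ?_) j
    · exact hl
    · exact hd.2.2.2 j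

lemma exists_full_data {X : ℕ → Set E3} (hX : ∀ n, Good (X n)) {m M P : ℝ}
    (hP : ∀ n, per (X n) ≤ P) (hM : ∀ n, vol (X n) ≤ M)
    (hE : Tendsto (fun n => EX (X n)) atTop (𝓝 0))
    (hv : Tendsto (fun n => vol (X n)) atTop (𝓝 m)) :
    ∃ K S a φ, Data X K S a φ ∧ m = ∑ j, vol (S j) := by
  by_contra hc
  push Not at hc
  have all : ∀ K, ∃ S a φ, Data X K S a φ := by
    intro K
    induction K with
    | zero => exact ⟨fun j => j.elim0, fun _ j => j.elim0, id, strictMono_id, fun j => j.elim0,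
        fun j => j.elim0, fun j => j.elim0⟩
    | succ K ih =>
      obtain ⟨S, a, φ, h⟩ := ih
      exact h.extend hX hP hM hE hv (lt_of_le_of_ne (h.mass_le hX hv) (hc K S a φ h).symm)
  have hc0 := vb_pos rr0_pos
  obtain ⟨K, hK⟩ := exists_nat_gt (m / (vb rr0 / 2))
  obtain ⟨S, a, φ, h⟩ := all K
  have h1 := h.mass_le hX hv
  have h2 : (K:ℝ) * (vb rr0 / 2) ≤ ∑ j, vol (S j) := by
    have := Finset.sum_le_sum fun j (_ : j ∈ (Finset.univ : Finset (Fin K))) => (h.2.2.1 j).mass_lower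
    simpa using this
  rw [div_lt_iff₀ (by positivity)] at hK
  linarith

lemma common_cut {K : ℕ} {Y : ℕ → Set E3} (hY : ∀ n, MF (Y n)) (a : ℕ → Fin K → E3) (T : ℝ)
    (hs : ∀ n j, vol (Y n ∩ {x | T ≤ usl (a n j) x ∧ usl (a n j) x < T + 1}) ≤ (1/4:ℝ) ^ n) :
    ∃ t, T ≤ t ∧ t ≤ T + 1 ∧ ∀ n j, CutBy (Y n) {x | usl (a n j) x < t}
      (2 * (KT * (2 * K * (1/2:ℝ) ^ n))) := by
  set f : ℝ → ℕ → ℝ := fun s n =>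
    2 ^ n * ∑ j, vol (Y n ∩ {x | T ≤ usl (a n j) x ∧ usl (a n j) x < s}) with hf
  have hf0 : ∀ s n, 0 ≤ f s n := fun s n =>
    mul_nonneg (by positivity) (Finset.sum_nonneg fun j _ => vol_nonneg)
  have hfle : ∀ s, s ≤ T + 1 → ∀ n, f s n ≤ K * (1/2:ℝ) ^ n := by
    intro s hs1 n
    have h1 : ∑ j, vol (Y n ∩ {x | T ≤ usl (a n j) x ∧ usl (a n j) x < s}) ≤ ∑ j : Fin K, (1/4:ℝ) ^ n := by
      refine Finset.sum_le_sum fun j _ => le_trans ?_ (hs n j)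
      apply vol_mono _ ((measure_mono inter_subset_left).trans_lt (hY n).2)
      rintro x ⟨hx1, hx2, hx3⟩
      exact ⟨hx1, hx2, hx3.trans_le hs1⟩
    rw [Finset.sum_const, Finset.card_univ, Fintype.card_fin, nsmul_eq_mul] at h1
    calc f s n ≤ 2 ^ n * (K * (1/4:ℝ) ^ n) := mul_le_mul_of_nonneg_left h1 (by positivity)
      _ = K * (2 * (1/4:ℝ)) ^ n := by rw [mul_pow]; ring
      _ = K * (1/2:ℝ) ^ n := by norm_num
  have hgeo : HasSum (fun n => (K:ℝ) * (1/2:ℝ) ^ n) (K * 2) := hasSum_geometric_two.mul_left _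
  have hsum : ∀ s, s ≤ T + 1 → Summable (f s) := fun s hs1 =>
    Summable.of_nonneg_of_le (hf0 s) (hfle s hs1) hgeo.summable
  obtain ⟨t, ht1, ht2, α, β, hαβ, hα, hβ, hαt, htβ, hlim, hV⟩ :=
    bisect (fun s => ∑' n, f s n) T (T + 1) (by linarith)
  refine ⟨t, ht1, ht2, fun n j => ?_⟩
  refine cut_at (usl_slice _) (hY n).2 hαβ hαt htβ hlim (fun i => ?_)
  have hVi := hV i
  have e0 : ∑' n, f (T+1) n ≤ K * 2 := by
    rw [← hgeo.tsum_eq]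
    exact (hsum _ le_rfl).tsum_le_tsum (hfle _ le_rfl) hgeo.summable
  have e1 : 0 ≤ ∑' n, f T n := tsum_nonneg (hf0 T)
  have hb : 0 < β i - α i := by linarith [hαβ i]
  have e2 : ∑' n, f (β i) n - ∑' n, f (α i) n ≤ K * 2 * (β i - α i) := by
    refine hVi.trans (mul_le_mul_of_nonneg_right ?_ hb.le)
    rw [add_sub_cancel_left, div_one]
    linarith
  have hsβ := hsum (β i) (hβ i)
  have hsα := hsum (α i) ((hαβ i).le.trans (hβ i))
  rw [← hsβ.tsum_sub hsα] at e2
  have hdiff : ∀ n, f (β i) n - f (α i) n =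
      2 ^ n * ∑ j, vol (Y n ∩ {x | α i ≤ usl (a n j) x ∧ usl (a n j) x < β i}) := by
    intro n
    simp only [hf]
    rw [← mul_sub, ← Finset.sum_sub_distrib]
    congr 1
    refine Finset.sum_congr rfl fun j _ => ?_
    have hm := (usl_slice (a n j)).1.continuous.measurable
    rw [vol_slab hm (hY n).1 (hY n).2 (hαβ i).le, vol_slab hm (hY n).1 (hY n).2 (hα i),
      vol_slab hm (hY n).1 (hY n).2 ((hα i).trans (hαβ i).le)]
    ring
  have e3 : f (β i) n - f (α i) n ≤ ∑' n, (f (β i) n - f (α i) n) :=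
    (hsβ.sub hsα).le_tsum n (fun k _ => by
      rw [hdiff]
      exact mul_nonneg (by positivity) (Finset.sum_nonneg fun j _ => vol_nonneg))
  rw [hdiff] at e3
  have e4 := Finset.single_le_sum
    (f := fun j => vol (Y n ∩ {x | α i ≤ usl (a n j) x ∧ usl (a n j) x < β i}))
    (fun j _ => vol_nonneg) (Finset.mem_univ j)
  have e5 : (2:ℝ) ^ n * vol (Y n ∩ {x | α i ≤ usl (a n j) x ∧ usl (a n j) x < β i})
      ≤ K * 2 * (β i - α i) :=
    (mul_le_mul_of_nonneg_left e4 (by positivity)).trans (e3.trans e2)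
  have e6 : (1/2:ℝ) ^ n * 2 ^ n = 1 := by rw [← mul_pow]; norm_num
  have e7 := mul_le_mul_of_nonneg_left e5 (show (0:ℝ) ≤ (1/2:ℝ) ^ n by positivity)
  rw [← mul_assoc, e6, one_mul] at e7
  linarith

lemma tendsto_volume_of_vol {Z : ℕ → Set E3} (hZ : ∀ n, volume (Z n) < ⊤)
    (h : Tendsto (fun n => vol (Z n)) atTop (𝓝 0)) : Tendsto (fun n => volume (Z n)) atTop (𝓝 0) := by
  have h1 := ENNReal.tendsto_ofReal h
  rw [ENNReal.ofReal_zero] at h1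
  refine h1.congr fun n => ?_
  exact ENNReal.ofReal_toReal (hZ n).ne

/-- the fixed radius -/
lemma fixed_radius {X : ℕ → Set E3} (hX : ∀ n, Good (X n)) {m : ℝ}
    (hE : Tendsto (fun n => EX (X n)) atTop (𝓝 0))
    (hv : Tendsto (fun n => vol (X n)) atTop (𝓝 m))
    {K : ℕ} {S : Fin K → Set E3} {a : ℕ → Fin K → E3} {φ : ℕ → ℕ} (h : Data X K S a φ)
    (hm : m = ∑ j, vol (S j)) :
    ∃ (ψ : ℕ → ℕ) (R : ℝ), StrictMono ψ ∧ 0 < R ∧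
      (∀ j, Tendsto (fun n => volume (symmDiff (shift (a (ψ n) j) (X (φ (ψ n))) ∩ ball 0 R) (S j)))
        atTop (𝓝 0)) ∧
      Tendsto (fun n => volume (X (φ (ψ n)) \ ⋃ j, ball (a (ψ n) j) R)) atTop (𝓝 0) ∧
      Tendsto (fun n => per (X (φ (ψ n)) \ ⋃ j, ball (a (ψ n) j) R)) atTop (𝓝 0) := by
  obtain ⟨R0, hR0, h0⟩ := exists_R0 h.2.2.1
  set T := R0 + 1 with hT
  have hshell : ∀ j, Tendsto (fun n => vol (X (φ n) ∩ {x | T ≤ usl (a n j) x ∧ usl (a n j) x < T + 1}))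
      atTop (𝓝 0) := by
    intro j
    refine squeeze_zero (fun n => vol_nonneg) (fun n => ?_) (toReal_tendsto (h.2.2.2 j (T+1)))
    change _ ≤ vol _
    rw [← shift_vol (a n j)]
    have hnull : vol (symmDiff (shift (a n j) (X (φ n))) (S j) ∩ ball 0 (T + 1) ∪ (S j \ ball 0 R0))
      = vol (symmDiff (shift (a n j) (X (φ n))) (S j) ∩ ball 0 (T + 1)) := by
      unfold vol
      congr 1
      apply le_antisymm
      · refine (measure_union_le _ _).trans ?_
        rw [h0 j, add_zero]
      · exact measure_mono subset_union_left
    rw [← hnull]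
    apply vol_mono
    · intro x hx
      have hx' : x + a n j ∈ X (φ n) ∧ T ≤ usl (a n j) (x + a n j) ∧ usl (a n j) (x + a n j) < T + 1 := hx
      obtain ⟨hx1, hx2, hx3⟩ := hx'
      have u1 := usl_le (a n j) (x + a n j)
      have u2 := norm_le_usl (a n j) (x + a n j)
      rw [add_sub_cancel_right] at u1 u2
      have b1 : x ∈ ball (0:E3) (T+1) := by rw [mem_ball_zero_iff]; linarith
      have b2 : x ∉ ball (0:E3) R0 := by rw [mem_ball_zero_iff]; linarith
      by_cases hS : x ∈ S j
      · exact Or.inr ⟨hS, b2⟩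
      · exact Or.inl ⟨Or.inl ⟨hx1, hS⟩, b1⟩
    · refine (measure_union_le _ _).trans_lt ?_
      rw [h0 j, add_zero]
      exact (measure_mono inter_subset_right).trans_lt (ball_vol_fin 0 _)
  obtain ⟨ψ, hψ, hψ2⟩ := extraction_forall_of_eventually (P := fun k n => ∀ j,
      vol (X (φ n) ∩ {x | T ≤ usl (a n j) x ∧ usl (a n j) x < T + 1}) ≤ (1/4:ℝ) ^ k) (fun k => by
    rw [eventually_all]
    intro j
    exact (hshell j).eventually_le_const (by positivity))
  have hd := h.sub hψ
  set Y : ℕ → Set E3 := fun n => X (φ (ψ n)) with hYdef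
  set b : ℕ → Fin K → E3 := fun n => a (ψ n) with hb
  have hY : ∀ n, Good (Y n) := fun n => hX _
  obtain ⟨t, ht1, ht2, hcut⟩ := common_cut (Y := Y) (fun n => (hY n).mf) b T hψ2
  have ht : 1 ≤ t := by linarith
  set R := Real.sqrt (t ^ 2 - 1) with hR
  have hRR : R0 ≤ R := by linarith [le_rad ht]
  have hSR : ∀ j, volume (S j \ ball 0 R) = 0 := fun j =>
    measure_mono_null (sdiff_subset_sdiff_right (ball_subset_ball hRR)) (h0 j)
  simp_rw [usl_ball ht] at hcut
  have hmb : ∀ n, MeasurableSet (⋃ j, ball (b n j) R) := fun n =>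
    MeasurableSet.iUnion fun j => measurableSet_ball
  have hYv : Tendsto (fun n => vol (Y n)) atTop (𝓝 m) := hv.comp hd.1.tendsto_atTop
  have hYE : Tendsto (fun n => EX (Y n)) atTop (𝓝 0) := hE.comp hd.1.tendsto_atTop
  have hvr : Tendsto (fun n => vol (Y n \ ⋃ j, ball (b n j) R)) atTop (𝓝 0) := by
    have ht : Tendsto (fun n => vol (Y n) - m +
      ∑ j, vol (symmDiff (shift (b n j) (Y n)) (S j) ∩ ball 0 R)) atTop (𝓝 (m - m + ∑ j : Fin K, 0)) :=
      (hYv.sub_const m).add (tendsto_finsetSum _ fun j _ => toReal_tendsto (hd.2.2.2 j R))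
    rw [Finset.sum_const_zero, add_zero, sub_self] at ht
    refine squeeze_zero' (Eventually.of_forall fun n => vol_nonneg) ?_ ht
    filter_upwards [hd.eventually_sep (2 * R)] with n hn
    have h1 := vol_split (hY n).mf (fun j => ball (b n j) R) (fun j => measurableSet_ball)
      (fun j k hjk => balls_disj (hn j k hjk))
    have h2 : ∀ j, vol (S j) ≤ vol (Y n ∩ ball (b n j) R) +
        vol (symmDiff (shift (b n j) (Y n)) (S j) ∩ ball 0 R) := by
      intro j
      have h3 := vol_ball_inter_le (X := shift (b n j) (Y n)) (S := S j)
        (shift_good (hY _) _).2.2 R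
      rw [shift_ball_vol, vol_inter_of_null measurableSet_ball (hSR j)] at h3
      exact h3
    have h3 := Finset.sum_le_sum fun j (_ : j ∈ Finset.univ) => h2 j
    rw [Finset.sum_add_distrib, ← hm] at h3
    linarith
  refine ⟨ψ, R, hψ, by linarith, fun j => ?_, ?_, ?_⟩
  · refine tendsto_of_tendsto_of_tendsto_of_le_of_le tendsto_const_nhds (hd.2.2.2 j R)
      (fun n => zero_le) (fun n => ?_)
    have : symmDiff (shift (b n j) (Y n) ∩ ball 0 R) (S j) ⊆
        (symmDiff (shift (b n j) (Y n)) (S j) ∩ ball 0 R) ∪ (S j \ ball 0 R) := by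
      rintro x (⟨⟨hx1, hx2⟩, hx3⟩ | ⟨hx1, hx2⟩)
      · exact Or.inl ⟨Or.inl ⟨hx1, hx3⟩, hx2⟩
      · by_cases hx3 : x ∈ ball (0:E3) R
        · exact Or.inl ⟨Or.inr ⟨hx1, fun hx4 => hx2 ⟨hx4, hx3⟩⟩, hx3⟩
        · exact Or.inr ⟨hx1, hx3⟩
    refine (measure_mono this).trans ((measure_union_le _ _).trans ?_)
    rw [hSR j, add_zero]
  · exact tendsto_volume_of_vol (fun n => ((hY n).mf.diff (hmb n)).2) hvr
  · have hq : Tendsto (fun n : ℕ => ∑ j : Fin K, 2 * (KT * (2 * K * (1/2:ℝ) ^ n))) atTop (𝓝 (∑ j : Fin K, 0)) := by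
      refine tendsto_finsetSum _ fun j _ => ?_
      have := (tendsto_pow_atTop_nhds_zero_of_lt_one (r := (1/2:ℝ)) (by norm_num) (by norm_num)).const_mul (2 * KT * (2 * K))
      rw [mul_zero] at this
      refine this.congr fun n => by ring
    rw [Finset.sum_const_zero] at hq
    have ht : Tendsto (fun n => EX (Y n) + (∑ j : Fin K, 2 * (KT * (2 * K * (1/2:ℝ) ^ n)))
      + muStar * vol (Y n \ ⋃ j, ball (b n j) R)) atTop (𝓝 (0 + 0 + muStar * 0)) :=
      (hYE.add hq).add (hvr.const_mul _)
    rw [mul_zero, add_zero, add_zero] at ht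
    refine squeeze_zero' (Eventually.of_forall fun n => per_nonneg) ?_ ht
    filter_upwards [hd.eventually_sep (2 * R)] with n hn
    obtain ⟨g1, h1⟩ := multi_cut (fun j => ball (b n j) R) (fun j => measurableSet_ball)
      (fun j k hjk => balls_disj (hn j k hjk)) (fun j => 2 * (KT * (2 * K * (1/2:ℝ) ^ n)))
      Finset.univ (Y n) (hY n) (fun j => hcut n j)
    simp only [Finset.mem_univ, iUnion_true] at g1 h1
    have h2 : 0 ≤ ∑ j, EX (Y n ∩ ball (b n j) R) :=
      Finset.sum_nonneg fun j _ => EX_nonneg ((hcut n j) _ Subset.rfl (hY n)).1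
    have h3 : 0 ≤ ∑ j, ∑ k, if j < k then DD (Y n ∩ ball (b n j) R) (Y n ∩ ball (b n k) R) else 0 :=
      Finset.sum_nonneg fun j _ => Finset.sum_nonneg fun k _ => by
        split_ifs
        · exact DD_nonneg
        · exact le_rfl
    have h4 := per_le_II g1.2.2
    have h5 : II (Y n \ ⋃ j, ball (b n j) R) = EX (Y n \ ⋃ j, ball (b n j) R) +
      muStar * vol (Y n \ ⋃ j, ball (b n j) R) := by unfold EX; ring
    change per (Y n \ ⋃ j, ball (b n j) R) ≤ _
    linarith

def pairSum {K : ℕ} (f : Fin K → Fin K → ℝ) : ℝ := ∑ j, ∑ k, if j < k then f j k else 0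

lemma pairSum_le {K : ℕ} {f g : Fin K → Fin K → ℝ} (h : ∀ j k, j < k → f j k ≤ g j k) :
    pairSum f ≤ pairSum g := by
  refine Finset.sum_le_sum fun j _ => Finset.sum_le_sum fun k _ => ?_
  split_ifs with hjk
  · exact h j k hjk
  · exact le_rfl

lemma le_pairSum {K : ℕ} {f : Fin K → Fin K → ℝ} (h : ∀ j k, j < k → 0 ≤ f j k) {j k : Fin K}
    (hjk : j < k) : f j k ≤ pairSum f := by
  have h0 : ∀ j k, 0 ≤ if j < k then f j k else 0 := by
    intro j k; split_ifs with hh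
    · exact h j k hh
    · exact le_rfl
  have h1 := Finset.single_le_sum (f := fun k => if j < k then f j k else 0)
    (fun k _ => h0 j k) (Finset.mem_univ k)
  have h2 := Finset.single_le_sum (f := fun j => ∑ k, if j < k then f j k else 0)
    (fun j _ => Finset.sum_nonneg fun k _ => h0 j k) (Finset.mem_univ j)
  simp only [if_pos hjk] at h1
  exact h1.trans h2

lemma pairSum_sub {K : ℕ} (f g : Fin K → Fin K → ℝ) :
    pairSum (fun j k => f j k - g j k) = pairSum f - pairSum g := by
  unfold pairSum
  rw [← Finset.sum_sub_distrib]
  refine Finset.sum_congr rfl fun j _ => ?_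
  rw [← Finset.sum_sub_distrib]
  refine Finset.sum_congr rfl fun k _ => ?_
  split_ifs <;> ring

lemma pairSum_mul {K : ℕ} (c : ℝ) (f : Fin K → Fin K → ℝ) :
    pairSum (fun j k => c * f j k) = c * pairSum f := by
  unfold pairSum
  rw [Finset.mul_sum]
  refine Finset.sum_congr rfl fun j _ => ?_
  rw [Finset.mul_sum]
  refine Finset.sum_congr rfl fun k _ => ?_
  split_ifs <;> ring

lemma pairSum_tendsto {K : ℕ} {f : ℕ → Fin K → Fin K → ℝ} {g : Fin K → Fin K → ℝ}
    (h : ∀ j k, j < k → Tendsto (fun n => f n j k) atTop (𝓝 (g j k))) :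
    Tendsto (fun n => pairSum (f n)) atTop (𝓝 (pairSum g)) := by
  refine tendsto_finsetSum _ fun j _ => tendsto_finsetSum _ fun k _ => ?_
  split_ifs with hjk
  · exact h j k hjk
  · exact tendsto_const_nhds

lemma pairSum_zero {K : ℕ} : pairSum (fun _ _ : Fin K => (0:ℝ)) = 0 := by
  simp [pairSum]

lemma repulsion {Y : ℕ → Set E3} (hY : ∀ n, Good (Y n)) {K : ℕ} {b : ℕ → Fin K → E3} {R : ℝ}
    (hR : 0 < R) (hsep : ∀ j k, j ≠ k → Tendsto (fun n => ‖b n j - b n k‖) atTop atTop)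
    (V : Fin K → ℝ) (hv : ∀ j, Tendsto (fun n => vol (Y n ∩ ball (b n j) R)) atTop (𝓝 (V j)))
    (hr : Tendsto (fun n => vol (Y n \ ⋃ j, ball (b n j) R)) atTop (𝓝 0)) (hK : 2 ≤ K) :
    ∃ ε : ℕ → ℝ, Tendsto ε atTop (𝓝 0) ∧ ∀ᶠ n in atTop,
      pairSum (fun j k => (V j * V k + ε n) / ‖b n j - b n k‖) ≤ EX (Y n) := by
  have hKT := KT_nn
  set s : ℕ → ℝ := fun n => vol (Y n \ ⋃ j, ball (b n j) R) with hs
  set v : ℕ → Fin K → ℝ := fun n j => vol (Y n ∩ ball (b n j) R) with hvd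
  set d : ℕ → Fin K → Fin K → ℝ := fun n j k => ‖b n j - b n k‖ with hdd
  set p : ℕ → ℝ := fun n => pairSum (fun j k => 1 / d n j k) with hp
  set c : ℝ := 12 * K * KT with hc
  have hinv : ∀ j k, j < k → Tendsto (fun n => 1 / d n j k) atTop (𝓝 0) := by
    intro j k hjk
    simp_rw [one_div]
    exact tendsto_inv_atTop_zero.comp (hsep j k hjk.ne)
  have hp0 : Tendsto p atTop (𝓝 0) := by
    have := pairSum_tendsto (f := fun n j k => 1 / d n j k) (g := fun _ _ => 0) hinv
    rwa [pairSum_zero] at this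
  set e : ℕ → Fin K → Fin K → ℝ := fun n j k =>
    v n j * v n k * (1 - 2 * R * (1 / d n j k)) - c * s n - V j * V k with he
  have he0 : ∀ j k, j < k → Tendsto (fun n => |e n j k|) atTop (𝓝 0) := by
    intro j k hjk
    have h1 : Tendsto (fun n => e n j k) atTop
        (𝓝 (V j * V k * (1 - 2 * R * 0) - c * 0 - V j * V k)) :=
      ((((hv j).mul (hv k)).mul (((hinv j k hjk).const_mul (2 * R)).const_sub 1)).sub
        (hr.const_mul c)).sub_const _
    have h2 := h1.abs
    rwa [show V j * V k * (1 - 2 * R * 0) - c * 0 - V j * V k = 0 by ring, abs_zero] at h2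
  refine ⟨fun n => - pairSum (fun j k => |e n j k|), ?_, ?_⟩
  · have := (pairSum_tendsto (f := fun n j k => |e n j k|) (g := fun _ _ => 0) he0).neg
    rwa [pairSum_zero, neg_zero] at this
  have hsepev : ∀ᶠ n in atTop, ∀ j k, j ≠ k → 1 ≤ d n j k := by
    rw [eventually_all]; intro j
    rw [eventually_all]; intro k
    by_cases hjk : j = k
    · exact Eventually.of_forall fun n hn => absurd hjk hn
    · exact ((hsep j k hjk).eventually_ge_atTop 1).mono fun n hn _ => hn
  filter_upwards [hsepev, hp0.eventually_lt_const (show (0:ℝ) < 1 / (6 * (R + 1)) by positivity)] with n hn hpn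
  have hs0 : 0 ≤ s n := vol_nonneg
  have hpos : ∀ j k : Fin K, j < k → 0 < d n j k := fun j k hjk => by linarith [hn j k hjk.ne]
  have hple : ∀ j k : Fin K, j < k → 1 / d n j k ≤ p n := fun j k hjk =>
    le_pairSum (f := fun j k => 1 / d n j k) (fun j k hjk => by have := hpos j k hjk; positivity) hjk
  have hpp : 0 < p n := by
    have h01 : (⟨0, by omega⟩ : Fin K) < ⟨1, by omega⟩ := by simp
    have h1 := hple _ _ h01
    have h2 := hpos _ _ h01
    have : 0 < 1 / d n ⟨0, by omega⟩ ⟨1, by omega⟩ := by positivity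
    linarith
  set D := 1 / (3 * p n) with hD
  have hD0 : 0 < D := by positivity
  have hDbig : 2 * (R + 1) ≤ D := by
    rw [hD, le_div_iff₀ (by positivity)]
    rw [lt_div_iff₀ (by positivity)] at hpn
    nlinarith
  have hDd' : ∀ j k : Fin K, j < k → 2 * D ≤ d n j k := by
    intro j k hjk
    have h1 := hple j k hjk
    have h2 := hpos j k hjk
    rw [div_le_iff₀ h2] at h1
    have h3 : D * (3 * p n) = 1 := by rw [hD]; field_simp
    have h4 : D * 1 ≤ D * (p n * d n j k) := mul_le_mul_of_nonneg_left h1 hD0.le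
    have h5 : D * (p n * d n j k) = d n j k / 3 := by
      have : D * (p n * d n j k) = (D * (3 * p n)) * d n j k / 3 := by ring
      rw [this, h3, one_mul]
    linarith
  have hDd : ∀ j k : Fin K, j ≠ k → 2 * D ≤ ‖b n j - b n k‖ := by
    intro j k hjk
    rcases lt_or_gt_of_ne hjk with h | h
    · exact hDd' j k h
    · rw [norm_sub_rev]; exact hDd' k j h
  have hcut : ∀ j, ∃ r, R ≤ r ∧ r ≤ D ∧ CutBy (Y n) (ball (b n j) r) (12 * KT * s n * p n) := by
    intro j
    obtain ⟨r, h1, h2, h3⟩ := ball_cut (hY n).mf (b n j) hR.le (show R + 1 < D by linarith)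
    refine ⟨r, h1, h2, h3.mono Subset.rfl ?_⟩
    have h4 : vol (Y n ∩ (ball (b n j) D \ ball (b n j) R)) ≤ s n := by
      apply vol_mono
      · rintro x ⟨hx1, hx2, hx3⟩
        refine ⟨hx1, fun hx4 => ?_⟩
        obtain ⟨k, hk⟩ := mem_iUnion.1 hx4
        by_cases hjk : j = k
        · rw [hjk] at hx3; exact hx3 hk
        · exact Set.disjoint_left.1 (balls_disj (hDd j k hjk)) hx2 (ball_subset_ball (by linarith) hk)
      · exact (measure_mono sdiff_subset).trans_lt (hY n).2.2
    have h5 : D / 2 ≤ D - 1 - R := by linarith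
    calc 2 * KT * vol (Y n ∩ (ball (b n j) D \ ball (b n j) R)) / (D - 1 - R)
        ≤ 2 * KT * s n / (D / 2) := by
          apply div_le_div₀ (by positivity) _ (by positivity) h5
          exact mul_le_mul_of_nonneg_left h4 (by positivity)
      _ = 12 * KT * s n * p n := by rw [hD]; field_simp; ring
  choose r hr1 hr2 hr3 using hcut
  obtain ⟨g1, h1⟩ := multi_cut (fun j => ball (b n j) (r j)) (fun j => measurableSet_ball)
      (fun j k hjk => (balls_disj (hDd j k hjk)).mono (ball_subset_ball (hr2 j)) (ball_subset_ball (hr2 k)))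
      (fun j => 12 * KT * s n * p n) Finset.univ (Y n) (hY n) hr3
  have h2 : 0 ≤ ∑ j, EX (Y n ∩ ball (b n j) (r j)) :=
      Finset.sum_nonneg fun j _ => EX_nonneg ((hr3 j) _ Subset.rfl (hY n)).1
  have h3 := EX_nonneg g1
  change _ + _ + pairSum (fun j k => DD (Y n ∩ ball (b n j) (r j)) (Y n ∩ ball (b n k) (r k))) ≤ _ at h1
  rw [Finset.sum_const, Finset.card_univ, Fintype.card_fin, nsmul_eq_mul] at h1
  have hmf : ∀ j (ρ : ℝ), MF (Y n ∩ ball (b n j) ρ) := fun j ρ => (hY n).mf.inter measurableSet_ball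
  have h4 : pairSum (fun j k => v n j * v n k * (1 - 2 * R * (1 / d n j k)) * (1 / d n j k)) ≤
      pairSum (fun j k => DD (Y n ∩ ball (b n j) (r j)) (Y n ∩ ball (b n k) (r k))) := by
    apply pairSum_le
    intro j k hjk
    have hd0 := hpos j k hjk
    have l1 := DD_mono (hmf j (r j)).2 (hmf k (r k)).2
      (inter_subset_inter_right (Y n) (ball_subset_ball (x := b n j) (hr1 j)))
      (inter_subset_inter_right (Y n) (ball_subset_ball (x := b n k) (hr1 k)))
    have l2 := DD_lower (hmf j R) (hmf k R) (d := d n j k + 2 * R) (by positivity) (by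
      rintro x ⟨-, hx⟩ y ⟨-, hy⟩
      rw [mem_ball, dist_eq_norm] at hx hy
      have : x - y = (x - b n j) + (b n j - b n k) - (y - b n k) := by abel
      rw [this]
      have t1 := norm_sub_le ((x - b n j) + (b n j - b n k)) (y - b n k)
      have t2 := norm_add_le (x - b n j) (b n j - b n k)
      simp only [hdd]
      linarith)
    refine le_trans ?_ (l2.trans l1)
    have hvv : 0 ≤ v n j * v n k := mul_nonneg vol_nonneg vol_nonneg
    rw [mul_assoc, div_eq_mul_one_div (vol _ * vol _) (d n j k + 2 * R)]
    refine mul_le_mul_of_nonneg_left ?_ hvv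
    have e1 : (1 - 2 * R * (1 / d n j k)) * (1 / d n j k) = (d n j k - 2 * R) / (d n j k) ^ 2 := by
      field_simp
    rw [e1, div_le_div_iff₀ (by positivity) (by positivity)]
    nlinarith [sq_nonneg R]
  have h5 : pairSum (fun j k => (V j * V k + - pairSum (fun j k => |e n j k|)) / ‖b n j - b n k‖) ≤
      pairSum (fun j k => v n j * v n k * (1 - 2 * R * (1 / d n j k)) * (1 / d n j k)
        - (c * s n) * (1 / d n j k)) := by
    apply pairSum_le
    intro j k hjk
    have hd0 := hpos j k hjk
    have l1 := le_pairSum (f := fun j k => |e n j k|) (fun _ _ _ => abs_nonneg _) hjk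
    have l2 := neg_abs_le (e n j k)
    have l3 : e n j k = v n j * v n k * (1 - 2 * R * (1 / d n j k)) - c * s n - V j * V k := rfl
    rw [← sub_mul, div_eq_mul_one_div]
    apply mul_le_mul_of_nonneg_right _ (show 0 ≤ 1 / d n j k by positivity)
    linarith
  rw [pairSum_sub, pairSum_mul] at h5
  change _ ≤ _ - c * s n * p n at h5
  have h6 : c * s n * p n = K * (12 * KT * s n * p n) := by rw [hc]; ring
  linarith

lemma IsDecomp.sub {Ω : ℕ → Set E3} {m : ℝ} {K : ℕ} {S : Fin K → Set E3} {a : ℕ → Fin K → E3}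
    {R : ℝ} {φ : ℕ → ℕ} (h : IsDecomp Ω m K S a R φ) {ψ : ℕ → ℕ} (hψ : StrictMono ψ) :
    IsDecomp Ω m K S (fun n => a (ψ n)) R (fun n => φ (ψ n)) := by
  obtain ⟨h1, h2, h3, h4, h5, h6, h7, h8, h9, h10⟩ := h
  have ht := hψ.tendsto_atTop
  refine ⟨h1.comp hψ, h2, fun j k hjk => (h3 j k hjk).comp ht, h4, h5, fun j => (h6 j).comp ht,
    h7.comp ht, h8.comp ht, h9, fun hK => ?_⟩
  obtain ⟨ε, he, hb⟩ := h10 hK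
  exact ⟨fun n => ε (ψ n), he.comp ht, fun n => hb (ψ n)⟩

lemma vol_ball_tendsto {Y : ℕ → Set E3} (hY : ∀ n, Good (Y n)) {b : ℕ → E3} {R : ℝ} {S : Set E3}
    (hS : volume S < ⊤)
    (h : Tendsto (fun n => volume (symmDiff (shift (b n) (Y n) ∩ ball 0 R) S)) atTop (𝓝 0)) :
    Tendsto (fun n => vol (Y n ∩ ball (b n) R)) atTop (𝓝 (vol S)) := by
  have h1 := toReal_tendsto h
  have hl := h1.const_sub (vol S)
  have hu := h1.const_add (vol S)
  rw [sub_zero] at hl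
  rw [add_zero] at hu
  have fA : ∀ n, volume (shift (b n) (Y n) ∩ ball 0 R) < ⊤ := fun n =>
    (measure_mono inter_subset_right).trans_lt (ball_vol_fin 0 R)
  have fD : ∀ n, volume (symmDiff (shift (b n) (Y n) ∩ ball 0 R) S) < ⊤ := fun n =>
    (measure_mono (symmDiff_le_sup : symmDiff (shift (b n) (Y n) ∩ ball 0 R) S ≤ _)).trans_lt
      ((measure_union_le _ _).trans_lt (ENNReal.add_lt_top.2 ⟨fA n, hS⟩))
  refine tendsto_of_tendsto_of_tendsto_of_le_of_le hl hu (fun n => ?_) (fun n => ?_)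
  · have := vol_le_symm (fA n) (fD n)
    rw [shift_ball_vol] at this
    change vol S - vol _ ≤ _
    linarith
  · have := vol_le_symm (A := S) (B := shift (b n) (Y n) ∩ ball 0 R) hS (by rw [symmDiff_comm]; exact fD n)
    rw [shift_ball_vol, symmDiff_comm] at this
    exact this

theorem decomposition {X : ℕ → Set E3} (hX : ∀ n, Good (X n)) {m M P : ℝ}
    (hP : ∀ n, per (X n) ≤ P) (hM : ∀ n, vol (X n) ≤ M)
    (hE : Tendsto (fun n => EX (X n)) atTop (𝓝 0))
    (hv : Tendsto (fun n => vol (X n)) atTop (𝓝 m)) :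
    ∃ K S a R φ, IsDecomp X m K S a R φ := by
  obtain ⟨K, S, a, φ, hd, hm⟩ := exists_full_data hX hP hM hE hv
  obtain ⟨ψ, R, hψ, hR, h1, h2, h3⟩ := fixed_radius hX hE hv hd hm
  have hd' := hd.sub hψ
  have main : ∃ N : ℕ, (2 ≤ K → ∃ ε : ℕ → ℝ, Tendsto ε atTop (𝓝 0) ∧ ∀ n ≥ N,
      pairSum (fun j k => (vol (S j) * vol (S k) + ε n) / ‖a (ψ n) j - a (ψ n) k‖)
        ≤ EX (X (φ (ψ n)))) := by
    by_cases hK : 2 ≤ K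
    · obtain ⟨ε, he, hev⟩ := repulsion (Y := fun n => X (φ (ψ n))) (fun n => hX _)
        (b := fun n => a (ψ n)) hR hd'.2.1 (fun j => vol (S j))
        (fun j => vol_ball_tendsto (fun n => hX _) (hd.2.2.1 j).2.2.2.1 (h1 j))
        (toReal_tendsto h2) hK
      obtain ⟨N, hN⟩ := eventually_atTop.1 hev
      exact ⟨N, fun _ => ⟨ε, he, hN⟩⟩
    · exact ⟨0, fun h => absurd h hK⟩
  obtain ⟨N, hN⟩ := main
  have hs : StrictMono fun n : ℕ => n + N := fun a b h => by simpa using h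
  have ht := hs.tendsto_atTop
  refine ⟨K, S, fun n => a (ψ (n + N)), R, fun n => φ (ψ (n + N)), hd'.1.comp hs, hR,
    fun j k hjk => (hd'.2.1 j k hjk).comp ht, hd.2.2.1, fun j => (hd.2.2.1 j).mass_between,
    fun j => (h1 j).comp ht, h2.comp ht, h3.comp ht, hm, fun hK => ?_⟩
  obtain ⟨ε, he, hb⟩ := hN hK
  refine ⟨fun n => ε (n + N), he.comp ht, fun n => ?_⟩
  have := hb (n + N) (by omega)
  unfold EX at this
  change muStar * vol (X (φ (ψ (n + N)))) + pairSum (fun j k =>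
    (vol (S j) * vol (S k) + ε (n + N)) / ‖a (ψ (n + N)) j - a (ψ (n + N)) k‖) ≤ _
  linarith

theorem main_thm (A : Set E3) (hAb : IsBounded A)
    (Ω : ℕ → Set E3) (hmeas : ∀ n, MeasurableSet (Ω n)) (hper : ∀ n, HasFinPer (Ω n))
    (hfin : ∀ n, volume (Ω n) < ⊤)
    (ℓ : ℕ → ℝ) (hℓ : Tendsto ℓ atTop atTop) (hsub : ∀ n, Ω n ⊆ ℓ n • A)
    (m : ℝ) (hm : 0 < m) (hvol : Tendsto (fun n => vol (Ω n)) atTop (𝓝 m))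
    (C : ℝ) (hI : ∀ n, II (Ω n) ≤ muStar * vol (Ω n) + C / ℓ n) :
    ∃ (K : ℕ) (Ωs : Fin K → Set E3) (a : ℕ → Fin K → E3) (R : ℝ) (φ : ℕ → ℕ)
      (y : Fin K → E3),
      1 ≤ K ∧ IsDecomp Ω m K Ωs a R φ ∧
      (∀ j, Tendsto (fun n => (ℓ (φ n))⁻¹ • a n j) atTop (𝓝 (y j))) ∧
      Function.Injective y ∧ (∀ j, y j ∈ closure A) ∧
      (2 ≤ K → ∃ ε : ℕ → ℝ, Tendsto ε atTop (𝓝 0) ∧ ∀ n : ℕ,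
        muStar * vol (Ω (φ n)) + (1 / ℓ (φ n)) *
            (∑ j : Fin K, ∑ k : Fin K,
              if j < k then vol (Ωs j) * vol (Ωs k) / ‖y j - y k‖ else 0)
          + ε n / ℓ (φ n) ≤ II (Ω (φ n))) := by
  have hG : ∀ n, Good (Ω n) := fun n => ⟨hmeas n, hper n, hfin n⟩
  have hCl : Tendsto (fun n => C / ℓ n) atTop (𝓝 0) := hℓ.const_div_atTop C
  have hEX : ∀ n, EX (Ω n) ≤ C / ℓ n := fun n => by unfold EX; linarith [hI n]
  have hE : Tendsto (fun n => EX (Ω n)) atTop (𝓝 0) := squeeze_zero (fun n => EX_nonneg (hG n)) hEX hCl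
  obtain ⟨M, hM⟩ := hvol.bddAbove_range
  obtain ⟨P, hP⟩ := ((hvol.const_mul muStar).add hCl).bddAbove_range
  obtain ⟨K, S, a, R, φ, hdec⟩ := decomposition hG (m := m) (M := M) (P := P)
    (fun n => (per_le_II (hfin n)).trans ((hI n).trans (hP (mem_range_self n))))
    (fun n => hM (mem_range_self n)) hE hvol
  -- first subsequence: all scales at least one, all droplets nonempty
  have hVpos : ∀ j, 0 < vol (S j) := fun j => (hdec.2.2.2.1 j).vol_pos
  have hev : ∀ᶠ n in atTop, 1 ≤ ℓ (φ n) ∧ ∀ j, 0 < vol (Ω (φ n) ∩ ball (a n j) R) := by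
    refine ((hℓ.comp hdec.1.tendsto_atTop).eventually_ge_atTop 1).and ?_
    rw [eventually_all]
    intro j
    exact (vol_ball_tendsto (Y := fun n => Ω (φ n)) (fun n => hG _) (hdec.2.2.2.1 j).2.2.2.1
      (hdec.2.2.2.2.2.1 j)).eventually_const_lt (hVpos j)
  obtain ⟨N, hN⟩ := eventually_atTop.1 hev
  have hs : StrictMono fun n : ℕ => n + N := fun a b h => by simpa using h
  have hdec1 := hdec.sub hs
  have hN' : ∀ n, 1 ≤ ℓ (φ (n + N)) ∧ ∀ j, 0 < vol (Ω (φ (n + N)) ∩ ball (a (n + N) j) R) :=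
    fun n => hN _ (by omega)
  clear hN hev
  have hpt : ∀ n j, ∃ w ∈ A, ‖(ℓ (φ (n + N)))⁻¹ • a (n + N) j - w‖ ≤ R / ℓ (φ (n + N)) := by
    intro n j
    have h1 := (hN' n).2 j
    have hl := (hN' n).1
    have hl0 : 0 < ℓ (φ (n + N)) := by linarith
    have hne : (Ω (φ (n + N)) ∩ ball (a (n + N) j) R).Nonempty := by
      rw [nonempty_iff_ne_empty]
      intro h
      rw [h] at h1
      simp [vol] at h1
    obtain ⟨x, hx1, hx2⟩ := hne
    obtain ⟨w, hw, hwx⟩ := hsub _ hx1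
    refine ⟨w, hw, ?_⟩
    have e1 : (ℓ (φ (n + N)))⁻¹ • a (n + N) j - w = (ℓ (φ (n + N)))⁻¹ • (a (n + N) j - x) := by
      rw [← hwx, smul_sub]
      simp only
      rw [inv_smul_smul₀ hl0.ne']
    rw [e1, norm_smul, norm_inv, Real.norm_of_nonneg hl0.le, div_eq_inv_mul]
    rw [mem_ball, dist_comm, dist_eq_norm] at hx2
    exact mul_le_mul_of_nonneg_left hx2.le (by positivity)
  choose w hwA hw using hpt
  have hR : 0 < R := hdec.2.1
  obtain ⟨B, hB⟩ := hAb.exists_norm_le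
  have hbd : ∀ n, (fun j => (ℓ (φ (n + N)))⁻¹ • a (n + N) j) ∈ closedBall (0 : Fin K → E3) (|B| + R) := by
    intro n
    rw [mem_closedBall_zero_iff, pi_norm_le_iff_of_nonneg (by positivity)]
    intro j
    have h1 := hw n j
    have h2 := hB _ (hwA n j)
    have hl := (hN' n).1
    have h3 : R / ℓ (φ (n + N)) ≤ R := div_le_self hR.le hl
    have h4 := norm_le_norm_sub_add ((ℓ (φ (n + N)))⁻¹ • a (n + N) j) (w n j)
    have := le_abs_self B
    linarith
  obtain ⟨y, -, χ, hχ, hy⟩ := tendsto_subseq_of_bounded isBounded_closedBall hbd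
  have hdec2 := hdec1.sub hχ
  set φ' : ℕ → ℕ := fun n => φ (χ n + N) with hφ'
  set b : ℕ → Fin K → E3 := fun n => a (χ n + N) with hb
  have hdec3 : IsDecomp Ω m K S b R φ' := hdec2
  have hl1 : ∀ n, 1 ≤ ℓ (φ' n) := fun n => (hN' (χ n)).1
  have hl0 : ∀ n, 0 < ℓ (φ' n) := fun n => by linarith [hl1 n]
  have hlt : Tendsto (fun n => ℓ (φ' n)) atTop atTop := hℓ.comp hdec3.1.tendsto_atTop
  have hyj : ∀ j, Tendsto (fun n => (ℓ (φ' n))⁻¹ • b n j) atTop (𝓝 (y j)) := fun j =>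
    (tendsto_pi_nhds.1 hy) j
  have hz : ∀ n j k, ‖(ℓ (φ' n))⁻¹ • b n j - (ℓ (φ' n))⁻¹ • b n k‖ = ‖b n j - b n k‖ / ℓ (φ' n) := by
    intro n j k
    rw [← smul_sub, norm_smul, norm_inv, Real.norm_of_nonneg (hl0 n).le, div_eq_inv_mul]
  have hzt : ∀ j k, Tendsto (fun n => ‖b n j - b n k‖ / ℓ (φ' n)) atTop (𝓝 ‖y j - y k‖) := by
    intro j k
    exact ((hyj j).sub (hyj k)).norm.congr fun n => hz n j k
  have hrep : 2 ≤ K → ∃ ε : ℕ → ℝ, Tendsto ε atTop (𝓝 0) ∧ ∀ n,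
      pairSum (fun j k => (vol (S j) * vol (S k) + ε n) / ‖b n j - b n k‖) ≤ EX (Ω (φ' n)) := by
    intro hK
    obtain ⟨ε, he, hbd⟩ := hdec3.2.2.2.2.2.2.2.2.2 hK
    refine ⟨ε, he, fun n => ?_⟩
    have h1 := hbd n
    unfold EX pairSum
    linarith
  have hlt' : ∀ j k : Fin K, j < k → y j ≠ y k := by
    intro j k hjk hjk'
    have hK : 2 ≤ K := by
      have := j.2; have := k.2; have : (j:ℕ) < k := hjk; omega
    obtain ⟨ε, he, hbd⟩ := hrep hK
    have hVV : ∀ j k, 0 < vol (S j) * vol (S k) := fun j k => mul_pos (hVpos j) (hVpos k)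
    have hee : ∀ᶠ n in atTop, ∀ j k, -(vol (S j) * vol (S k) / 2) < ε n := by
      rw [eventually_all]; intro j
      rw [eventually_all]; intro k
      exact he.eventually_const_lt (by have := hVV j k; linarith)
    have hlim : vol (S j) * vol (S k) / 2 ≤ C * ‖y j - y k‖ := by
      refine ge_of_tendsto ((hzt j k).const_mul C) ?_
      filter_upwards [hee, (hdec3.2.2.1 j k hjk.ne).eventually_gt_atTop 0] with n hn hd0
      have h1 := le_pairSum (f := fun j k => (vol (S j) * vol (S k) + ε n) / ‖b n j - b n k‖)
        (fun j k _ => div_nonneg (by have := hn j k; have := hVV j k; linarith) (norm_nonneg _)) hjk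
      have h2 := (h1.trans (hbd n)).trans (hEX (φ' n))
      rw [div_le_div_iff₀ hd0 (hl0 n)] at h2
      have h3 := hn j k
      rw [← mul_div_assoc, le_div_iff₀ (hl0 n)]
      refine le_trans ?_ h2
      apply mul_le_mul_of_nonneg_right _ (hl0 n).le
      linarith
    rw [hjk', sub_self, norm_zero, mul_zero] at hlim
    linarith [hVV j k]
  have hinj : Function.Injective y := by
    intro j k hjk
    by_contra hne
    rcases lt_or_gt_of_ne hne with h | h
    · exact hlt' j k h hjk
    · exact hlt' k j h hjk.symm
  refine ⟨K, S, b, R, φ', y, ?_, hdec3, hyj, hinj, fun j => ?_, fun hK => ?_⟩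
  · by_contra hK
    have hK0 : K = 0 := by omega
    subst hK0
    have := hdec3.2.2.2.2.2.2.2.2.1
    simp at this
    linarith
  · have h1 : Tendsto (fun n => R / ℓ (φ' n)) atTop (𝓝 0) := hlt.const_div_atTop R
    have h2 : Tendsto (fun n => (ℓ (φ' n))⁻¹ • b n j - w (χ n) j) atTop (𝓝 0) :=
      squeeze_zero_norm (fun n => hw (χ n) j) h1
    have h3 := (hyj j).sub h2
    rw [sub_zero] at h3
    refine mem_closure_of_tendsto h3 (Eventually.of_forall fun n => ?_)
    rw [sub_sub_cancel]
    exact hwA _ _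
  · obtain ⟨ε, he, hbd⟩ := hrep hK
    refine ⟨fun n => pairSum (fun j k => (vol (S j) * vol (S k) + ε n) / (‖b n j - b n k‖ / ℓ (φ' n)))
      - pairSum (fun j k => vol (S j) * vol (S k) / ‖y j - y k‖), ?_, fun n => ?_⟩
    · have := (pairSum_tendsto
        (f := fun n j k => (vol (S j) * vol (S k) + ε n) / (‖b n j - b n k‖ / ℓ (φ' n)))
        (g := fun j k => vol (S j) * vol (S k) / ‖y j - y k‖) (fun j k hjk => by
          have h1 := (he.const_add (vol (S j) * vol (S k))).div (hzt j k)
            (norm_ne_zero_iff.2 (sub_ne_zero.2 (hlt' j k hjk)))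
          rw [add_zero] at h1
          exact h1)).sub_const (pairSum (fun j k => vol (S j) * vol (S k) / ‖y j - y k‖))
      rwa [sub_self] at this
    · have h1 := hbd n
      have h2 : pairSum (fun j k => (vol (S j) * vol (S k) + ε n) / (‖b n j - b n k‖ / ℓ (φ' n)))
          = ℓ (φ' n) * pairSum (fun j k => (vol (S j) * vol (S k) + ε n) / ‖b n j - b n k‖) := by
        rw [← pairSum_mul]
        congr 1
        funext j k
        rw [div_div_eq_mul_div]
        ring
      change muStar * vol (Ω (φ' n)) + (1 / ℓ (φ' n)) *
        pairSum (fun j k => vol (S j) * vol (S k) / ‖y j - y k‖) + _ / ℓ (φ' n) ≤ II (Ω (φ' n))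
      simp only
      rw [h2]
      unfold EX at h1
      have hl := (hl0 n).ne'
      have h3 : (1 / ℓ (φ' n)) * pairSum (fun j k => vol (S j) * vol (S k) / ‖y j - y k‖) +
        (ℓ (φ' n) * pairSum (fun j k => (vol (S j) * vol (S k) + ε n) / ‖b n j - b n k‖)
          - pairSum (fun j k => vol (S j) * vol (S k) / ‖y j - y k‖)) / ℓ (φ' n) =
          pairSum (fun j k => (vol (S j) * vol (S k) + ε n) / ‖b n j - b n k‖) := by
        field_simp
        ring
      linarith

/-- **Decomposition with rescaled centers** (Corollary): if moreover `Ωₙ ⊆ ℓₙ A` for a bounded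
open set `A` and `I[Ωₙ] ≤ μ*|Ωₙ| + C/ℓₙ`, then the rescaled centers converge to `K` distinct
points of the closure of `A`, and for `K ≥ 2` the repulsion lower bound holds with the limiting
positions. -/
theorem decomposition_rescaled_centers (A : Set E3) (hAo : IsOpen A) (hAb : IsBounded A)
    (Ω : ℕ → Set E3) (hmeas : ∀ n, MeasurableSet (Ω n)) (hper : ∀ n, HasFinPer (Ω n))
    (hfin : ∀ n, volume (Ω n) < ⊤)
    (ℓ : ℕ → ℝ) (hℓ : Tendsto ℓ atTop atTop) (hsub : ∀ n, Ω n ⊆ ℓ n • A)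
    (m : ℝ) (hm : 0 < m) (hvol : Tendsto (fun n => vol (Ω n)) atTop (𝓝 m))
    (C : ℝ) (hI : ∀ n, II (Ω n) ≤ muStar * vol (Ω n) + C / ℓ n) :
    ∃ (K : ℕ) (Ωs : Fin K → Set E3) (a : ℕ → Fin K → E3) (R : ℝ) (φ : ℕ → ℕ)
      (y : Fin K → E3),
      1 ≤ K ∧ IsDecomp Ω m K Ωs a R φ ∧
      (∀ j, Tendsto (fun n => (ℓ (φ n))⁻¹ • a n j) atTop (𝓝 (y j))) ∧
      Function.Injective y ∧ (∀ j, y j ∈ closure A) ∧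
      (2 ≤ K → ∃ ε : ℕ → ℝ, Tendsto ε atTop (𝓝 0) ∧ ∀ n : ℕ,
        muStar * vol (Ω (φ n)) + (1 / ℓ (φ n)) *
            (∑ j : Fin K, ∑ k : Fin K,
              if j < k then vol (Ωs j) * vol (Ωs k) / ‖y j - y k‖ else 0)
          + ε n / ℓ (φ n) ≤ II (Ω (φ n))) := by
  exact main_thm A hAb Ω hmeas hper hfin ℓ hℓ hsub m hm hvol C hI

end
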